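/- arXiv:2407.01269 — 3 statements merged into one kernel-verified Lean document; each statement's English description precedes it below -/
import Mathlib

section
/- For x, y ∈ ℝ with xy ≠ 0, the (conditionally convergent, principal value) integral ∫_{−∞}^{+∞} e^{2πitx}/(2πit + y) dt equals 0 if xy < 0, and equals sign(y)·e^{−xy} if xy > 0. -/
open Filter Topology MeasureTheory Set

noncomputable def pvG (y R x : ℝ) : ℂ :=
  ∫ t in (-R)..R, Complex.exp ((2 * Real.pi * Complex.I * t + y) * x) /
    (2 * Real.pi * Complex.I * t + y)

noncomputable def pvD (R x : ℝ) : ℂ :=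
  ∫ t in (-R)..R, Complex.exp ((2 * Real.pi * Complex.I * x) * t)

lemma pv_ne {y : ℝ} (hy : 0 < y) (t : ℝ) : (2 * Real.pi * Complex.I * t + y : ℂ) ≠ 0 := by
  intro h
  have := congrArg Complex.re h
  simp at this
  exact hy.ne' this

lemma pv_tpi : (2 * Real.pi * Complex.I : ℂ) ≠ 0 := by
  simp [Real.pi_ne_zero]

lemma pvD_eq (R : ℝ) {x : ℝ} (hx : x ≠ 0) :
    pvD R x = (Complex.exp (2 * Real.pi * Complex.I * x * R) -
      Complex.exp (-(2 * Real.pi * Complex.I * x * R))) / (2 * Real.pi * Complex.I * x) := by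
  unfold pvD
  rw [integral_exp_mul_complex (mul_ne_zero pv_tpi (by exact_mod_cast hx))]
  push_cast
  rw [mul_neg]

lemma pvD_cont (R : ℝ) : Continuous (pvD R) := by
  unfold pvD
  apply intervalIntegral.continuous_parametric_intervalIntegral_of_continuous'
  unfold Function.uncurry
  fun_prop

lemma pv_norm_exp (y t s : ℝ) :
    ‖Complex.exp ((2 * Real.pi * Complex.I * t + y) * s)‖ = Real.exp (y * s) := by
  rw [Complex.norm_exp]
  simp

lemma pvG_deriv {y : ℝ} (hy : 0 < y) (R x : ℝ) :
    HasDerivAt (pvG y R) (Complex.exp (y * x) * pvD R x) x := by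
  have hc : ∀ x : ℝ, Continuous fun t : ℝ =>
      Complex.exp ((2 * Real.pi * Complex.I * t + y) * x) / (2 * Real.pi * Complex.I * t + y) := by
    intro x
    exact Continuous.div (by fun_prop) (by fun_prop) (pv_ne hy)
  have hc' : Continuous fun t : ℝ =>
      Complex.exp ((2 * Real.pi * Complex.I * t + y) * x) := by fun_prop
  have h := (intervalIntegral.hasDerivAt_integral_of_dominated_loc_of_deriv_le
    (μ := volume) (a := -R) (b := R) (x₀ := x) (s := Iio (x + 1))
    (F := fun (x : ℝ) (t : ℝ) => Complex.exp ((2 * Real.pi * Complex.I * t + y) * x) /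
      (2 * Real.pi * Complex.I * t + y))
    (F' := fun (x : ℝ) (t : ℝ) => Complex.exp ((2 * Real.pi * Complex.I * t + y) * x))
    (bound := fun _ => Real.exp (y * (x + 1)))
    (Iio_mem_nhds (by linarith))
    (Eventually.of_forall fun z => (hc z).aestronglyMeasurable)
    ((hc x).intervalIntegrable _ _) hc'.aestronglyMeasurable
    (Eventually.of_forall fun t _ z hz => by
      rw [pv_norm_exp]
      exact Real.exp_le_exp.2 (mul_le_mul_of_nonneg_left (le_of_lt hz) hy.le))
    (by simp)
    (Eventually.of_forall fun t _ z hz => by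
      have h1 : HasDerivAt (fun x : ℝ => (2 * Real.pi * Complex.I * t + y : ℂ) * x)
          ((2 * Real.pi * Complex.I * t + y : ℂ) * 1) z :=
        (Complex.ofRealCLM.hasDerivAt (x := z)).const_mul _
      have h2 := h1.cexp.div_const (2 * Real.pi * Complex.I * t + y : ℂ)
      refine h2.congr_deriv ?_
      rw [mul_one, mul_div_assoc, div_self (pv_ne hy t), mul_one])).2
  refine h.congr_deriv (Eq.symm ?_)
  unfold pvD
  rw [← intervalIntegral.integral_const_mul]
  congr 1
  ext t
  rw [← Complex.exp_add]
  congr 1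
  ring

lemma pv_RL (g : ℝ → ℂ) (hg : Integrable g) :
    Tendsto (fun R : ℝ => ∫ s, g s * (Complex.exp (2 * Real.pi * Complex.I * s * R) -
      Complex.exp (-(2 * Real.pi * Complex.I * s * R)))) atTop (𝓝 0) := by
  have h := Real.tendsto_integral_exp_smul_cocompact g
  have h1 := h.comp (tendsto_id.mono_right atTop_le_cocompact)
  have h2 := h.comp (tendsto_neg_atTop_atBot.mono_right atBot_le_cocompact)
  have h3 := h2.sub h1
  rw [sub_zero] at h3
  refine h3.congr fun R => ?_
  have hi : ∀ w : ℝ, Integrable (fun v => Real.fourierChar (-(v * w)) • g v) := fun w => by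
    refine hg.mono ?_ ?_
    · refine AEStronglyMeasurable.smul ?_ hg.1
      exact Continuous.aestronglyMeasurable (by fun_prop)
    · exact Eventually.of_forall fun v => by simp [Circle.norm_smul]
  simp only [Function.comp, id]
  rw [← integral_sub (hi _) (hi _)]
  congr 1
  ext s
  rw [Circle.smul_def, Circle.smul_def, Real.fourierChar_apply, Real.fourierChar_apply]
  simp only [smul_eq_mul]
  rw [← sub_mul, mul_comm]
  congr 3 <;> push_cast <;> ring_nf

lemma pv_neg {y x : ℝ} (hy : 0 < y) (hx : x < 0) :
    Tendsto (fun R => pvG y R x) atTop (𝓝 0) := by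
  set g : ℝ → ℂ := fun s => Complex.exp (y * s) / (2 * Real.pi * Complex.I * s) with hg
  have hgi : IntegrableOn g (Iic x) := by
    have h1 := integrableOn_exp_mul_complex_Iic (a := y) (by simpa using hy) x
    have h2 : IntegrableOn (fun s : ℝ => (2 * Real.pi * Complex.I * s : ℂ)⁻¹ *
        Complex.exp (y * s)) (Iic x) := by
      refine Integrable.bdd_mul (c := (2 * Real.pi * (-x))⁻¹) h1 ?_ ?_
      · exact Measurable.aestronglyMeasurable (by fun_prop)
      · refine (ae_restrict_iff' measurableSet_Iic).2 (Eventually.of_forall fun s hs => ?_)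
        have hs' : s ≤ x := hs
        rw [norm_inv]
        have : ‖(2 * Real.pi * Complex.I * s : ℂ)‖ = 2 * Real.pi * (-s) := by
          simp [abs_of_pos Real.pi_pos, abs_of_neg (lt_of_le_of_lt hs' hx)]
        rw [this]
        have := Real.pi_pos
        have hx' : 0 < -x := by linarith
        gcongr
    refine h2.congr_fun (fun s _ => ?_) measurableSet_Iic
    simp only [hg]
    rw [div_eq_inv_mul]
  have hRL := pv_RL _ ((integrable_indicator_iff measurableSet_Iic).2 hgi)
  refine hRL.congr' ?_
  filter_upwards [eventually_ge_atTop 0] with R hR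
  have e1 : (fun s => (Iic x).indicator g s * (Complex.exp (2 * Real.pi * Complex.I * s * R) -
      Complex.exp (-(2 * Real.pi * Complex.I * s * R)))) =
      (Iic x).indicator (fun s : ℝ => Complex.exp (y * s) * pvD R s) := by
    ext s
    by_cases hs : s ∈ Iic x
    · rw [indicator_of_mem hs, indicator_of_mem hs,
        pvD_eq R (lt_of_le_of_lt hs hx).ne]
      simp only [hg]
      ring
    · rw [indicator_of_notMem hs, indicator_of_notMem hs, zero_mul]
  rw [e1, integral_indicator measurableSet_Iic,
    integral_Iic_of_hasDerivAt_of_tendsto' (f := pvG y R) (m := 0), sub_zero]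
  · intro z _
    exact pvG_deriv hy R z
  · have h1 := integrableOn_exp_mul_complex_Iic (a := y) (by simpa using hy) x
    refine (Integrable.bdd_mul (c := 2 * R) h1 (pvD_cont R).aestronglyMeasurable
      (Eventually.of_forall fun s => ?_)).congr (Eventually.of_forall fun s => mul_comm _ _)
    unfold pvD
    refine (intervalIntegral.norm_integral_le_of_norm_le_const (C := 1) fun t _ => ?_).trans ?_
    · rw [Complex.norm_exp]; simp
    · rw [abs_of_nonneg (by linarith)]; linarith
  · have hb : ∀ s : ℝ, ‖pvG y R s‖ ≤ Real.exp (y * s) / y * (2 * R) := by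
      intro s
      unfold pvG
      refine (intervalIntegral.norm_integral_le_of_norm_le_const
        (C := Real.exp (y * s) / y) fun t _ => ?_).trans ?_
      · rw [norm_div, pv_norm_exp]
        gcongr
        have := Complex.re_le_norm (2 * Real.pi * Complex.I * t + y)
        simpa using this
      · rw [abs_of_nonneg (by linarith)]
        apply le_of_eq; ring
    refine squeeze_zero_norm hb ?_
    have h0 : Tendsto (fun s : ℝ => Real.exp (y * s)) atBot (𝓝 0) :=
      Real.tendsto_exp_atBot.comp (tendsto_id.const_mul_atBot hy)
    simpa using (h0.div_const y).mul_const (2 * R)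

lemma pv_zero {y : ℝ} (hy : 0 < y) : Tendsto (fun R => pvG y R 0) atTop (𝓝 (1 / 2)) := by
  have key : ∀ R : ℝ, pvG y R 0 = (Complex.arg (2 * Real.pi * Complex.I * R + y) / Real.pi : ℝ) := by
    intro R
    unfold pvG
    have hsl : ∀ t : ℝ, (2 * Real.pi * Complex.I * t + y : ℂ) ∈ Complex.slitPlane := by
      intro t; left; simpa using hy
    have hd : ∀ t : ℝ, HasDerivAt (fun t : ℝ =>
        Complex.log (2 * Real.pi * Complex.I * t + y) / (2 * Real.pi * Complex.I))
        (Complex.exp ((2 * Real.pi * Complex.I * t + y) * (0 : ℝ)) /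
          (2 * Real.pi * Complex.I * t + y)) t := by
      intro t
      have h1 : HasDerivAt (fun x : ℝ => (2 * Real.pi * Complex.I * x + y : ℂ))
          ((2 * Real.pi * Complex.I : ℂ) * 1) t :=
        ((Complex.ofRealCLM.hasDerivAt (x := t)).const_mul _).add_const _
      refine ((h1.clog_real (hsl t)).div_const (2 * Real.pi * Complex.I)).congr_deriv (Eq.symm ?_)
      have := pv_tpi
      have := pv_ne hy t
      simp only [Complex.ofReal_zero, mul_zero, Complex.exp_zero, mul_one]
      rw [div_right_comm, div_self pv_tpi]
    rw [intervalIntegral.integral_eq_sub_of_hasDerivAt (fun t _ => hd t)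
      ((Continuous.div (by fun_prop) (by fun_prop) (pv_ne hy)).intervalIntegrable _ _)]
    have hconj : (2 * Real.pi * Complex.I * ((-R : ℝ) : ℂ) + y : ℂ) =
        (starRingEnd ℂ) (2 * Real.pi * Complex.I * R + y) := by
      simp [map_ofNat]
    rw [hconj, Complex.log_conj _ (Complex.slitPlane_arg_ne_pi (hsl R)), ← sub_div, Complex.sub_conj,
      Complex.log_im]
    have : (Real.pi : ℂ) ≠ 0 := by exact_mod_cast Real.pi_ne_zero
    push_cast
    field_simp [Complex.I_ne_zero]
  have h1 : Tendsto (fun R : ℝ => (2 * Real.pi * Complex.I + ((y / R : ℝ) : ℂ))) atTop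
      (𝓝 (2 * Real.pi * Complex.I + ((0 : ℝ) : ℂ))) := by
    refine tendsto_const_nhds.add ?_
    exact (Complex.continuous_ofReal.tendsto 0).comp (tendsto_const_nhds.div_atTop tendsto_id)
  rw [Complex.ofReal_zero, add_zero] at h1
  have h2 := (Complex.continuousAt_arg (x := 2 * Real.pi * Complex.I)
    (by right; simp [Real.pi_ne_zero])).tendsto.comp h1
  have h3 : Complex.arg (2 * Real.pi * Complex.I) = Real.pi / 2 := by
    have := Complex.arg_real_mul Complex.I (r := 2 * Real.pi) (by positivity)
    push_cast at this
    rw [this, Complex.arg_I]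
  rw [h3] at h2
  have h4 := (Complex.continuous_ofReal.tendsto _).comp (h2.div_const Real.pi)
  have h5 : ((Real.pi / 2 / Real.pi : ℝ) : ℂ) = 1 / 2 := by
    rw [div_right_comm, div_self Real.pi_ne_zero]; norm_num
  rw [h5] at h4
  refine h4.congr' ?_
  filter_upwards [eventually_gt_atTop 0] with R hR
  rw [key]
  simp only [Function.comp]
  congr 2
  rw [← Complex.arg_real_mul _ hR]
  congr 1
  have : (R : ℂ) ≠ 0 := by exact_mod_cast hR.ne'
  push_cast
  field_simp

lemma pv_pos {y x : ℝ} (hy : 0 < y) (hx : 0 < x) :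
    Tendsto (fun R => pvG y R x) atTop (𝓝 1) := by
  set f : ℝ → ℂ := fun s => Complex.exp (y * s) - Complex.exp (-(y * s)) with hf
  have hfd : Differentiable ℝ f := by
    intro s
    have h1 : HasDerivAt (fun x : ℝ => (y : ℂ) * x) ((y : ℂ) * 1) s :=
      (Complex.ofRealCLM.hasDerivAt (x := s)).const_mul _
    exact (h1.cexp.sub h1.neg.cexp).differentiableAt
  have hdc : Continuous (dslope f 0) := by
    rw [← continuousOn_univ, continuousOn_dslope univ_mem]
    exact ⟨hfd.continuous.continuousOn, hfd 0⟩
  set g : ℝ → ℂ := fun s => dslope f 0 s / (2 * Real.pi * Complex.I) with hg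
  have hgc : Continuous g := hdc.div_const _
  have hgi : IntegrableOn g (Ioc 0 x) :=
    (hgc.integrableOn_Icc).mono_set Ioc_subset_Icc_self
  have hRL := pv_RL _ ((integrable_indicator_iff measurableSet_Ioc).2 hgi)
  have hRL2 : Tendsto (fun R => pvG y R x + pvG y R (-x) - 2 * pvG y R 0) atTop (𝓝 0) := by
    refine hRL.congr fun R => ?_
    have e1 : (fun s => (Ioc 0 x).indicator g s *
        (Complex.exp (2 * Real.pi * Complex.I * s * R) -
        Complex.exp (-(2 * Real.pi * Complex.I * s * R)))) =
        (Ioc 0 x).indicator (fun s : ℝ => Complex.exp (y * s) * pvD R s -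
          Complex.exp (y * (-s : ℝ)) * pvD R (-s)) := by
      ext s
      by_cases hs : s ∈ Ioc 0 x
      · have hs0 : s ≠ 0 := hs.1.ne'
        rw [indicator_of_mem hs, indicator_of_mem hs, pvD_eq R hs0, pvD_eq R (neg_ne_zero.2 hs0)]
        simp only [hg, hf]
        rw [dslope_of_ne _ hs0, slope_def_module]
        have : (s : ℂ) ≠ 0 := by exact_mod_cast hs0
        have : (Real.pi : ℂ) ≠ 0 := by exact_mod_cast Real.pi_ne_zero
        simp only [Complex.ofReal_zero, mul_zero, neg_zero, sub_self, sub_zero, Complex.real_smul,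
          Complex.ofReal_inv, Complex.ofReal_neg, mul_neg, neg_mul, neg_neg]
        field_simp [Complex.I_ne_zero]
        ring
      · rw [indicator_of_notMem hs, indicator_of_notMem hs, zero_mul]
    rw [e1, integral_indicator measurableSet_Ioc, ← intervalIntegral.integral_of_le hx.le,
      intervalIntegral.integral_eq_sub_of_hasDerivAt
        (f := fun s => pvG y R s + pvG y R (-s))]
    · simp only [neg_zero]; ring
    · intro s _
      have h1 := pvG_deriv hy R s
      have h2 := (pvG_deriv hy R (-s)).scomp s (hasDerivAt_neg s)
      refine (h1.add h2).congr_deriv (Eq.symm ?_)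
      simp [sub_eq_add_neg]
    · apply Continuous.intervalIntegrable
      have := pvD_cont R
      fun_prop
  have h3 := (hRL2.sub (pv_neg hy (neg_neg_of_pos hx))).add ((pv_zero hy).const_mul 2)
  norm_num at h3
  refine h3.congr fun R => ?_
  ring

noncomputable def pvF (x y R : ℝ) : ℂ := ∫ t in (-R)..R,
        Complex.exp (2 * Real.pi * Complex.I * t * x) /
          (2 * Real.pi * Complex.I * t + y)

lemma pvF_eq (x y R : ℝ) : pvF x y R = Complex.exp (-(x * y)) * pvG y R x := by
  unfold pvF pvG
  rw [← intervalIntegral.integral_const_mul]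
  congr 1
  ext t
  rw [← mul_div_assoc, ← Complex.exp_add]
  congr 2
  ring

lemma pvF_neg (x y R : ℝ) : pvF (-x) (-y) R = - pvF x y R := by
  unfold pvF
  have := intervalIntegral.integral_comp_neg (a := -R) (b := R) (fun t : ℝ =>
        Complex.exp (2 * Real.pi * Complex.I * t * x) /
          (2 * Real.pi * Complex.I * t + y))
  rw [neg_neg] at this
  rw [← this, ← intervalIntegral.integral_neg]
  congr 1
  ext t
  push_cast
  rw [← div_neg]
  congr 2 <;> ring

lemma pvF_tendsto {x y : ℝ} (hy : 0 < y) (hx : x ≠ 0) :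
    Tendsto (pvF x y) atTop (𝓝 (if x * y < 0 then 0 else Complex.exp (-(x * y)))) := by
  have e : pvF x y = fun R => Complex.exp (-(x * y)) * pvG y R x := by
    ext R; exact pvF_eq x y R
  rw [e]
  rcases lt_or_gt_of_ne hx with h | h
  · rw [if_pos (mul_neg_of_neg_of_pos h hy)]
    simpa using (pv_neg hy h).const_mul (Complex.exp (-(x * y)))
  · rw [if_neg (not_lt.2 (mul_pos h hy).le)]
    simpa using (pv_pos hy h).const_mul (Complex.exp (-(x * y)))

/-- for `x, y ∈ ℝ` with `xy ≠ 0`, the principal value integral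
`∫_{-∞}^{∞} e^{2πitx}/(2πit + y) dt` (i.e. the limit of `∫_{-R}^{R}` as `R → ∞`)
equals `0` if `xy < 0` and `sign(y) e^{-xy}` if `xy > 0`. -/
theorem principal_value_exp_over_linear
    (x y : ℝ) (hxy : x * y ≠ 0) :
    Filter.Tendsto
      (fun R : ℝ => ∫ t in (-R)..R,
        Complex.exp (2 * Real.pi * Complex.I * t * x) /
          (2 * Real.pi * Complex.I * t + y))
      Filter.atTop
      (nhds (if x * y < 0 then 0
        else (Real.sign y : ℂ) * Real.exp (-(x * y)))) := by
  change Tendsto (pvF x y) atTop _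
  have hx : x ≠ 0 := left_ne_zero_of_mul hxy
  have hy : y ≠ 0 := right_ne_zero_of_mul hxy
  rcases lt_or_gt_of_ne hy with h | h
  · have h1 := (pvF_tendsto (x := -x) (y := -y) (by linarith) (neg_ne_zero.2 hx)).neg
    have e : (fun R => -pvF (-x) (-y) R) = pvF x y := by
      ext R; rw [pvF_neg, neg_neg]
    rw [e] at h1
    convert h1 using 2
    rw [neg_mul_neg, Real.sign_of_neg h]
    split_ifs <;> simp
  · convert pvF_tendsto h hx using 2
    rw [Real.sign_of_pos h]
    split_ifs <;> simp
end

section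
/- Let H : (ℝ_{≥0})^n → ℂ be a C^∞ function all of whose partial derivatives ∂^k H (k ∈ ℕ^n) have sufficient decay at infinity. Then the integral Λ(H, s) = (∏_{i=1}^n 1/Γ(s_i)) ∫_{(ℝ_{≥0})^n} H(y) ∏_{i=1}^n y_i^{s_i} dy_i/y_i converges absolutely for 0 < Re(s_i) < 1/n (all i) and the resulting holomorphic function of s = (s_1,…,s_n) extends analytically to the domain {s ∈ ℂ^n : Re(s_i) < 1/n for all i}. -/
open scoped BigOperators

/-- The closed positive quadrant `(ℝ_{≥0})^n`. -/
def Quadrant (n : ℕ) : Set (Fin n → ℝ) := {y | ∀ i, 0 ≤ y i}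

/-- `F` has *sufficient decay at infinity on `S`*: it is, on `S`, a finite sum of functions
`G_i` with `(1 + |L_i(y)|) G_i(y)` bounded on `S`, `L_i` a linear form with all coefficients
nonzero. -/
def SufficientDecayOn (n : ℕ) (S : Set (Fin n → ℝ)) (F : (Fin n → ℝ) → ℂ) : Prop :=
  ∃ (r : ℕ) (G : Fin r → (Fin n → ℝ) → ℂ) (L : Fin r → Fin n → ℝ),
    (∀ i j, L i j ≠ 0) ∧
    (∀ i, ∃ C : ℝ, ∀ y ∈ S, (1 + |∑ j, L i j * y j|) * ‖G i y‖ ≤ C) ∧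
    (∀ y ∈ S, F y = ∑ i, G i y)

/-- The signed partial derivative `-∂/∂y_i`. -/
noncomputable def pderivNeg (n : ℕ) (i : Fin n) (H : (Fin n → ℝ) → ℂ) :
    (Fin n → ℝ) → ℂ :=
  fun y => -(fderiv ℝ H y (Pi.single i 1))

/-- Iterated signed partial derivatives along a list of directions. -/
noncomputable def pderivList (n : ℕ) : List (Fin n) → ((Fin n → ℝ) → ℂ) → (Fin n → ℝ) → ℂ
  | [], H => H
  | (i :: l), H => pderivNeg n i (pderivList n l H)


noncomputable def ellForm {n : ℕ} (v : Fin n → ℝ) : (Fin n → ℂ) →L[ℂ] ℂ :=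
  ∑ i, (v i : ℂ) • ContinuousLinearMap.proj (R := ℂ) (φ := fun _ : Fin n => ℂ) i

lemma ellForm_apply {n : ℕ} (v : Fin n → ℝ) (s : Fin n → ℂ) :
    ellForm v s = ∑ i, s i * (v i : ℂ) := by
  simp [ellForm, mul_comm]

lemma ellForm_norm {n : ℕ} (v : Fin n → ℝ) : ‖ellForm v‖ ≤ ∑ i, |v i| := by
  refine ContinuousLinearMap.opNorm_le_bound _ (Finset.sum_nonneg fun i _ => abs_nonneg _) ?_
  intro s
  rw [ellForm_apply, Finset.sum_mul]
  refine (norm_sum_le _ _).trans (Finset.sum_le_sum fun i _ => ?_)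
  rw [norm_mul, Complex.norm_real, Real.norm_eq_abs, mul_comm]
  exact mul_le_mul_of_nonneg_left (norm_le_pi_norm s i) (abs_nonneg _)

lemma ellForm_continuous {n : ℕ} : Continuous (fun v : Fin n → ℝ => ellForm v) := by
  unfold ellForm
  fun_prop

noncomputable def expTerm {n : ℕ} (m : ℕ) (v : Fin n → ℝ) :
    ContinuousMultilinearMap ℂ (fun _ : Fin m => (Fin n → ℂ)) ℂ :=
  (NormedSpace.expSeries ℂ ℂ m).compContinuousLinearMap (fun _ => ellForm v)

lemma expTerm_continuous {n : ℕ} (m : ℕ) : Continuous (fun v : Fin n → ℝ => expTerm m v) := by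
  have h := (ContinuousMultilinearMap.compContinuousLinearMapContinuousMultilinear ℂ
    (fun _ : Fin m => (Fin n → ℂ)) (fun _ : Fin m => ℂ) ℂ).cont
  have h2 := h.comp (continuous_pi (fun _ : Fin m => ellForm_continuous (n := n)))
  exact (ContinuousLinearMap.apply ℂ _ (NormedSpace.expSeries ℂ ℂ m)).continuous.comp h2

lemma expTerm_apply {n : ℕ} (m : ℕ) (v : Fin n → ℝ) (s : Fin n → ℂ) :
    expTerm m v (fun _ => s) = (∑ i, s i * (v i : ℂ)) ^ m / m.factorial := by
  rw [expTerm, ContinuousMultilinearMap.compContinuousLinearMap_apply]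
  simp only [ellForm_apply]
  rw [NormedSpace.expSeries_apply_eq, smul_eq_mul]
  ring

lemma expTerm_norm {n : ℕ} (m : ℕ) (v : Fin n → ℝ) :
    ‖expTerm m v‖ ≤ (∑ i, |v i|) ^ m / m.factorial := by
  refine (ContinuousMultilinearMap.norm_compContinuousLinearMap_le _ _).trans ?_
  have h1 : ‖NormedSpace.expSeries ℂ ℂ m‖ ≤ 1 / m.factorial := by
    unfold NormedSpace.expSeries
    rw [norm_smul]
    simp
  rw [Finset.prod_const, Finset.card_univ, Fintype.card_fin]
  calc _ ≤ (1 / (m.factorial:ℝ)) * (∑ i, |v i|) ^ m := by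
        gcongr
        exact ellForm_norm v
    _ = _ := by ring

lemma analyticAt_integral_exp {α : Type*} [MeasurableSpace α] {μ : MeasureTheory.Measure α}
    {n : ℕ} (v : α → Fin n → ℝ) (hv : Measurable v) (g : α → ℂ)
    (hg : MeasureTheory.AEStronglyMeasurable g μ) (r : ℝ) (hr : 0 < r)
    (hint : MeasureTheory.Integrable (fun y => Real.exp (r * ∑ i, |v y i|) * ‖g y‖) μ) :
    AnalyticAt ℂ (fun s : Fin n → ℂ => ∫ y, g y * Complex.exp (∑ i, s i * (v y i : ℂ)) ∂μ) 0 := by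
  set B : ℝ := ∫ y, Real.exp (r * ∑ i, |v y i|) * ‖g y‖ ∂μ with hB
  let p : FormalMultilinearSeries ℂ (Fin n → ℂ) ℂ := fun m => ∫ y, g y • expTerm m (v y) ∂μ
  -- pointwise bound
  have hpt : ∀ m y, ‖g y • expTerm m (v y)‖ * r ^ m ≤ Real.exp (r * ∑ i, |v y i|) * ‖g y‖ := by
    intro m y
    have h1 := expTerm_norm m (v y)
    have h0 : 0 ≤ ∑ i, |v y i| := Finset.sum_nonneg fun i _ => abs_nonneg _
    have h2 := Real.pow_div_factorial_le_exp (x := r * ∑ i, |v y i|) (by positivity) m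
    rw [norm_smul]
    calc ‖g y‖ * ‖expTerm m (v y)‖ * r ^ m ≤ ‖g y‖ * ((∑ i, |v y i|) ^ m / m.factorial) * r ^ m := by
          gcongr
      _ = ‖g y‖ * ((r * ∑ i, |v y i|) ^ m / m.factorial) := by rw [mul_pow]; ring
      _ ≤ ‖g y‖ * Real.exp (r * ∑ i, |v y i|) := by gcongr
      _ = _ := by ring
  have hmeas : ∀ m, MeasureTheory.AEStronglyMeasurable (fun y => g y • expTerm m (v y)) μ := by
    intro m
    refine hg.smul ?_
    exact ((expTerm_continuous m).stronglyMeasurable.comp_measurable hv).aestronglyMeasurable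
  have hI : ∀ m, MeasureTheory.Integrable (fun y => g y • expTerm m (v y)) μ := by
    intro m
    refine (hint.const_mul ((r ^ m)⁻¹)).mono' (hmeas m) (Filter.Eventually.of_forall fun y => ?_)
    have := hpt m y
    rw [← div_eq_inv_mul, le_div_iff₀ (by positivity)]
    exact this
  refine HasFPowerSeriesAt.analyticAt (p := p) ⟨ENNReal.ofReal r, ?_⟩
  refine ⟨?_, by simpa using hr, ?_⟩
  · have := p.le_radius_of_bound (r := r.toNNReal) B ?_
    · exact this
    · intro m
      rw [Real.coe_toNNReal _ hr.le]
      calc ‖p m‖ * r ^ m ≤ (∫ y, ‖g y • expTerm m (v y)‖ ∂μ) * r ^ m := by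
            gcongr
            exact MeasureTheory.norm_integral_le_integral_norm _
        _ = ∫ y, ‖g y • expTerm m (v y)‖ * r ^ m ∂μ := by rw [MeasureTheory.integral_mul_const]
        _ ≤ B := by
            refine MeasureTheory.integral_mono ((hI m).norm.mul_const _) hint (hpt m)
  · intro s hs
    rw [zero_add]
    have hs' : ‖s‖ < r := by
      have := hs
      rw [Metric.mem_eball, edist_zero_right, ← ofReal_norm,
        ENNReal.ofReal_lt_ofReal_iff hr] at this
      exact this
    have happ : ∀ m, p m (fun _ => s) = ∫ y, g y * ((∑ i, s i * (v y i : ℂ)) ^ m / m.factorial) ∂μ := by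
      intro m
      have := (ContinuousLinearMap.integral_comp_comm
        (ContinuousMultilinearMap.apply ℂ (fun _ : Fin m => (Fin n → ℂ)) ℂ (fun _ => s)) (hI m))
      simp only [ContinuousMultilinearMap.apply_apply, _root_.smul_apply,
        expTerm_apply, smul_eq_mul] at this
      exact this.symm
    simp_rw [happ]
    have hq : ∀ y, ‖∑ i, s i * (v y i : ℂ)‖ ≤ ‖s‖ * ∑ i, |v y i| := by
      intro y
      rw [← ellForm_apply, mul_comm]
      exact (ContinuousLinearMap.le_opNorm _ _).trans (by gcongr; exact ellForm_norm _)
    have hI2 : ∀ m, MeasureTheory.Integrable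
        (fun y => g y * ((∑ i, s i * (v y i : ℂ)) ^ m / m.factorial)) μ := by
      intro m
      have := (ContinuousMultilinearMap.apply ℂ (fun _ : Fin m => (Fin n → ℂ)) ℂ
        (fun _ => s)).integrable_comp (hI m)
      simpa only [ContinuousMultilinearMap.apply_apply, _root_.smul_apply,
        expTerm_apply, smul_eq_mul] using this
    have hpt2 : ∀ m y, ‖g y * ((∑ i, s i * (v y i : ℂ)) ^ m / m.factorial)‖ ≤
        (‖s‖ / r) ^ m * (Real.exp (r * ∑ i, |v y i|) * ‖g y‖) := by
      intro m y
      have h0 : 0 ≤ ∑ i, |v y i| := Finset.sum_nonneg fun i _ => abs_nonneg _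
      have h2 := Real.pow_div_factorial_le_exp (x := r * ∑ i, |v y i|) (by positivity) m
      rw [norm_mul, norm_div, norm_pow]
      simp only [Complex.norm_natCast]
      calc _ ≤ ‖g y‖ * ((‖s‖ * ∑ i, |v y i|) ^ m / m.factorial) := by gcongr; exact hq y
        _ = (‖s‖ / r) ^ m * (‖g y‖ * ((r * ∑ i, |v y i|) ^ m / m.factorial)) := by
            rw [mul_pow, mul_pow, div_pow]; field_simp
        _ ≤ (‖s‖ / r) ^ m * (‖g y‖ * Real.exp (r * ∑ i, |v y i|)) := by gcongr
        _ = _ := by ring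
    have hsum : Summable fun m => ∫ y, ‖g y * ((∑ i, s i * (v y i : ℂ)) ^ m / m.factorial)‖ ∂μ := by
      refine Summable.of_nonneg_of_le (f := fun m => (‖s‖ / r) ^ m * B)
        (fun m => MeasureTheory.integral_nonneg fun y => norm_nonneg _) ?_ ?_
      · intro m
        rw [hB, ← MeasureTheory.integral_const_mul]
        exact MeasureTheory.integral_mono (hI2 m).norm (hint.const_mul _) (hpt2 m)
      · exact (summable_geometric_of_lt_one (by positivity) (by rw [div_lt_one hr]; exact hs')).mul_right _
    have key := MeasureTheory.hasSum_integral_of_summable_integral_norm hI2 hsum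
    convert key using 2
    ext y
    rw [tsum_mul_left]
    congr 1
    rw [Complex.exp_eq_exp_ℂ, NormedSpace.exp_eq_tsum_div]
open MeasureTheory

lemma lintegral_affine (f : ℝ → ENNReal) (hf : Measurable f) (c M : ℝ) (hc : c ≠ 0) :
    ∫⁻ y, f (c * y + M) = ENNReal.ofReal |c⁻¹| * ∫⁻ u, f u := by
  have h1 : ∫⁻ y, f (c * y + M) = ∫⁻ u, f (u + M) ∂(Measure.map (fun y => c * y) volume) := by
    rw [lintegral_map (by fun_prop) (by fun_prop)]
  rw [h1, Real.map_volume_mul_left hc, lintegral_smul_measure, lintegral_add_right_eq_self f M]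
  rfl

lemma lint_rpow_Ioc {σ R : ℝ} (hσ : 0 < σ) (hR : 0 < R) :
    ∫⁻ y in Set.Ioc 0 R, ENNReal.ofReal (y ^ (σ - 1)) = ENNReal.ofReal (R ^ σ / σ) := by
  have hi : IntegrableOn (fun y : ℝ => y ^ (σ - 1)) (Set.Ioc 0 R) := by
    rw [← intervalIntegrable_iff_integrableOn_Ioc_of_le hR.le]
    exact intervalIntegral.intervalIntegrable_rpow' (by linarith)
  rw [← ofReal_integral_eq_lintegral_ofReal hi, ← intervalIntegral.integral_of_le hR.le,
    integral_rpow (Or.inl (by linarith))]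
  · simp [Real.zero_rpow hσ.ne']
  · refine (ae_restrict_mem measurableSet_Ioc).mono fun y hy => Real.rpow_nonneg hy.1.le _

lemma lint_rpow_Ioi {b R : ℝ} (hb : 0 < b) (hR : 0 < R) :
    ∫⁻ y in Set.Ioi R, ENNReal.ofReal (y ^ (-b - 1)) = ENNReal.ofReal (R ^ (-b) / b) := by
  have hi := integrableOn_Ioi_rpow_of_lt (a := -b - 1) (by linarith) hR
  rw [← ofReal_integral_eq_lintegral_ofReal hi, integral_Ioi_rpow_of_lt (by linarith) hR]
  · congr 1
    rw [show -b - 1 + 1 = -b by ring, neg_div_neg_eq]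
  · refine (ae_restrict_mem measurableSet_Ioi).mono fun y hy => Real.rpow_nonneg (hR.le.trans (le_of_lt hy)) _

lemma lint_abs {a R : ℝ} (ha0 : 0 < a) (ha : a < 1) (hR : 0 < R) :
    ∫⁻ u, (Set.Icc (-R) R).indicator (fun u => ENNReal.ofReal ((1 + |u|) ^ (-a))) u
      ≤ ENNReal.ofReal (2 * R ^ (1 - a) / (1 - a)) := by
  have hm : Measurable fun u : ℝ => ENNReal.ofReal ((1 + |u|) ^ (-a)) := by fun_prop
  rw [lintegral_indicator measurableSet_Icc]
  have hsub : Set.Icc (-R) R ⊆ (Set.Icc (-R) 0) ∪ (Set.Icc 0 R) := by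
    intro x hx
    rcases le_total x 0 with h | h
    · exact Or.inl ⟨hx.1, h⟩
    · exact Or.inr ⟨h, hx.2⟩
  have h1 : ∫⁻ u in Set.Icc 0 R, ENNReal.ofReal ((1 + |u|) ^ (-a)) ≤ ENNReal.ofReal (R ^ (1 - a) / (1 - a)) := by
    rw [← lint_rpow_Ioc (by linarith) hR, setLIntegral_congr Ioc_ae_eq_Icc.symm]
    refine setLIntegral_mono' measurableSet_Ioc fun y hy => ?_
    rw [abs_of_pos hy.1, show 1 - a - 1 = -a by ring]
    apply ENNReal.ofReal_le_ofReal
    exact Real.rpow_le_rpow_of_nonpos hy.1 (by linarith) (by linarith)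
  have h2 : ∫⁻ u in Set.Icc (-R) 0, ENNReal.ofReal ((1 + |u|) ^ (-a)) = ∫⁻ u in Set.Icc 0 R, ENNReal.ofReal ((1 + |u|) ^ (-a)) := by
    rw [← lintegral_indicator measurableSet_Icc, ← lintegral_indicator measurableSet_Icc,
      ← lintegral_neg_eq_self]
    congr 1
    ext u
    simp only [Set.indicator_apply, Set.mem_Icc, abs_neg]
    congr 1
    apply propext
    constructor <;> rintro ⟨h, h'⟩ <;> constructor <;> linarith
  calc _ ≤ ∫⁻ u in (Set.Icc (-R) 0) ∪ (Set.Icc 0 R), ENNReal.ofReal ((1 + |u|) ^ (-a)) :=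
        lintegral_mono_set hsub
    _ ≤ _ := lintegral_union_le _ _ _
    _ ≤ ENNReal.ofReal (R ^ (1 - a) / (1 - a)) + ENNReal.ofReal (R ^ (1 - a) / (1 - a)) := by
      rw [h2]; gcongr
    _ = ENNReal.ofReal (2 * R ^ (1 - a) / (1 - a)) := by
      have : 0 ≤ R ^ (1 - a) / (1 - a) := div_nonneg (Real.rpow_nonneg hR.le _) (by linarith)
      rw [← ENNReal.ofReal_add this this]
      congr 1; ring

lemma pointwise_oneD {c σ a : ℝ} (hc : c ≠ 0) (hσ : 0 < σ) (hσa : σ < a) (ha : a < 1) :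
    ∃ K : ℝ, 0 ≤ K ∧ ∀ M y : ℝ, 0 < y →
      ENNReal.ofReal (y ^ (σ - 1) * (1 + |c * y + M|) ^ (-a)) ≤ ENNReal.ofReal K *
       (ENNReal.ofReal ((1 + |M|) ^ (-a)) * (Set.Ioc 0 (1 + |M|)).indicator (fun y => ENNReal.ofReal (y ^ (σ - 1))) y
        + (Set.Ioi (1 + |M|)).indicator (fun y => ENNReal.ofReal (y ^ (-(a - σ) - 1))) y
        + ENNReal.ofReal ((1 + |M|) ^ (σ - 1)) *
          (Set.Icc (-(1 + |M|)) (1 + |M|)).indicator (fun u => ENNReal.ofReal ((1 + |u|) ^ (-a))) (c * y + M)) := by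
  have hc' : 0 < |c| := abs_pos.mpr hc
  set K1 : ℝ := (1 / 2 : ℝ) ^ (-a) with hK1
  set K2 : ℝ := (|c| / 3) ^ (-a) with hK2
  set K3 : ℝ := (1 / (2 * |c|)) ^ (σ - 1) with hK3
  have hK1p : 0 < K1 := by positivity
  have hK2p : 0 < K2 := by positivity
  have hK3p : 0 < K3 := by positivity
  refine ⟨K1 + K2 + K3, by positivity, ?_⟩
  intro M y hy
  set R := 1 + |M| with hR
  have hRp : 0 < R := by positivity
  set A := 1 + |c * y + M| with hA
  have hAp : 0 < A := by positivity
  have hcy : |c * y| = |c| * y := by rw [abs_mul, abs_of_pos hy]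
  have hRA : R ≤ A + |c| * y := by
    have := abs_sub_abs_le_abs_sub M (-(c * y))
    rw [abs_neg, hcy, sub_neg_eq_add, add_comm M] at this
    rw [hR, hA]; linarith
  have hyA : |c| * y ≤ A + R := by
    have := abs_sub_abs_le_abs_sub (c * y) (-M)
    rw [abs_neg, hcy, sub_neg_eq_add] at this
    rw [hR, hA]; linarith
  have hyσ : 0 < y ^ (σ - 1) := by positivity
  by_cases h1 : R / 2 ≤ A
  · by_cases h2 : y ≤ R
    · have e : A ^ (-a) ≤ K1 * R ^ (-a) := by
        rw [hK1, ← Real.mul_rpow (by norm_num) hRp.le]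
        exact Real.rpow_le_rpow_of_nonpos (by positivity) (by linarith) (by linarith)
      calc _ ≤ ENNReal.ofReal ((K1 + K2 + K3) * (R ^ (-a) * y ^ (σ - 1))) := by
            apply ENNReal.ofReal_le_ofReal
            calc _ ≤ y ^ (σ - 1) * (K1 * R ^ (-a)) := by gcongr
              _ = K1 * (R ^ (-a) * y ^ (σ - 1)) := by ring
              _ ≤ _ := by gcongr; linarith
        _ ≤ _ := by
            rw [ENNReal.ofReal_mul (by positivity), ENNReal.ofReal_mul (by positivity)]
            gcongr
            rw [Set.indicator_of_mem (show y ∈ Set.Ioc 0 R from ⟨hy, h2⟩), add_assoc]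
            exact le_self_add
    · push Not at h2
      have e : A ^ (-a) ≤ K2 * y ^ (-a) := by
        rw [hK2, ← Real.mul_rpow (by positivity) hy.le]
        exact Real.rpow_le_rpow_of_nonpos (by positivity) (by linarith) (by linarith)
      calc _ ≤ ENNReal.ofReal ((K1 + K2 + K3) * (y ^ (-(a - σ) - 1))) := by
            apply ENNReal.ofReal_le_ofReal
            calc _ ≤ y ^ (σ - 1) * (K2 * y ^ (-a)) := by gcongr
              _ = K2 * (y ^ (σ - 1) * y ^ (-a)) := by ring
              _ = K2 * y ^ (-(a - σ) - 1) := by rw [← Real.rpow_add hy]; congr 2; ring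
              _ ≤ _ := by gcongr; linarith
        _ ≤ _ := by
            rw [ENNReal.ofReal_mul (by positivity)]
            gcongr
            rw [Set.indicator_of_mem (s := Set.Ioi R) (a := y) h2]
            exact le_add_right le_add_self
  · push Not at h1
    have hy2 : 1 / (2 * |c|) * R ≤ y := by
      rw [one_div_mul_eq_div, div_le_iff₀ (by positivity)]; linarith
    have e : y ^ (σ - 1) ≤ K3 * R ^ (σ - 1) := by
      rw [hK3, ← Real.mul_rpow (by positivity) hRp.le]
      exact Real.rpow_le_rpow_of_nonpos (by positivity) hy2 (by linarith)
    have hmem : c * y + M ∈ Set.Icc (-R) R := by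
      rw [Set.mem_Icc, ← abs_le]; rw [hA] at h1; linarith
    rw [Set.indicator_of_mem hmem]
    calc _ ≤ ENNReal.ofReal ((K1 + K2 + K3) * (R ^ (σ - 1) * A ^ (-a))) := by
          apply ENNReal.ofReal_le_ofReal
          calc _ ≤ (K3 * R ^ (σ - 1)) * A ^ (-a) := by gcongr
            _ = K3 * (R ^ (σ - 1) * A ^ (-a)) := by ring
            _ ≤ _ := by gcongr; linarith
      _ ≤ _ := by
          rw [ENNReal.ofReal_mul (by positivity), ENNReal.ofReal_mul (by positivity)]
          gcongr
          exact le_add_self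

lemma lint_oneD {c σ a : ℝ} (hc : c ≠ 0) (hσ : 0 < σ) (hσa : σ < a) (ha : a < 1) :
    ∃ C : ℝ, 0 ≤ C ∧ ∀ M : ℝ,
      ∫⁻ y in Set.Ioi 0, ENNReal.ofReal (y ^ (σ - 1) * (1 + |c * y + M|) ^ (-a)) ≤
        ENNReal.ofReal (C * (1 + |M|) ^ (-(a - σ))) := by
  obtain ⟨K, hK, hpt⟩ := pointwise_oneD hc hσ hσa ha
  have ha1 : 0 < 1 - a := by linarith
  have haσ : 0 < a - σ := by linarith
  refine ⟨K * (1 / σ + 1 / (a - σ) + |c⁻¹| * (2 / (1 - a))), by positivity, ?_⟩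
  intro M
  set R := 1 + |M| with hR
  have hRp : 0 < R := by positivity
  have hm1 : Measurable ((Set.Ioc 0 R).indicator (fun y => ENNReal.ofReal (y ^ (σ - 1)))) :=
    Measurable.indicator (by fun_prop) measurableSet_Ioc
  have hm2 : Measurable ((Set.Ioi R).indicator (fun y => ENNReal.ofReal (y ^ (-(a - σ) - 1)))) :=
    Measurable.indicator (by fun_prop) measurableSet_Ioi
  have hm3 : Measurable ((Set.Icc (-R) R).indicator (fun u : ℝ => ENNReal.ofReal ((1 + |u|) ^ (-a)))) :=
    Measurable.indicator (by fun_prop) measurableSet_Icc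
  have hm3' : Measurable (fun y => (Set.Icc (-R) R).indicator
      (fun u : ℝ => ENNReal.ofReal ((1 + |u|) ^ (-a))) (c * y + M)) :=
    hm3.comp (by fun_prop)
  refine (setLIntegral_mono' measurableSet_Ioi fun y hy => hpt M y hy).trans ?_
  refine (setLIntegral_le_lintegral _ _).trans ?_
  rw [lintegral_const_mul _ (by fun_prop), lintegral_add_left (by fun_prop),
    lintegral_add_left (by fun_prop), lintegral_const_mul _ (by fun_prop),
    lintegral_const_mul _ (by fun_prop), lintegral_affine _ hm3 c M hc,
    lintegral_indicator measurableSet_Ioc, lintegral_indicator measurableSet_Ioi,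
    lint_rpow_Ioc hσ hRp, lint_rpow_Ioi haσ hRp]
  calc _ ≤ ENNReal.ofReal K * (ENNReal.ofReal (R ^ (-a)) * ENNReal.ofReal (R ^ σ / σ)
        + ENNReal.ofReal (R ^ (-(a - σ)) / (a - σ))
        + ENNReal.ofReal (R ^ (σ - 1)) * (ENNReal.ofReal |c⁻¹| *
          ENNReal.ofReal (2 * R ^ (1 - a) / (1 - a)))) := by
        gcongr
        exact lint_abs (by linarith) ha hRp
    _ = _ := by
        rw [← ENNReal.ofReal_mul (by positivity), ← ENNReal.ofReal_mul (by positivity),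
          ← ENNReal.ofReal_mul (by positivity), ← ENNReal.ofReal_add (by positivity) (by positivity),
          ← ENNReal.ofReal_add (by positivity) (by positivity), ← ENNReal.ofReal_mul (by positivity)]
        congr 1
        have e1 : R ^ (-(a - σ)) = R ^ (-a) * R ^ σ := by
          rw [← Real.rpow_add hRp]; congr 1; ring
        have e2 : R ^ (-(a - σ)) = R ^ (σ - 1) * R ^ (1 - a) := by
          rw [← Real.rpow_add hRp]; congr 1; ring
        have e3 : R ^ (-a) * (R ^ σ / σ) = R ^ (-(a - σ)) * (1 / σ) := by rw [e1]; ring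
        have e4 : R ^ (σ - 1) * (|c⁻¹| * (2 * R ^ (1 - a) / (1 - a))) =
            R ^ (-(a - σ)) * (|c⁻¹| * (2 / (1 - a))) := by rw [e2]; ring
        rw [e3, e4]; ring

noncomputable def qmeas (n : ℕ) : Measure (Fin n → ℝ) :=
  Measure.pi (fun _ => (volume : Measure ℝ).restrict (Set.Ioi 0))

lemma lint_nd : ∀ (n : ℕ) (c σ : Fin n → ℝ) (a : ℝ), (∀ i, c i ≠ 0) → (∀ i, 0 < σ i) →
    ∑ i, σ i < a → a < 1 → ∃ C : ℝ, 0 ≤ C ∧ ∀ M : ℝ,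
      ∫⁻ y, ENNReal.ofReal ((∏ i, y i ^ (σ i - 1)) * (1 + |∑ i, c i * y i + M|) ^ (-a)) ∂(qmeas n) ≤
        ENNReal.ofReal (C * (1 + |M|) ^ (-(a - ∑ i, σ i))) := by
  intro n
  induction n with
  | zero =>
    intro c σ a _ _ _ _
    refine ⟨1, zero_le_one, fun M => ?_⟩
    simp [qmeas]
  | succ n ih =>
    intro c σ a hc hσ hsum ha
    rw [Fin.sum_univ_succ] at hsum
    have hs0 : 0 ≤ ∑ i : Fin n, σ i.succ := Finset.sum_nonneg fun i _ => (hσ _).le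
    have h0 := hσ 0
    obtain ⟨C1, hC1, h1⟩ := lint_oneD (hc 0) (hσ 0) (a := a) (by linarith) ha
    obtain ⟨C2, hC2, h2⟩ := ih (fun i => c i.succ) (fun i => σ i.succ) (a - σ 0)
      (fun i => hc _) (fun i => hσ _) (by linarith) (by linarith)
    refine ⟨C1 * C2, by positivity, fun M => ?_⟩
    have mp := (measurePreserving_piFinSuccAbove
      (fun _ : Fin (n+1) => (volume : Measure ℝ).restrict (Set.Ioi 0)) 0).symm
    have hmeas : Measurable (fun y : Fin (n+1) → ℝ => ENNReal.ofReal
      ((∏ i, y i ^ (σ i - 1)) * (1 + |∑ i, c i * y i + M|) ^ (-a))) := by fun_prop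
    unfold qmeas
    rw [← mp.lintegral_comp hmeas, lintegral_prod_symm]
    swap
    · exact (hmeas.comp (MeasurableEquiv.measurable _)).aemeasurable
    simp only [MeasurableEquiv.piFinSuccAbove_symm_apply, Fin.insertNthEquiv_apply, Fin.insertNth_zero',
      Fin.prod_univ_succ, Fin.sum_univ_succ, Fin.cons_zero, Fin.cons_succ]
    have hae : ∀ᵐ y' ∂(Measure.pi (fun _ : Fin n => (volume : Measure ℝ).restrict (Set.Ioi 0))),
        ∀ i, 0 < y' i := by
      rw [ae_all_iff]
      intro i
      have := (Measure.quasiMeasurePreserving_eval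
        (fun _ : Fin n => (volume : Measure ℝ).restrict (Set.Ioi 0)) i).ae
        (ae_restrict_mem measurableSet_Ioi)
      exact this
    have hstep : ∀ᵐ y' ∂(Measure.pi (fun _ : Fin n => (volume : Measure ℝ).restrict (Set.Ioi 0))),
        ∫⁻ x in Set.Ioi (0:ℝ), ENNReal.ofReal (x ^ (σ 0 - 1) * (∏ i : Fin n, y' i ^ (σ i.succ - 1)) *
          (1 + |c 0 * x + ∑ i : Fin n, c i.succ * y' i + M|) ^ (-a)) ≤
        ENNReal.ofReal C1 * ENNReal.ofReal ((∏ i : Fin n, y' i ^ (σ i.succ - 1)) *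
          (1 + |∑ i : Fin n, c i.succ * y' i + M|) ^ (-(a - σ 0))) := by
      filter_upwards [hae] with y' hy'
      have hP : 0 ≤ ∏ i : Fin n, y' i ^ (σ i.succ - 1) :=
        Finset.prod_nonneg fun i _ => Real.rpow_nonneg (hy' i).le _
      calc _ = ∫⁻ x in Set.Ioi (0:ℝ), ENNReal.ofReal (∏ i : Fin n, y' i ^ (σ i.succ - 1)) *
            ENNReal.ofReal (x ^ (σ 0 - 1) *
              (1 + |c 0 * x + (∑ i : Fin n, c i.succ * y' i + M)|) ^ (-a)) := by
            congr 1; ext x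
            rw [← ENNReal.ofReal_mul hP]; congr 1; rw [← add_assoc]; ring
        _ ≤ ENNReal.ofReal (∏ i : Fin n, y' i ^ (σ i.succ - 1)) *
            ENNReal.ofReal (C1 * (1 + |∑ i : Fin n, c i.succ * y' i + M|) ^ (-(a - σ 0))) := by
            rw [lintegral_const_mul _ (by fun_prop)]
            gcongr
            exact h1 _
        _ = _ := by
            rw [← ENNReal.ofReal_mul hP, ← ENNReal.ofReal_mul hC1]; congr 1; ring
    refine (lintegral_mono_ae hstep).trans ?_
    rw [lintegral_const_mul _ (by fun_prop)]
    refine (mul_le_mul_right (h2 M) _).trans ?_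
    rw [← ENNReal.ofReal_mul hC1]
    apply le_of_eq; congr 1
    rw [show a - (σ 0 + ∑ i : Fin n, σ i.succ) = a - σ 0 - ∑ i : Fin n, σ i.succ by ring]; ring

lemma qmeas_pos (n : ℕ) : ∀ᵐ y ∂(qmeas n), ∀ i, 0 < y i := by
  rw [ae_all_iff]
  intro i
  exact (Measure.quasiMeasurePreserving_eval
    (fun _ : Fin n => (volume : Measure ℝ).restrict (Set.Ioi 0)) i).ae
    (ae_restrict_mem measurableSet_Ioi)

lemma restrict_quadrant (n : ℕ) : (volume : Measure (Fin n → ℝ)).restrict (Quadrant n) = qmeas n := by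
  have h : Quadrant n = Set.pi Set.univ (fun _ => Set.Ici (0:ℝ)) := by
    ext y; simp [Quadrant, Pi.le_def]
  rw [h, volume_pi, Measure.restrict_pi_pi]
  unfold qmeas
  congr 1
  ext1 i
  exact Measure.restrict_congr_set Ioi_ae_eq_Ici.symm

lemma base_int (n : ℕ) (hn : 0 < n) (F : (Fin n → ℝ) → ℂ) (hF : Continuous F)
    (hd : SufficientDecayOn n (Quadrant n) F) (τ : Fin n → ℝ)
    (hτ : ∀ i, 0 < τ i ∧ τ i < 1 / n) :
    Integrable (fun y => ‖F y‖ * ∏ i, y i ^ (τ i - 1)) (qmeas n) := by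
  obtain ⟨r, G, L, hL, hC, hsum⟩ := hd
  choose C hC using hC
  have hn' : (0:ℝ) < n := by exact_mod_cast hn
  have hS : ∑ i, τ i < 1 := by
    have : ∑ i, τ i < ∑ i : Fin n, (1 / n : ℝ) := by
      apply Finset.sum_lt_sum_of_nonempty
      · exact ⟨⟨0, hn⟩, Finset.mem_univ _⟩
      · exact fun i _ => (hτ i).2
    have h2 : ∑ i : Fin n, (1 / n : ℝ) = 1 := by simp; field_simp
    linarith
  have hS0 : 0 ≤ ∑ i, τ i := Finset.sum_nonneg fun i _ => (hτ i).1.le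
  obtain ⟨a, ha1, ha2⟩ := exists_between hS
  have hI : ∀ j, Integrable (fun y : Fin n → ℝ => C j *
      ((∏ i, y i ^ (τ i - 1)) * (1 + |∑ i, L j i * y i + 0|) ^ (-a))) (qmeas n) := by
    intro j
    obtain ⟨B, hB, hb⟩ := lint_nd n (L j) τ a (hL j) (fun i => (hτ i).1) ha1 ha2
    refine Integrable.const_mul ⟨Measurable.aestronglyMeasurable (by fun_prop), ?_⟩ _
    rw [hasFiniteIntegral_iff_ofReal]
    · exact (hb 0).trans_lt ENNReal.ofReal_lt_top
    · filter_upwards [qmeas_pos n] with y hy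
      exact mul_nonneg (Finset.prod_nonneg fun i _ => Real.rpow_nonneg (hy i).le _) (by positivity)
  refine (integrable_finsetSum Finset.univ fun j _ => hI j).mono' ?_ ?_
  · refine (hF.norm.measurable.mul ?_).aestronglyMeasurable
    fun_prop
  · filter_upwards [qmeas_pos n] with y hy
    have hyQ : y ∈ Quadrant n := fun i => (hy i).le
    have hP : 0 ≤ ∏ i, y i ^ (τ i - 1) := Finset.prod_nonneg fun i _ => Real.rpow_nonneg (hy i).le _
    rw [Real.norm_of_nonneg (by positivity), hsum y hyQ]
    calc _ ≤ (∑ j, ‖G j y‖) * ∏ i, y i ^ (τ i - 1) := by gcongr; exact norm_sum_le _ _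
      _ = ∑ j, ‖G j y‖ * ∏ i, y i ^ (τ i - 1) := by rw [Finset.sum_mul]
      _ ≤ _ := by
        refine Finset.sum_le_sum fun j _ => ?_
        have h1 := hC j y hyQ
        set A := 1 + |∑ i, L j i * y i| with hA
        have hA1 : 1 ≤ A := by rw [hA]; linarith [abs_nonneg (∑ i, L j i * y i)]
        have hA0 : 0 < A := by linarith
        rw [add_zero, ← hA]
        have hC0 : 0 ≤ C j := le_trans (by positivity) h1
        have h2 : ‖G j y‖ ≤ C j * A ^ (-a) := by
          calc ‖G j y‖ ≤ C j * A ^ (-1 : ℝ) := by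
                rw [Real.rpow_neg_one, ← div_eq_mul_inv, le_div_iff₀ hA0]; linarith
            _ ≤ _ := by gcongr
        calc _ ≤ C j * A ^ (-a) * ∏ i, y i ^ (τ i - 1) := by gcongr
          _ = _ := by ring

/-- Smooth cutoff: `1` on `y ≤ 1`, `0` on `y ≥ 2`. -/
noncomputable def chiF (y : ℝ) : ℝ := Real.smoothTransition (2 - y)

lemma chiF_contDiff : ContDiff ℝ (⊤ : ℕ∞) chiF :=
  Real.smoothTransition.contDiff.comp (contDiff_const.sub contDiff_id)

lemma chiF_cont : Continuous chiF := chiF_contDiff.continuous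

lemma chiF_deriv_cont : Continuous (deriv chiF) :=
  chiF_contDiff.continuous_deriv (by norm_num)

lemma chiF_one {y : ℝ} (h : y ≤ 1) : chiF y = 1 := Real.smoothTransition.one_of_one_le (by linarith)

lemma chiF_zero {y : ℝ} (h : 2 ≤ y) : chiF y = 0 := Real.smoothTransition.zero_of_nonpos (by linarith)

lemma chiF_hasDeriv (y : ℝ) : HasDerivAt chiF (deriv chiF y) y :=
  ((chiF_contDiff.differentiable (by norm_num)) y).hasDerivAt

lemma chiF_deriv_lt {y : ℝ} (h : y < 1) : deriv chiF y = 0 := by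
  have : chiF =ᶠ[nhds y] fun _ => 1 := by
    filter_upwards [Iio_mem_nhds h] with z hz using chiF_one (le_of_lt hz)
  rw [this.deriv_eq]; simp

lemma chiF_deriv_gt {y : ℝ} (h : 2 < y) : deriv chiF y = 0 := by
  have : chiF =ᶠ[nhds y] fun _ => 0 := by
    filter_upwards [Ioi_mem_nhds h] with z hz using chiF_zero (le_of_lt hz)
  rw [this.deriv_eq]; simp

/-- The kinds of one-variable kernels. -/
inductive Kd : Type
  | one : Kd
  | chi : ℕ → Kd
  | dchi : ℕ → Kd
  | osc : Kd

noncomputable def Kd.cf : Kd → ℝ → ℝ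
  | .one, _ => 1
  | .chi _, y => chiF y
  | .dchi _, y => - deriv chiF y
  | .osc, y => 1 - chiF y

def Kd.ex : Kd → ℕ
  | .one => 0
  | .chi m => m
  | .dchi m => m
  | .osc => 0

def Kd.nz : Kd → Prop
  | .one => True
  | .chi _ => True
  | .dchi _ => False
  | .osc => False

lemma Kd.cf_cont (d : Kd) : Continuous d.cf := by
  cases d with
  | one => exact continuous_const
  | chi m => exact chiF_cont
  | dchi m => exact chiF_deriv_cont.neg
  | osc => exact continuous_const.sub chiF_cont

lemma Kd.cf_zero (d : Kd) (h : ¬ d.nz) {y : ℝ} (hy : y < 1) : d.cf y = 0 := by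
  cases d with
  | one => exact absurd trivial h
  | chi m => exact absurd trivial h
  | dchi m => simp [Kd.cf, chiF_deriv_lt hy]
  | osc => simp [Kd.cf, chiF_one hy.le]

lemma Kd.bound (d : Kd) : ∃ B : ℝ, 0 ≤ B ∧ (∀ y : ℝ, 0 < y → y < 1 → |d.cf y| ≤ B) ∧
    ∀ y : ℝ, 1 ≤ y → |d.cf y| * y ^ d.ex ≤ B := by
  have hc : ContinuousOn (fun y : ℝ => |d.cf y| + |d.cf y| * |y| ^ d.ex) (Set.Icc 0 2) := by
    have := d.cf_cont
    fun_prop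
  obtain ⟨B, hB⟩ := isCompact_Icc.exists_bound_of_continuousOn hc
  have hB' : ∀ y ∈ Set.Icc (0:ℝ) 2, |d.cf y| + |d.cf y| * |y| ^ d.ex ≤ B := by
    intro y hy
    exact (le_abs_self _).trans (hB y hy)
  have hB0 : 0 ≤ B := le_trans (by positivity) (hB' 0 (by simp))
  refine ⟨B + 1, by linarith, ?_, ?_⟩
  · intro y h0 h1
    have := hB' y ⟨h0.le, by linarith⟩
    have h3 : 0 ≤ |d.cf y| * |y| ^ d.ex := by positivity
    linarith
  · intro y h1
    by_cases h2 : y ≤ 2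
    · have := hB' y ⟨by linarith, h2⟩
      rw [abs_of_nonneg (show 0 ≤ y by linarith)] at this
      have h3 : 0 ≤ |d.cf y| := by positivity
      linarith
    · push Not at h2
      cases d with
      | one => simp [Kd.cf, Kd.ex, hB0]
      | chi m => simp [Kd.cf, chiF_zero h2.le]; linarith
      | dchi m => simp [Kd.cf, chiF_deriv_gt h2]; linarith
      | osc => simp [Kd.cf, Kd.ex, chiF_zero h2.le, hB0]

lemma Kd.dom (d : Kd) (σ τ r : ℝ) (h1 : σ + r ≤ τ) (h2 : d.nz → τ ≤ σ + d.ex - r) :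
    ∃ C : ℝ, 0 ≤ C ∧ ∀ y : ℝ, 0 < y →
      |d.cf y| * y ^ (σ + d.ex - 1) * Real.exp (r * |Real.log y|) ≤ C * y ^ (τ - 1) := by
  obtain ⟨B, hB, hb1, hb2⟩ := d.bound
  refine ⟨B, hB, fun y hy => ?_⟩
  by_cases hy1 : y < 1
  · by_cases hz : d.nz
    · have e : Real.exp (r * |Real.log y|) = y ^ (-r) := by
        rw [abs_of_neg (Real.log_neg hy hy1), Real.rpow_def_of_pos hy]; congr 1; ring
      rw [e, mul_assoc, ← Real.rpow_add hy]
      have := h2 hz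
      refine mul_le_mul (hb1 y hy hy1) ?_ (by positivity) hB
      exact Real.rpow_le_rpow_of_exponent_ge hy hy1.le (by linarith)
    · rw [d.cf_zero hz hy1]; simp; positivity
  · push Not at hy1
    have e : Real.exp (r * |Real.log y|) = y ^ r := by
      rw [abs_of_nonneg (Real.log_nonneg hy1), Real.rpow_def_of_pos hy]; congr 1; ring
    have e2 : y ^ (σ + d.ex - 1) = y ^ d.ex * y ^ (σ - 1) := by
      rw [← Real.rpow_natCast, ← Real.rpow_add hy]; congr 1; ring
    rw [e, e2, ← mul_assoc, mul_assoc, ← Real.rpow_add hy]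
    refine mul_le_mul (hb2 y hy1) ?_ (by positivity) hB
    exact Real.rpow_le_rpow_of_exponent_le hy1 (by linarith)

/-- Kernel without the Gamma factor. -/
noncomputable def Kd.ker0 (d : Kd) (s : ℂ) (y : ℝ) : ℂ := (d.cf y : ℂ) * (y : ℂ) ^ (s + d.ex - 1)

noncomputable def Kd.ker (d : Kd) (s : ℂ) (y : ℝ) : ℂ := (Complex.Gamma (s + d.ex))⁻¹ * d.ker0 s y

lemma Kd.ker0_norm (d : Kd) (s : ℂ) {y : ℝ} (hy : 0 < y) :
    ‖d.ker0 s y‖ = |d.cf y| * y ^ (s.re + d.ex - 1) := by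
  rw [Kd.ker0, norm_mul, Complex.norm_cpow_eq_rpow_re_of_pos hy, Complex.norm_real, Real.norm_eq_abs]
  simp

lemma Kd.ker0_meas (d : Kd) (s : ℂ) : Measurable (d.ker0 s) := by
  have := d.cf_cont.measurable
  unfold Kd.ker0
  fun_prop

lemma ker0_prod_dom {n : ℕ} (d : Fin n → Kd) (s : Fin n → ℂ) (τ : Fin n → ℝ) (r : ℝ)
    (h1 : ∀ i, (s i).re + r ≤ τ i) (h2 : ∀ i, (d i).nz → τ i ≤ (s i).re + (d i).ex - r) :
    ∃ C : ℝ, 0 ≤ C ∧ ∀ y : Fin n → ℝ, (∀ i, 0 < y i) →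
      Real.exp (r * ∑ i, |Real.log (y i)|) * ‖∏ i, (d i).ker0 (s i) (y i)‖ ≤
        C * ∏ i, y i ^ (τ i - 1) := by
  choose C hC h using fun i => (d i).dom (s i).re (τ i) r (h1 i) (h2 i)
  refine ⟨∏ i, C i, Finset.prod_nonneg fun i _ => hC i, fun y hy => ?_⟩
  rw [norm_prod, Finset.mul_sum, Real.exp_sum, ← Finset.prod_mul_distrib, ← Finset.prod_mul_distrib]
  refine Finset.prod_le_prod (fun i _ => by positivity) fun i _ => ?_
  rw [Kd.ker0_norm _ _ (hy i), mul_comm]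
  exact h i (y i) (hy i)

lemma ker0_int {n : ℕ} (hn : 0 < n) (F : (Fin n → ℝ) → ℂ) (hF : Continuous F)
    (hd : SufficientDecayOn n (Quadrant n) F)
    (d : Fin n → Kd) (s : Fin n → ℂ) (τ : Fin n → ℝ) (r : ℝ) (hτ : ∀ i, 0 < τ i ∧ τ i < 1 / n)
    (h1 : ∀ i, (s i).re + r ≤ τ i) (h2 : ∀ i, (d i).nz → τ i ≤ (s i).re + (d i).ex - r) :
    Integrable (fun y => Real.exp (r * ∑ i, |Real.log (y i)|) *
      ‖F y * ∏ i, (d i).ker0 (s i) (y i)‖) (qmeas n) := by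
  obtain ⟨C, hC, h⟩ := ker0_prod_dom d s τ r h1 h2
  have hk := fun i => (d i).ker0_meas (s i)
  refine ((base_int n hn F hF hd τ hτ).const_mul C).mono' ?_ ?_
  · have := hF.measurable
    exact Measurable.aestronglyMeasurable (by fun_prop)
  · filter_upwards [qmeas_pos n] with y hy
    rw [Real.norm_of_nonneg (by positivity), norm_mul]
    calc _ = ‖F y‖ * (Real.exp (r * ∑ i, |Real.log (y i)|) * ‖∏ i, (d i).ker0 (s i) (y i)‖) := by ring
      _ ≤ ‖F y‖ * (C * ∏ i, y i ^ (τ i - 1)) := mul_le_mul_of_nonneg_left (h y hy) (norm_nonneg _)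
      _ = _ := by ring

lemma ker0_int' {n : ℕ} (hn : 0 < n) (F : (Fin n → ℝ) → ℂ) (hF : Continuous F)
    (hd : SufficientDecayOn n (Quadrant n) F)
    (d : Fin n → Kd) (s : Fin n → ℂ) (hs : ∀ i, 0 < (s i).re ∧ (s i).re < 1 / n) :
    Integrable (fun y => F y * ∏ i, (d i).ker0 (s i) (y i)) (qmeas n) := by
  have h := ker0_int hn F hF hd d s (fun i => (s i).re) 0 hs (by simp) (by simp)
  simp only [zero_mul, Real.exp_zero, one_mul] at h
  have hk := fun i => (d i).ker0_meas (s i)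
  have := hF.measurable
  exact (integrable_norm_iff (Measurable.aestronglyMeasurable (by fun_prop))).mp h

lemma ker_int {n : ℕ} (hn : 0 < n) (F : (Fin n → ℝ) → ℂ) (hF : Continuous F)
    (hd : SufficientDecayOn n (Quadrant n) F)
    (d : Fin n → Kd) (s : Fin n → ℂ) (hs : ∀ i, 0 < (s i).re ∧ (s i).re < 1 / n) :
    Integrable (fun y => F y * ∏ i, (d i).ker (s i) (y i)) (qmeas n) := by
  have := (ker0_int' hn F hF hd d s hs).const_mul (∏ i, (Complex.Gamma (s i + (d i).ex))⁻¹)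
  refine this.congr (Filter.Eventually.of_forall fun y => ?_)
  simp only [Kd.ker, Finset.prod_mul_distrib]
  ring

/-- The generalized Mellin transform. -/
noncomputable def Lam {n : ℕ} (F : (Fin n → ℝ) → ℂ) (d : Fin n → Kd) (s : Fin n → ℂ) : ℂ :=
  ∫ y, F y * ∏ i, (d i).ker (s i) (y i) ∂(qmeas n)

lemma Lam_eq {n : ℕ} (F : (Fin n → ℝ) → ℂ) (d : Fin n → Kd) (s : Fin n → ℂ) :
    Lam F d s = (∏ i, (Complex.Gamma (s i + (d i).ex))⁻¹) *
      ∫ y, F y * ∏ i, (d i).ker0 (s i) (y i) ∂(qmeas n) := by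
  rw [Lam, ← integral_const_mul]
  congr 1; ext y
  simp only [Kd.ker, Finset.prod_mul_distrib]
  ring

lemma Lam_analyticAt {n : ℕ} (hn : 0 < n) (F : (Fin n → ℝ) → ℂ) (hF : Continuous F)
    (hd : SufficientDecayOn n (Quadrant n) F) (d : Fin n → Kd) (s₀ : Fin n → ℂ)
    (hs : ∀ i, (s₀ i).re < 1 / n)
    (hz : ∀ i, (d i).nz → 0 < (d i).ex ∧ 0 < (s₀ i).re + (d i).ex) :
    AnalyticAt ℂ (Lam F d) s₀ := by
  have hn' : (0:ℝ) < 1 / n := by have : (0:ℝ) < n := by exact_mod_cast hn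
                                 positivity
  have hex : ∀ i, ∃ r τ : ℝ, 0 < r ∧ (0 < τ ∧ τ < 1 / n) ∧ (s₀ i).re + r ≤ τ ∧
      ((d i).nz → τ ≤ (s₀ i).re + (d i).ex - r) := by
    intro i
    have hi := hs i
    obtain ⟨hi', hlo, hhi, h0, h1, h2, h3⟩ : ∃ lo hi : ℝ, (s₀ i).re ≤ lo ∧ 0 ≤ lo ∧ lo < hi ∧
        hi ≤ 1 / n ∧ ((d i).nz → hi ≤ (s₀ i).re + (d i).ex) := by
      by_cases h : (d i).nz
      · obtain ⟨h1, h2⟩ := hz i h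
        have h1' : (1:ℝ) ≤ (d i).ex := by exact_mod_cast h1
        refine ⟨max (s₀ i).re 0, min (1 / n) ((s₀ i).re + (d i).ex), le_max_left _ _,
          le_max_right _ _, ?_, min_le_left _ _, fun _ => min_le_right _ _⟩
        rw [max_lt_iff, lt_min_iff, lt_min_iff]
        exact ⟨⟨hi, by linarith⟩, hn', h2⟩
      · exact ⟨max (s₀ i).re 0, 1 / n, le_max_left _ _, le_max_right _ _, max_lt hi hn', le_rfl,
          fun h' => absurd h' h⟩
    refine ⟨(hlo - hi') / 2, (hi' + hlo) / 2, by linarith, ⟨by linarith, by linarith⟩, by linarith, ?_⟩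
    intro h
    have := h3 h
    linarith
  choose r τ hr hτ h1 h2 using hex
  have hne : (Finset.univ : Finset (Fin n)).Nonempty := ⟨⟨0, hn⟩, Finset.mem_univ _⟩
  set ρ := Finset.univ.inf' hne r with hρ
  have hρ0 : 0 < ρ := by rw [hρ, Finset.lt_inf'_iff]; exact fun i _ => hr i
  have hρi : ∀ i, ρ ≤ r i := fun i => Finset.inf'_le _ (Finset.mem_univ i)
  have hint := ker0_int hn F hF hd d s₀ τ ρ hτ (fun i => by linarith [h1 i, hρi i])
    (fun i hi => by linarith [h2 i hi, hρi i])
  have hk := fun i => (d i).ker0_meas (s₀ i)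
  have hFm := hF.measurable
  have key := analyticAt_integral_exp (μ := qmeas n) (fun y i => Real.log (y i)) (by fun_prop)
    (fun y => F y * ∏ i, (d i).ker0 (s₀ i) (y i))
    (Measurable.aestronglyMeasurable (by fun_prop)) ρ hρ0 hint
  have key2 : AnalyticAt ℂ (fun s : Fin n → ℂ => ∫ y, (F y * ∏ i, (d i).ker0 (s₀ i) (y i)) *
      Complex.exp (∑ i, (s - s₀) i * (Real.log (y i) : ℂ)) ∂(qmeas n)) s₀ := by
    have hsub : AnalyticAt ℂ (fun s : Fin n → ℂ => s - s₀) s₀ := analyticAt_id.sub analyticAt_const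
    have h0 : (fun s : Fin n → ℂ => s - s₀) s₀ = 0 := sub_self _
    rw [← h0] at key
    exact AnalyticAt.comp (f := fun s : Fin n → ℂ => s - s₀) key hsub
  have hG : AnalyticAt ℂ (fun s : Fin n → ℂ => ∏ i, (Complex.Gamma (s i + (d i).ex))⁻¹) s₀ := by
    refine Finset.analyticAt_fun_prod _ fun i _ => ?_
    have hg : AnalyticAt ℂ (fun z => (Complex.Gamma z)⁻¹) (s₀ i + (d i).ex) :=
      Complex.differentiable_one_div_Gamma.analyticAt _
    have hp : AnalyticAt ℂ (fun s : Fin n → ℂ => s i + ((d i).ex : ℂ)) s₀ :=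
      ((ContinuousLinearMap.proj (R := ℂ) (φ := fun _ : Fin n => ℂ) i).analyticAt s₀).add
        analyticAt_const
    exact AnalyticAt.comp (f := fun s : Fin n → ℂ => s i + ((d i).ex : ℂ)) hg hp
  refine (hG.mul key2).congr (Filter.Eventually.of_forall fun s => ?_)
  simp only [Pi.mul_apply]
  rw [Lam_eq]
  congr 1
  refine integral_congr_ae ?_
  filter_upwards [qmeas_pos n] with y hy
  rw [Complex.exp_sum, mul_assoc, ← Finset.prod_mul_distrib]
  congr 1
  refine Finset.prod_congr rfl fun i _ => ?_
  have hne : (y i : ℂ) ≠ 0 := by exact_mod_cast (hy i).ne'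
  rw [Kd.ker0, Kd.ker0, mul_assoc, Complex.cpow_def_of_ne_zero hne, Complex.cpow_def_of_ne_zero hne,
    ← Complex.exp_add, Complex.ofReal_log (hy i).le]
  congr 2
  simp only [Pi.sub_apply]
  ring

lemma pderivList_contDiff (n : ℕ) (H : (Fin n → ℝ) → ℂ) (hH : ContDiff ℝ (⊤ : ℕ∞) H)
    (l : List (Fin n)) : ContDiff ℝ (⊤ : ℕ∞) (pderivList n l H) := by
  induction l with
  | nil => exact hH
  | cons i l ih =>
    unfold pderivList pderivNeg
    exact ((ih.fderiv_right (m := (⊤ : ℕ∞)) (by simp)).clm_apply contDiff_const).neg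

lemma fubini_zero {k : ℕ} (i : Fin (k+1)) (G : (Fin (k+1) → ℝ) → ℂ)
    (hG : Integrable G (qmeas (k+1)))
    (h : ∀ y' : Fin k → ℝ, (∀ j, 0 < y' j) →
      IntegrableOn (fun x : ℝ => G (i.insertNth x y')) (Set.Ioi 0) →
      ∫ x in Set.Ioi (0:ℝ), G (i.insertNth x y') = 0) :
    ∫ y, G y ∂(qmeas (k+1)) = 0 := by
  have mp := (measurePreserving_piFinSuccAbove
      (fun _ : Fin (k+1) => (volume : Measure ℝ).restrict (Set.Ioi 0)) i).symm
  have hG' := (mp.integrable_comp_emb (MeasurableEquiv.measurableEmbedding _)).mpr hG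
  unfold qmeas
  rw [← mp.integral_comp', integral_prod_symm]
  swap
  · exact hG'
  rw [integral_eq_zero_of_ae]
  filter_upwards [hG'.prod_left_ae, qmeas_pos k] with y' h1 h2
  exact h y' h2 h1

lemma insertNth_hasDeriv {k : ℕ} (i : Fin (k+1)) (y' : Fin k → ℝ) (x : ℝ) :
    HasDerivAt (fun x : ℝ => (i.insertNth x y' : Fin (k+1) → ℝ)) (Pi.single i 1) x := by
  rw [hasDerivAt_pi]
  rw [Fin.forall_iff_succAbove i]
  constructor
  · simp only [Fin.insertNth_apply_same, Pi.single_eq_same]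
    exact hasDerivAt_id x
  · intro j
    simp only [Fin.insertNth_apply_succAbove]
    rw [Pi.single_eq_of_ne (Fin.succAbove_ne i j)]
    exact hasDerivAt_const x _

lemma ker_chi_hasDeriv (m : ℕ) (s : ℂ) (hs : 0 < s.re) {x : ℝ} (hx : 0 < x) :
    HasDerivAt (fun x : ℝ => (Kd.chi (m+1)).ker s x)
      ((Kd.chi m).ker s x - (Kd.dchi (m+1)).ker s x) x := by
  have hne : s + m ≠ 0 := by
    intro h
    have := congrArg Complex.re h
    simp at this
    have : (0:ℝ) ≤ m := Nat.cast_nonneg m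
    linarith
  have h1 : HasDerivAt (fun x : ℝ => (chiF x : ℂ)) ((deriv chiF x : ℝ) : ℂ) x :=
    (chiF_hasDeriv x).ofReal_comp
  have h2 : HasDerivAt (fun x : ℝ => (x : ℂ) ^ (s + m)) ((s + m) * (x : ℂ) ^ (s + m - 1)) x :=
    hasDerivAt_ofReal_cpow_const hx.ne' hne
  have h3 := (h1.mul h2).const_mul ((Complex.Gamma (s + m + 1))⁻¹)
  have hfun : (fun x : ℝ => (Kd.chi (m+1)).ker s x) = fun x : ℝ =>
      (Complex.Gamma (s + m + 1))⁻¹ * (((fun x : ℝ => (chiF x : ℂ)) * fun x : ℝ => (x : ℂ) ^ (s + m)) x) := by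
    ext x
    simp only [Kd.ker, Kd.ker0, Kd.cf, Kd.ex, Pi.mul_apply]
    push_cast
    rw [← add_assoc, add_sub_cancel_right]
  rw [hfun]
  refine h3.congr_deriv ?_
  · simp only [Kd.ker, Kd.ker0, Kd.cf, Kd.ex]
    push_cast
    have hG : (Complex.Gamma (s + m))⁻¹ = (s + m) * (Complex.Gamma (s + m + 1))⁻¹ := by
      rw [Complex.Gamma_add_one _ hne, mul_inv, ← mul_assoc, mul_inv_cancel₀ hne, one_mul]
    rw [hG, ← add_assoc, add_sub_cancel_right]
    ring

lemma prod_update_ker {n : ℕ} (d : Fin n → Kd) (i : Fin n) (k : Kd) (s : Fin n → ℂ) (y : Fin n → ℝ) :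
    ∏ j, (Function.update d i k j).ker (s j) (y j) =
      k.ker (s i) (y i) * ∏ j ∈ Finset.univ.erase i, (d j).ker (s j) (y j) := by
  rw [← Finset.mul_prod_erase Finset.univ _ (Finset.mem_univ i), Function.update_self]
  congr 1
  refine Finset.prod_congr rfl fun j hj => ?_
  rw [Function.update_of_ne (Finset.ne_of_mem_erase hj)]

lemma Lam_split {n : ℕ} (hn : 0 < n) (F : (Fin n → ℝ) → ℂ) (hF : Continuous F)
    (hd : SufficientDecayOn n (Quadrant n) F) (d : Fin n → Kd) (s : Fin n → ℂ)
    (hs : ∀ i, 0 < (s i).re ∧ (s i).re < 1 / n) (i : Fin n) (hi : d i = Kd.one) :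
    Lam F d s = Lam F (Function.update d i (Kd.chi 0)) s + Lam F (Function.update d i Kd.osc) s := by
  unfold Lam
  rw [← integral_add (ker_int hn F hF hd _ s hs) (ker_int hn F hF hd _ s hs)]
  congr 1; ext y
  nth_rewrite 1 [← Function.update_eq_self i d]
  simp only [prod_update_ker]
  rw [hi]
  simp only [Kd.ker, Kd.ker0, Kd.cf, Kd.ex]
  push_cast
  ring

lemma Lam_parts {n : ℕ} (hn : 0 < n) (F : (Fin n → ℝ) → ℂ) (hF : ContDiff ℝ (⊤ : ℕ∞) F)
    (hd : SufficientDecayOn n (Quadrant n) F) (i : Fin n)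
    (hF' : Continuous (pderivNeg n i F))
    (hd' : SufficientDecayOn n (Quadrant n) (pderivNeg n i F)) (d : Fin n → Kd) (s : Fin n → ℂ)
    (hs : ∀ i, 0 < (s i).re ∧ (s i).re < 1 / n) (m : ℕ) (hi : d i = Kd.chi m) :
    Lam F d s = Lam (pderivNeg n i F) (Function.update d i (Kd.chi (m+1))) s
      + Lam F (Function.update d i (Kd.dchi (m+1))) s := by
  have i1 := ker_int hn F hF.continuous hd d s hs
  have i2 := ker_int hn _ hF' hd' (Function.update d i (Kd.chi (m+1))) s hs
  have i3 := ker_int hn F hF.continuous hd (Function.update d i (Kd.dchi (m+1))) s hs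
  rw [← sub_eq_zero]
  unfold Lam
  have i23 := i2.add i3
  simp only [Pi.add_def] at i23
  rw [← integral_add i2 i3, ← integral_sub i1 i23]
  obtain ⟨k, rfl⟩ : ∃ k, n = k + 1 := ⟨n - 1, by omega⟩
  refine fubini_zero i _ (i1.sub i23) ?_
  intro y' hy' hint
  set P : ℂ := ∏ j : Fin k, (d (i.succAbove j)).ker (s (i.succAbove j)) (y' j) with hP
  have hup : ∀ (k' : Kd) (x : ℝ), ∏ j, (Function.update d i k' j).ker (s j) ((i.insertNth x y' : Fin (k+1) → ℝ) j)
      = k'.ker (s i) x * P := by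
    intro k' x
    rw [Fin.prod_univ_succAbove _ i, Function.update_self, Fin.insertNth_apply_same, hP]
    congr 1
    refine Finset.prod_congr rfl fun j _ => ?_
    rw [Function.update_of_ne (Fin.succAbove_ne i j), Fin.insertNth_apply_succAbove]
  have hd0 : d = Function.update d i (Kd.chi m) := by rw [← hi, Function.update_eq_self]
  have hup0 : ∀ (x : ℝ), ∏ j, (d j).ker (s j) ((i.insertNth x y' : Fin (k+1) → ℝ) j)
      = (Kd.chi m).ker (s i) x * P := by
    intro x
    rw [← hup (Kd.chi m) x, ← hd0]
  simp only [hup, hup0] at hint ⊢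
  have hder : ∀ x ∈ Set.Ioi (0:ℝ), HasDerivAt
      (fun x : ℝ => F (i.insertNth x y') * (Kd.chi (m+1)).ker (s i) x * P)
      (F (i.insertNth x y') * ((Kd.chi m).ker (s i) x * P) -
        (pderivNeg (k+1) i F (i.insertNth x y') * ((Kd.chi (m+1)).ker (s i) x * P) +
          F (i.insertNth x y') * ((Kd.dchi (m+1)).ker (s i) x * P))) x := by
    intro x hx
    have hFd : HasDerivAt (fun x : ℝ => F (i.insertNth x y'))
        (fderiv ℝ F (i.insertNth x y') (Pi.single i 1)) x :=
      ((hF.differentiable (by simp)) _).hasFDerivAt.comp_hasDerivAt x (insertNth_hasDeriv i y' x)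
    refine ((hFd.mul (ker_chi_hasDeriv m (s i) (hs i).1 hx)).mul_const P).congr_deriv ?_
    simp only [pderivNeg]
    ring
  have hk0 : (Kd.chi (m+1)).ker (s i) 0 = 0 := by
    have : s i + ((m + 1 : ℕ) : ℂ) - 1 ≠ 0 := by
      intro h
      have h' := congrArg Complex.re h
      simp at h'
      have : (0:ℝ) ≤ m := Nat.cast_nonneg m
      linarith [(hs i).1]
    simp [Kd.ker, Kd.ker0, Kd.ex, -Nat.cast_add, Complex.zero_cpow this]
  have hcont : ContinuousWithinAt (fun x : ℝ => F (i.insertNth x y') * (Kd.chi (m+1)).ker (s i) x * P)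
      (Set.Ici 0) 0 := by
    apply ContinuousAt.continuousWithinAt
    have c1 : ContinuousAt (fun x : ℝ => F (i.insertNth x y')) 0 :=
      ContinuousAt.comp hF.continuous.continuousAt (insertNth_hasDeriv i y' 0).continuousAt
    have c2 : ContinuousAt (fun x : ℝ => (x : ℂ) ^ (s i + ((m + 1 : ℕ) : ℂ) - 1)) 0 := by
      apply Complex.continuousAt_ofReal_cpow_const
      left
      have : (0:ℝ) ≤ m := Nat.cast_nonneg m
      simp
      linarith [(hs i).1]
    have c3 : ContinuousAt (fun x : ℝ => (chiF x : ℂ)) 0 :=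
      (Complex.continuous_ofReal.comp chiF_cont).continuousAt
    have c4 : ContinuousAt (fun x : ℝ => (Kd.chi (m+1)).ker (s i) x) 0 :=
      continuousAt_const.mul (c3.mul c2)
    exact (c1.mul c4).mul continuousAt_const
  have hlim : Filter.Tendsto (fun x : ℝ => F (i.insertNth x y') * (Kd.chi (m+1)).ker (s i) x * P)
      Filter.atTop (nhds 0) := by
    refine tendsto_const_nhds.congr' ?_
    filter_upwards [Filter.eventually_ge_atTop (2:ℝ)] with x hx
    simp [Kd.ker, Kd.ker0, Kd.cf, chiF_zero hx]
  rw [integral_Ioi_of_hasDerivAt_of_tendsto hcont hder hint hlim, hk0]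
  simp

def Kd.wt (K : ℕ) : Kd → ℕ
  | .one => K + 1
  | .chi m => K - m
  | .dchi _ => 0
  | .osc => 0

lemma wt_update {n : ℕ} (K : ℕ) (d : Fin n → Kd) (i : Fin n) (k : Kd) (h : k.wt K < (d i).wt K) :
    ∑ j, (Function.update d i k j).wt K < ∑ j, (d j).wt K := by
  refine Finset.sum_lt_sum (fun j _ => ?_) ⟨i, Finset.mem_univ _, by simpa using h⟩
  by_cases hj : j = i
  · subst hj; simpa using h.le
  · rw [Function.update_of_ne hj]

lemma exists_ext {n : ℕ} (hn : 0 < n) (H : (Fin n → ℝ) → ℂ)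
    (hsmooth : ContDiff ℝ (⊤ : ℕ∞) H)
    (hdecay : ∀ l : List (Fin n), SufficientDecayOn n (Quadrant n) (pderivList n l H)) (K : ℕ) (hK : 0 < K) :
    ∀ (N : ℕ) (l : List (Fin n)) (d : Fin n → Kd), ∑ j, (d j).wt K = N →
    ∃ Φ : (Fin n → ℂ) → ℂ,
      AnalyticOnNhd ℂ Φ {s : Fin n → ℂ | ∀ i, -(K:ℝ) < (s i).re ∧ (s i).re < 1 / n} ∧
      ∀ s : Fin n → ℂ, (∀ i, 0 < (s i).re ∧ (s i).re < 1 / n) → Φ s = Lam (pderivList n l H) d s := by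
  intro N
  induction N using Nat.strong_induction_on with
  | _ N ih =>
  intro l d hN
  have hc := fun l => pderivList_contDiff n H hsmooth l
  by_cases h0 : ∀ i, (d i).wt K = 0
  · refine ⟨Lam (pderivList n l H) d, ?_, fun s _ => rfl⟩
    intro s hs
    refine Lam_analyticAt hn _ (hc l).continuous (hdecay l) d s (fun i => (hs i).2) ?_
    intro i hi
    have h0i := h0 i
    have hsi := (hs i).1
    cases hdi : d i with
    | one => rw [hdi] at h0i; simp [Kd.wt] at h0i
    | chi m =>
      rw [hdi] at h0i
      simp only [Kd.wt] at h0i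
      have hm : K ≤ m := by omega
      have hm' : (K:ℝ) ≤ m := by exact_mod_cast hm
      simp only [Kd.ex]
      exact ⟨by omega, by linarith⟩
    | dchi m => rw [hdi] at hi; exact absurd hi (by simp [Kd.nz])
    | osc => rw [hdi] at hi; exact absurd hi (by simp [Kd.nz])
  · push Not at h0
    obtain ⟨i, hi⟩ := h0
    cases hdi : d i with
    | one =>
      obtain ⟨Φ1, a1, e1⟩ := ih _ (hN ▸ wt_update K d i (Kd.chi 0) (by rw [hdi]; simp [Kd.wt])) l _ rfl
      obtain ⟨Φ2, a2, e2⟩ := ih _ (hN ▸ wt_update K d i Kd.osc (by rw [hdi]; simp [Kd.wt])) l _ rfl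
      refine ⟨fun s => Φ1 s + Φ2 s, a1.add a2, fun s hs => ?_⟩
      simp only
      rw [e1 s hs, e2 s hs, ← Lam_split hn _ (hc l).continuous (hdecay l) d s hs i hdi]
    | chi m =>
      have hm : m < K := by rw [hdi] at hi; simp only [Kd.wt] at hi; omega
      obtain ⟨Φ1, a1, e1⟩ := ih _ (hN ▸ wt_update K d i (Kd.chi (m+1))
        (by rw [hdi]; simp only [Kd.wt]; omega)) (i :: l) _ rfl
      obtain ⟨Φ2, a2, e2⟩ := ih _ (hN ▸ wt_update K d i (Kd.dchi (m+1))
        (by rw [hdi]; simp only [Kd.wt]; omega)) l _ rfl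
      refine ⟨fun s => Φ1 s + Φ2 s, a1.add a2, fun s hs => ?_⟩
      simp only
      rw [e1 s hs, e2 s hs]
      exact (Lam_parts hn _ (hc l) (hdecay l) i (hc (i :: l)).continuous (hdecay (i :: l))
        d s hs m hdi).symm
    | dchi m => rw [hdi] at hi; simp [Kd.wt] at hi
    | osc => rw [hdi] at hi; simp [Kd.wt] at hi

lemma strip_open {n : ℕ} (a b : ℝ) : IsOpen {s : Fin n → ℂ | ∀ i, a < (s i).re ∧ (s i).re < b} := by
  simp only [Set.ofPred_forall]
  refine isOpen_iInter_of_finite fun i => ?_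
  have hc : Continuous fun s : Fin n → ℂ => (s i).re :=
    Complex.continuous_re.comp (continuous_apply i)
  exact (isOpen_lt continuous_const hc).inter (isOpen_lt hc continuous_const)

lemma strip_preconnected {n : ℕ} (a b : ℝ) :
    IsPreconnected {s : Fin n → ℂ | ∀ i, a < (s i).re ∧ (s i).re < b} := by
  have : {s : Fin n → ℂ | ∀ i, a < (s i).re ∧ (s i).re < b} =
      Set.pi Set.univ (fun _ => Complex.re ⁻¹' (Set.Ioo a b)) := by
    ext s; simp
  rw [this]
  exact (convex_pi fun i _ => (convex_Ioo a b).linear_preimage Complex.reLm).isPreconnected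

/-- let `H : (ℝ_{≥0})^n → ℂ` be `C^∞` with all partial derivatives of
sufficient decay at infinity. Then
`Λ(H,s) = (∏ 1/Γ(s_i)) ∫_{(ℝ_{≥0})^n} H(y) ∏ y_i^{s_i-1} dy` converges absolutely for
`0 < Re s_i < 1/n` and extends analytically to `{s : Re s_i < 1/n ∀ i}`. -/
theorem mellin_quadrant_analytic_continuation
    (n : ℕ) (hn : 0 < n) (H : (Fin n → ℝ) → ℂ)
    (hsmooth : ContDiff ℝ (⊤ : ℕ∞) H)
    (hdecay : ∀ l : List (Fin n), SufficientDecayOn n (Quadrant n) (pderivList n l H)) :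
    ∃ Φ : (Fin n → ℂ) → ℂ,
      AnalyticOnNhd ℂ Φ {s : Fin n → ℂ | ∀ i, (s i).re < 1 / n} ∧
      ∀ s : Fin n → ℂ, (∀ i, 0 < (s i).re ∧ (s i).re < 1 / n) →
        MeasureTheory.IntegrableOn
          (fun y : Fin n → ℝ => H y * ∏ i, ((y i : ℂ) ^ (s i - 1))) (Quadrant n) ∧
        Φ s = (∏ i, (Complex.Gamma (s i))⁻¹) *
            ∫ y in Quadrant n, H y * ∏ i, ((y i : ℂ) ^ (s i - 1)) := by
  have hn' : (0:ℝ) < 1 / n := by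
    have : (0:ℝ) < n := by exact_mod_cast hn
    positivity
  have hext := fun K : ℕ => exists_ext hn H hsmooth hdecay (K+1) (Nat.succ_pos K) _ [] (fun _ => Kd.one) rfl
  choose Φ hA hE using hext
  -- all the extensions agree
  have hagree : ∀ K K' : ℕ, K ≤ K' → ∀ s : Fin n → ℂ,
      (∀ i, -((K + 1 : ℕ):ℝ) < (s i).re ∧ (s i).re < 1 / n) → Φ K s = Φ K' s := by
    intro K K' hKK s hs
    have hcast : ((K + 1 : ℕ) : ℝ) ≤ ((K' + 1 : ℕ) : ℝ) := by exact_mod_cast Nat.succ_le_succ hKK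
    have hA' : AnalyticOnNhd ℂ (Φ K')
        {s : Fin n → ℂ | ∀ i, -((K + 1 : ℕ):ℝ) < (s i).re ∧ (s i).re < 1 / n} :=
      (hA K').mono fun s hs i => ⟨by linarith [(hs i).1], (hs i).2⟩
    let z₀ : Fin n → ℂ := fun _ => ((1 / n / 2 : ℝ) : ℂ)
    have hz₀ : z₀ ∈ {s : Fin n → ℂ | ∀ i, 0 < (s i).re ∧ (s i).re < 1 / n} := by
      intro i
      simp only [z₀, Complex.ofReal_re]
      constructor <;> linarith
    have hz₁ : z₀ ∈ {s : Fin n → ℂ | ∀ i, -((K + 1 : ℕ):ℝ) < (s i).re ∧ (s i).re < 1 / n} := by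
      intro i
      have := hz₀ i
      have h0 : (0:ℝ) ≤ ((K + 1 : ℕ):ℝ) := Nat.cast_nonneg _
      exact ⟨by linarith [this.1], this.2⟩
    refine (hA K).eqOn_of_preconnected_of_eventuallyEq hA' (strip_preconnected _ _) hz₁ ?_ hs
    filter_upwards [(strip_open 0 (1 / n : ℝ)).mem_nhds hz₀] with w hw
    rw [hE K w hw, hE K' w hw]
  -- choice of strip
  have hidx : ∀ s : Fin n → ℂ, ∃ K : ℕ, ∀ i, -((K + 1 : ℕ):ℝ) < (s i).re := by
    intro s
    obtain ⟨K, hK⟩ := exists_nat_gt ‖s‖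
    refine ⟨K, fun i => ?_⟩
    have h1 : |(s i).re| ≤ ‖s‖ := (Complex.abs_re_le_norm _).trans (norm_le_pi_norm s i)
    have h2 := neg_abs_le (s i).re
    push_cast
    linarith
  choose κ hκ using hidx
  have hval : ∀ (K : ℕ) (s : Fin n → ℂ),
      (∀ i, -((K + 1 : ℕ):ℝ) < (s i).re ∧ (s i).re < 1 / n) → Φ (κ s) s = Φ K s := by
    intro K s hs
    rcases le_total (κ s) K with h | h
    · exact hagree _ _ h s fun i => ⟨hκ s i, (hs i).2⟩
    · exact (hagree _ _ h s hs).symm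
  refine ⟨fun s => Φ (κ s) s, ?_, ?_⟩
  · intro s hs
    have hmem' : s ∈ {t : Fin n → ℂ | ∀ i, -((κ s + 1 : ℕ):ℝ) < (t i).re ∧ (t i).re < 1 / n} :=
      fun i => ⟨hκ s i, hs i⟩
    refine (hA (κ s) s hmem').congr ?_
    filter_upwards [(strip_open (n := n) (-((κ s + 1 : ℕ):ℝ)) (1 / n)).mem_nhds hmem'] with t ht
    exact (hval _ t ht).symm
  · intro s hs
    have hker : ∀ y : Fin n → ℝ, ∏ i, (Kd.one).ker0 (s i) (y i) = ∏ i, ((y i : ℂ) ^ (s i - 1)) := by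
      intro y
      simp [Kd.ker0, Kd.cf, Kd.ex]
    have hint := ker0_int' hn H hsmooth.continuous (hdecay []) (fun _ => Kd.one) s hs
    simp only [hker] at hint
    refine ⟨?_, ?_⟩
    · rw [IntegrableOn, restrict_quadrant]
      exact hint
    · simp only
      rw [hE (κ s) s hs, Lam_eq, restrict_quadrant]
      simp only [hker, Kd.ex, Nat.cast_zero, add_zero, pderivList]
end

section
/- Let H : (ℝ_{≥0})^n → ℂ be C^∞ with all partial derivatives of sufficient decay at infinity, k = (k_1,…,k_n) ∈ ℕ^n, and I ⊂ {1,…,n}. Suppose ∂^k H vanishes identically on each hyperplane {y_i = 0} for i ∈ I. Then, with Λ(H,s) = (∏_i 1/Γ(s_i)) ∫_{(ℝ_{≥0})^n} H(y) ∏_i y_i^{s_i−1} dy_i (analytically continued), one has lim_{s → −k} (∏_{i∈I} 1/(s_i + k_i)) Λ(H, s) = ∫_{(ℝ_{≥0})^I} ∂^k H(y_I, 0_{I^c}) ∏_{i∈I} dy_i/y_i, where (y_I, 0_{I^c}) denotes the point with coordinates y_i for i ∈ I and 0 for i ∉ I. -/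
open scoped BigOperators

/-- The multi-index `k = (k_1,…,k_n)` as a list of directions, so that
`pderivList (multiIndexList k)` is `∂^k = ∏ (-∂/∂y_i)^{k_i}`. -/
def multiIndexList (n : ℕ) (k : Fin n → ℕ) : List (Fin n) :=
  (List.finRange n).flatMap fun i => List.replicate (k i) i
namespace MellinAux
open MeasureTheory Set

/-- The half line measure. -/
noncomputable abbrev nu : Measure ℝ := volume.restrict (Ioi (0:ℝ))

/-- Lebesgue measure on the open positive quadrant, as a product. -/
noncomputable abbrev PP (n : ℕ) : Measure (Fin n → ℝ) := Measure.pi fun _ => nu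

/-- piecewise power weight -/
noncomputable def om (p q : ℝ) (y : ℝ) : ℝ := if y < 1 then y ^ p else y ^ q

lemma om_nonneg {p q y : ℝ} (hy : 0 < y) : 0 ≤ om p q y := by
  unfold om; split_ifs <;> positivity

lemma om_measurable (p q : ℝ) : Measurable (om p q) := by
  unfold om
  exact Measurable.ite measurableSet_Iio (by fun_prop) (by fun_prop)

lemma om_integrable {p q : ℝ} (hp : -1 < p) (hq : q < -1) : Integrable (om p q) nu := by
  have h1 : IntegrableOn (om p q) (Ioc 0 1) := by
    have h := (intervalIntegral.intervalIntegrable_rpow' (a := 0) (b := 1) hp).1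
    have h2 : IntegrableOn (om p q) (Ioo 0 1) := by
      refine (h.mono_set Ioo_subset_Ioc_self).congr_fun ?_ measurableSet_Ioo
      intro x hx
      simp [om, hx.2]
    exact h2.congr_set_ae Ioo_ae_eq_Ioc.symm
  have h2 : IntegrableOn (om p q) (Ioi 1) := by
    refine (integrableOn_Ioi_rpow_of_lt hq one_pos).congr_fun ?_ measurableSet_Ioi
    intro x hx
    simp [om, not_lt.2 (le_of_lt (mem_Ioi.1 hx))]
  have := h1.union h2
  rwa [Ioc_union_Ioi_eq_Ioi zero_le_one] at this

lemma PP_pos (n : ℕ) : ∀ᵐ y ∂(PP n), ∀ i, 0 < y i := by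
  rw [ae_all_iff]
  intro i
  have h : ∀ᵐ x ∂nu, 0 < x := ae_restrict_mem measurableSet_Ioi
  exact (Measure.quasiMeasurePreserving_eval (μ := fun _ : Fin n => nu) i).ae h

lemma amgm {κ : Type*} [Fintype κ] [DecidableEq κ] (h : κ → ℝ) (θ : κ → ℝ) (hh : ∀ k, 0 < h k)
    (h0 : ∀ k, 0 ≤ θ k) (h1 : ∑ k, θ k = 1) :
    ∏ k, h k ^ (1 - θ k) ≤ ∑ k, ∏ l ∈ Finset.univ.erase k, h l := by
  have hz : ∀ k, 0 < ∏ l ∈ Finset.univ.erase k, h l := fun k => Finset.prod_pos fun l _ => hh l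
  have key := Real.geom_mean_le_arith_mean_weighted Finset.univ θ
    (fun k => ∏ l ∈ Finset.univ.erase k, h l) (fun k _ => h0 k) h1 (fun k _ => (hz k).le)
  have e : ∏ k, h k ^ (1 - θ k) = ∏ k, (∏ l ∈ Finset.univ.erase k, h l) ^ θ k := by
    set Q := ∏ k, h k with hQ
    have hQ0 : 0 < Q := Finset.prod_pos fun l _ => hh l
    have e1 : ∀ k, (∏ l ∈ Finset.univ.erase k, h l) = Q / h k := by
      intro k
      rw [eq_div_iff (hh k).ne', mul_comm, hQ, Finset.mul_prod_erase _ _ (Finset.mem_univ k)]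
    simp_rw [e1, Real.div_rpow hQ0.le (hh _).le, Finset.prod_div_distrib,
      ← Real.rpow_sum_of_pos hQ0, h1, Real.rpow_one, Real.rpow_sub (hh _), Finset.prod_div_distrib,
      Real.rpow_one]
    rfl
  rw [e]
  refine key.trans (Finset.sum_le_sum fun k _ => ?_)
  have : θ k ≤ 1 := by
    rw [← h1]; exact Finset.single_le_sum (fun k _ => h0 k) (Finset.mem_univ k)
  exact mul_le_of_le_one_left (hz k).le this

lemma slice_bound {r : ℝ} (hr : 1 < r) {p : ℝ} (hp : -1 < p) {a : ℝ} (ha : a ≠ 0) :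
    ∃ K : ℝ, ∀ c : ℝ, Integrable (fun x => (1 + |a * x + c|) ^ (-r) * om p 0 x) nu ∧
      ∫ x, (1 + |a * x + c|) ^ (-r) * om p 0 x ∂nu ≤ K := by
  have hb : Integrable (fun x : ℝ => (1 + ‖x‖) ^ (-r)) :=
    integrable_one_add_norm (by simpa using hr)
  have hw := om_integrable hp (show (-2:ℝ) < -1 by norm_num)
  refine ⟨∫ x, om p (-2) x ∂nu + |a⁻¹| • ∫ x : ℝ, (1 + ‖x‖) ^ (-r), fun c => ?_⟩
  have hbc : Integrable (fun x : ℝ => (1 + |a * x + c|) ^ (-r)) := by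
    have := (hb.comp_add_right c).comp_mul_left' ha
    simpa [Real.norm_eq_abs] using this
  have h_integral : ∫ x : ℝ, (1 + |a * x + c|) ^ (-r) = |a⁻¹| • ∫ x : ℝ, (1 + ‖x‖) ^ (-r) := by
    rw [← integral_add_right_eq_self (fun x : ℝ => (1 + ‖x‖) ^ (-r)) c,
      ← Measure.integral_comp_mul_left (fun x : ℝ => (1 + ‖x + c‖) ^ (-r)) a]
    simp [Real.norm_eq_abs]
  have hsum : Integrable (fun x => om p (-2) x + (1 + |a * x + c|) ^ (-r)) nu :=
    hw.add hbc.integrableOn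
  have hpt : ∀ x > 0, (1 + |a * x + c|) ^ (-r) * om p 0 x ≤
      om p (-2) x + (1 + |a * x + c|) ^ (-r) := by
    intro x hx
    have h1 : (1 + |a * x + c|) ^ (-r) ≤ 1 :=
      Real.rpow_le_one_of_one_le_of_nonpos (by linarith [abs_nonneg (a * x + c)]) (by linarith)
    have h0 : 0 ≤ (1 + |a * x + c|) ^ (-r) := by positivity
    have h2 : 0 ≤ om p (-2) x := om_nonneg hx
    by_cases hx1 : x < 1
    · have e1 : om p 0 x = x ^ p := by simp [om, hx1]
      have e2 : om p (-2) x = x ^ p := by simp [om, hx1]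
      rw [e1, e2]
      have : 0 ≤ x ^ p := by positivity
      nlinarith
    · have e1 : om p 0 x = 1 := by simp [om, hx1]
      rw [e1]; linarith
  have hmeas : AEStronglyMeasurable (fun x => (1 + |a * x + c|) ^ (-r) * om p 0 x) nu := by
    have := om_measurable p 0
    apply Measurable.aestronglyMeasurable
    fun_prop
  have hi : Integrable (fun x => (1 + |a * x + c|) ^ (-r) * om p 0 x) nu := by
    refine hsum.mono' hmeas ?_
    filter_upwards [ae_restrict_mem measurableSet_Ioi] with x hx
    rw [Real.norm_of_nonneg (mul_nonneg (by positivity) (om_nonneg hx))]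
    exact hpt x hx
  refine ⟨hi, ?_⟩
  calc _ ≤ ∫ x, om p (-2) x + (1 + |a * x + c|) ^ (-r) ∂nu := by
        refine integral_mono_ae hi hsum ?_
        filter_upwards [ae_restrict_mem measurableSet_Ioi] with x hx
        exact hpt x hx
    _ = ∫ x, om p (-2) x ∂nu + ∫ x, (1 + |a * x + c|) ^ (-r) ∂nu := by
        rw [integral_add hw hbc.integrableOn]
    _ ≤ _ := by
        rw [← h_integral]
        refine add_le_add le_rfl ?_
        exact setIntegral_le_integral hbc (Filter.Eventually.of_forall fun x => by
          simp only [Pi.zero_apply]; positivity)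

lemma integrable_insertNth_iff {E : Type*} [NormedAddCommGroup E] {m : ℕ} (i : Fin (m+1))
    (f : (Fin (m+1) → ℝ) → E) :
    Integrable f (PP (m+1)) ↔
      Integrable (fun z : ℝ × (Fin m → ℝ) => f (i.insertNth z.1 z.2)) (nu.prod (PP m)) := by
  have h := (measurePreserving_piFinSuccAbove (fun _ : Fin (m+1) => nu) i).symm
  exact (h.integrable_comp_emb (MeasurableEquiv.measurableEmbedding _)).symm

lemma integral_insertNth {E : Type*} [NormedAddCommGroup E] [NormedSpace ℝ E] {m : ℕ}
    (i : Fin (m+1)) (f : (Fin (m+1) → ℝ) → E) :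
    ∫ y, f y ∂(PP (m+1)) =
      ∫ z : ℝ × (Fin m → ℝ), f (i.insertNth z.1 z.2) ∂(nu.prod (PP m)) := by
  have h := (measurePreserving_piFinSuccAbove (fun _ : Fin (m+1) => nu) i).symm
  exact (h.integral_comp (MeasurableEquiv.measurableEmbedding _) f).symm

lemma term_integrable {m : ℕ} (j : Fin (m+1)) {r : ℝ} (hr : 1 < r) (L : Fin (m+1) → ℝ)
    (hL : ∀ j, L j ≠ 0) (p q : Fin (m+1) → ℝ) (hp : ∀ i, -1 < p i) (hq : ∀ i, q i < -1) :
    Integrable (fun y : Fin (m+1) → ℝ => (1 + |∑ l, L l * y l|) ^ (-r) * om (p j) 0 (y j) *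
      ∏ i ∈ Finset.univ.erase j, om (p i) (q i) (y i)) (PP (m+1)) := by
  rw [integrable_insertNth_iff j]
  have hprod : ∀ (x : ℝ) (z : Fin m → ℝ), ∏ i ∈ Finset.univ.erase j, om (p i) (q i)
      ((j.insertNth x z : Fin (m+1) → ℝ) i)
      = ∏ i, om (p (j.succAbove i)) (q (j.succAbove i)) (z i) := by
    intro x z
    have : Finset.univ.erase j = Finset.univ.map j.succAboveEmb := by
      ext a
      simp only [Finset.mem_erase, Finset.mem_univ, and_true, Finset.mem_map, true_and]
      exact ⟨fun h => Fin.exists_succAbove_eq h, by rintro ⟨b, rfl⟩; exact Fin.succAbove_ne _ _⟩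
    rw [this, Finset.prod_map]
    simp
  simp only [hprod, Fin.sum_univ_succAbove _ j, Fin.insertNth_apply_same,
    Fin.insertNth_apply_succAbove]
  obtain ⟨K, hK⟩ := slice_bound hr (hp j) (hL j)
  set Q : (Fin m → ℝ) → ℝ := fun z => ∏ i, om (p (j.succAbove i)) (q (j.succAbove i)) (z i) with hQ
  have hQi : Integrable Q (PP m) := Integrable.fintype_prod (μ := fun _ => nu)
    (f := fun i => om (p (j.succAbove i)) (q (j.succAbove i)))
    (fun i => om_integrable (hp _) (hq _))
  have hQm : Measurable Q := Finset.measurable_prod _ fun i _ =>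
    (om_measurable _ _).comp (measurable_pi_apply i)
  have hm : AEStronglyMeasurable (fun z : ℝ × (Fin m → ℝ) =>
      (1 + |L j * z.1 + ∑ l, L (j.succAbove l) * z.2 l|) ^ (-r) * om (p j) 0 z.1 * Q z.2)
      (nu.prod (PP m)) := by
    have := om_measurable (p j) 0
    apply Measurable.aestronglyMeasurable
    fun_prop
  rw [integrable_prod_iff' hm]
  constructor
  · filter_upwards with z
    exact (hK (∑ l, L (j.succAbove l) * z l)).1.mul_const _
  · refine Integrable.mono' (hQi.norm.const_mul K) hm.norm.prod_swap.integral_prod_right' ?_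
    filter_upwards with z
    rw [Real.norm_of_nonneg (integral_nonneg fun _ => norm_nonneg _)]
    simp_rw [norm_mul _ (Q z)]
    rw [integral_mul_const]
    refine mul_le_mul_of_nonneg_right ?_ (norm_nonneg _)
    refine le_trans (le_of_eq ?_) (hK (∑ l, L (j.succAbove l) * z l)).2
    apply integral_congr_ae
    filter_upwards [ae_restrict_mem measurableSet_Ioi] with x hx
    exact Real.norm_of_nonneg (mul_nonneg (by positivity) (om_nonneg hx))

lemma om_split {p q θ : ℝ} {y : ℝ} (hy : 0 < y) (hθ : θ < 1) :
    om p q y = (om 0 (q / (1 - θ)) y) ^ (1 - θ) * om p 0 y := by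
  have : 1 - θ ≠ 0 := by linarith
  by_cases h : y < 1
  · simp [om, h]
  · simp [om, h, ← Real.rpow_mul hy.le, div_mul_cancel₀ _ this]

lemma om_mul {p q : ℝ} {y : ℝ} : om 0 q y * om p 0 y = om p q y := by
  by_cases h : y < 1 <;> simp [om, h]

/-- Basic integrability lemma. -/
lemma basic_integrable {m : ℕ} (L : Fin (m+1) → ℝ)
    (hL : ∀ j, L j ≠ 0) (p q : Fin (m+1) → ℝ) (hp : ∀ i, -1 < p i)
    (hq : ∀ i, q i + 1 < 1 / ((m+1 : ℕ) : ℝ)) :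
    Integrable (fun y : Fin (m+1) → ℝ => (1 + |∑ l, L l * y l|)⁻¹ *
      ∏ i, om (p i) (q i) (y i)) (PP (m+1)) := by
  set N : ℝ := ((m+1 : ℕ) : ℝ) with hN
  have hN1 : 1 ≤ N := by rw [hN]; exact_mod_cast Nat.le_add_left 1 m
  have hN0 : 0 < N := by linarith
  have hNi : 1 / N ≤ 1 := by rw [div_le_one hN0]; exact hN1
  have hNp : 0 < 1 / N := by positivity
  set θ : Fin (m+1) → ℝ := fun i => (max (q i + 1) 0 + 1 / N) / 2 with hθ
  have hmx : ∀ i, max (q i + 1) 0 < 1 / N := fun i => max_lt (hq i) hNp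
  have θpos : ∀ i, 0 < θ i := fun i => by
    have := le_max_right (q i + 1) 0
    simp only [hθ]; linarith
  have θlt : ∀ i, θ i < 1 / N := fun i => by
    have := hmx i
    simp only [hθ]; linarith
  have θq : ∀ i, q i + 1 < θ i := fun i => by
    have := hmx i
    have := le_max_left (q i + 1) 0
    simp only [hθ]; linarith
  have hsum : ∑ i, θ i < 1 := by
    calc ∑ i, θ i < ∑ i : Fin (m+1), 1 / N :=
          Finset.sum_lt_sum_of_nonempty Finset.univ_nonempty fun i _ => θlt i
      _ = 1 := by simp [hN]; field_simp
  have hsum0 : 0 < ∑ i, θ i := Finset.sum_pos (fun i _ => θpos i) Finset.univ_nonempty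
  set r : ℝ := 1 / (∑ i, θ i) with hr
  have hr1 : 1 < r := by rw [hr, lt_div_iff₀ hsum0]; linarith
  set q' : Fin (m+1) → ℝ := fun i => q i / (1 - θ i) with hq'
  have hq'1 : ∀ i, q' i < -1 := fun i => by
    have h1 : 0 < 1 - θ i := by linarith [θlt i]
    simp only [hq']
    rw [div_lt_iff₀ h1]; linarith [θq i]
  have hb : Integrable (fun y : Fin (m+1) → ℝ => ∏ i, om (p i) (q' i) (y i) +
      ∑ j, (1 + |∑ l, L l * y l|) ^ (-r) * om (p j) 0 (y j) *
      ∏ i ∈ Finset.univ.erase j, om (p i) (q' i) (y i)) (PP (m+1)) := by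
    refine Integrable.add ?_ ?_
    · exact Integrable.fintype_prod (μ := fun _ => nu)
        (f := fun i => om (p i) (q' i)) (fun i => om_integrable (hp _) (hq'1 _))
    · exact integrable_finsetSum _ fun j _ => term_integrable j hr1 L hL p q' hp hq'1
  have hm : AEStronglyMeasurable (fun y : Fin (m+1) → ℝ => (1 + |∑ l, L l * y l|)⁻¹ *
      ∏ i, om (p i) (q i) (y i)) (PP (m+1)) := by
    have h2 : Measurable fun y : Fin (m+1) → ℝ => ∏ i, om (p i) (q i) (y i) :=
      Finset.measurable_prod _ fun i _ => (om_measurable _ _).comp (measurable_pi_apply i)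
    apply Measurable.aestronglyMeasurable
    fun_prop
  refine hb.mono' hm ?_
  filter_upwards [PP_pos (m+1)] with y hy
  rw [Real.norm_of_nonneg (mul_nonneg (by positivity)
    (Finset.prod_nonneg fun i _ => om_nonneg (hy i)))]
  set X := |∑ l, L l * y l| with hX
  have hX0 : 0 ≤ X := abs_nonneg _
  have key := amgm (κ := Option (Fin (m+1)))
    (fun k => k.elim ((1 + X) ^ (-r)) (fun i => om 0 (q' i) (y i)))
    (fun k => k.elim (1 - ∑ i, θ i) θ) ?_ ?_ ?_
  rotate_left
  · rintro (_ | i)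
    · simp only [Option.elim]; positivity
    · have := hy i
      simp only [Option.elim, om]; split_ifs <;> positivity
  · rintro (_ | i)
    · simp only [Option.elim]; linarith
    · exact (θpos i).le
  · simp [Fintype.sum_option]
  rw [Fintype.prod_option, Fintype.sum_option] at key
  simp only [Option.elim, sub_sub_cancel] at key
  rw [← Real.rpow_mul (by positivity), show -r * ∑ i, θ i = -1 by rw [hr]; field_simp,
    Real.rpow_neg_one] at key
  have hv : 0 ≤ ∏ i, om (p i) 0 (y i) := Finset.prod_nonneg fun i _ => om_nonneg (hy i)
  have e1 : ∏ i, om (p i) (q i) (y i) =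
      (∏ i, om 0 (q' i) (y i) ^ (1 - θ i)) * ∏ i, om (p i) 0 (y i) := by
    rw [← Finset.prod_mul_distrib]
    exact Finset.prod_congr rfl fun i _ => om_split (hy i) (by linarith [θlt i])
  rw [e1, ← mul_assoc]
  refine (mul_le_mul_of_nonneg_right key hv).trans (le_of_eq ?_)
  rw [add_mul, Finset.sum_mul]
  congr 1
  · have : (Finset.univ.erase (none : Option (Fin (m+1)))) = Finset.univ.map Function.Embedding.some := by
      ext (_ | a) <;> simp
    rw [this, Finset.prod_map, ← Finset.prod_mul_distrib]
    exact Finset.prod_congr rfl fun i _ => om_mul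
  · refine Finset.sum_congr rfl fun j _ => ?_
    have : (Finset.univ.erase (some j : Option (Fin (m+1)))) =
        insert none ((Finset.univ.erase j).map Function.Embedding.some) := by
      ext (_ | a) <;> simp
    rw [this, Finset.prod_insert (by simp), Finset.prod_map,
      ← Finset.mul_prod_erase Finset.univ (fun i => om (p i) 0 (y i)) (Finset.mem_univ j)]
    simp only [Function.Embedding.some_apply]
    rw [show ∏ i ∈ Finset.univ.erase j, om (p i) (q' i) (y i) =
      (∏ i ∈ Finset.univ.erase j, om 0 (q' i) (y i)) * ∏ i ∈ Finset.univ.erase j, om (p i) 0 (y i)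
      by rw [← Finset.prod_mul_distrib]; exact Finset.prod_congr rfl fun i _ => om_mul.symm]
    ring

end MellinAux
namespace MellinAux
open MeasureTheory Set

/-- elementary decaying function -/
noncomputable def dk {n : ℕ} (L y : Fin n → ℝ) : ℝ := (1 + |∑ l, L l * y l|)⁻¹

/-- sum of elementary decaying functions -/
noncomputable def DD {n : ℕ} (T : List (Fin n → ℝ)) (y : Fin n → ℝ) : ℝ :=
  (T.map (fun L => dk L y)).sum

lemma dk_nonneg {n : ℕ} (L y : Fin n → ℝ) : 0 ≤ dk L y := by unfold dk; positivity

lemma dk_le_one {n : ℕ} (L y : Fin n → ℝ) : dk L y ≤ 1 :=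
  inv_le_one_of_one_le₀ (by linarith [abs_nonneg (∑ l, L l * y l)])

lemma DD_nil {n : ℕ} (y : Fin n → ℝ) : DD [] y = 0 := by simp [DD]

lemma DD_cons {n : ℕ} (L : Fin n → ℝ) (T : List (Fin n → ℝ)) (y : Fin n → ℝ) :
    DD (L :: T) y = dk L y + DD T y := by simp [DD]

lemma DD_append {n : ℕ} (S T : List (Fin n → ℝ)) (y : Fin n → ℝ) :
    DD (S ++ T) y = DD S y + DD T y := by simp [DD]

lemma DD_nonneg {n : ℕ} (T : List (Fin n → ℝ)) (y : Fin n → ℝ) : 0 ≤ DD T y := by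
  induction T with
  | nil => simp [DD_nil]
  | cons L T ih => rw [DD_cons]; linarith [dk_nonneg L y]

lemma DD_le {n : ℕ} (T : List (Fin n → ℝ)) (y : Fin n → ℝ) : DD T y ≤ T.length := by
  induction T with
  | nil => simp [DD_nil]
  | cons L T ih => rw [DD_cons]; push_cast [List.length_cons]; linarith [dk_le_one L y]

lemma sum_update {n : ℕ} (L y : Fin n → ℝ) (i : Fin n) (t : ℝ) :
    ∑ l, L l * Function.update y i t l = ∑ l, L l * y l + L i * (t - y i) := by
  rw [← Finset.add_sum_erase _ _ (Finset.mem_univ i),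
    ← Finset.add_sum_erase _ (fun l => L l * y l) (Finset.mem_univ i)]
  rw [Finset.sum_congr rfl (g := fun l => L l * y l) (fun l hl => by
    rw [Function.update_of_ne (Finset.ne_of_mem_erase hl)])]
  simp; ring

lemma dk_update {n : ℕ} (L y : Fin n → ℝ) (i : Fin n) (t : ℝ) :
    dk L (Function.update y i t) ≤ (1 + |L i|) * (1 + |y i - t|) * dk L y := by
  unfold dk
  rw [sum_update]
  set a := ∑ l, L l * y l
  have h1 : |a| ≤ |a + L i * (t - y i)| + |L i| * |y i - t| := by
    have := abs_sub_abs_le_abs_sub a (a + L i * (t - y i))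
    rw [show a - (a + L i * (t - y i)) = L i * (y i - t) by ring, abs_mul] at this
    linarith
  set b := |a + L i * (t - y i)|
  have hb : 0 ≤ b := abs_nonneg _
  have ha : 0 ≤ |a| := abs_nonneg _
  have hl : 0 ≤ |L i| := abs_nonneg _
  have hd : 0 ≤ |y i - t| := abs_nonneg _
  rw [← div_eq_mul_inv, le_div_iff₀ (by positivity), inv_mul_le_iff₀ (by positivity)]
  nlinarith [mul_nonneg hl hd, mul_nonneg hb hl, mul_nonneg hb hd, mul_nonneg hb (mul_nonneg hl hd)]

lemma DD_update {n : ℕ} (T : List (Fin n → ℝ)) (i : Fin n) :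
    ∃ K : ℝ, 0 ≤ K ∧ ∀ y t, DD T (Function.update y i t) ≤ K * (1 + |y i - t|) * DD T y := by
  induction T with
  | nil => exact ⟨0, le_rfl, by simp [DD_nil]⟩
  | cons L T ih =>
    obtain ⟨K, hK, h⟩ := ih
    refine ⟨K + (1 + |L i|), by positivity, fun y t => ?_⟩
    rw [DD_cons, DD_cons]
    have h1 := h y t
    have h2 := dk_update L y i t
    have h3 := dk_nonneg L y
    have h4 := DD_nonneg T y
    have : 0 ≤ 1 + |y i - t| := by positivity
    have h5 : 0 ≤ K * (1 + |y i - t|) * dk L y := by positivity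
    have h6 : 0 ≤ (1 + |L i|) * (1 + |y i - t|) * DD T y := by positivity
    nlinarith

/-- decay predicate as a bound -/
def Dec (n : ℕ) (F : (Fin n → ℝ) → ℂ) : Prop :=
  ∃ (T : List (Fin n → ℝ)) (C : ℝ), 0 ≤ C ∧ (∀ L ∈ T, ∀ j, L j ≠ 0) ∧
    ∀ y ∈ Quadrant n, ‖F y‖ ≤ C * DD T y

lemma Dec.add' {n : ℕ} {F G H : (Fin n → ℝ) → ℂ} (hF : Dec n F) (hG : Dec n G)
    (h : ∀ y ∈ Quadrant n, ‖H y‖ ≤ ‖F y‖ + ‖G y‖) : Dec n H := by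
  obtain ⟨T, C, hC, hT, hb⟩ := hF
  obtain ⟨T', C', hC', hT', hb'⟩ := hG
  refine ⟨T ++ T', C + C', by positivity, ?_, fun y hy => ?_⟩
  · intro L hL
    rcases List.mem_append.1 hL with h | h
    · exact hT L h
    · exact hT' L h
  · have h1 := hb y hy
    have h2 := hb' y hy
    have h3 := h y hy
    have h4 := DD_nonneg T y
    have h5 := DD_nonneg T' y
    rw [DD_append]
    nlinarith [mul_nonneg hC h5, mul_nonneg hC' h4]

lemma Dec.of_suff {n : ℕ} {F : (Fin n → ℝ) → ℂ} (h : SufficientDecayOn n (Quadrant n) F) :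
    Dec n F := by
  obtain ⟨r, G, L, hL, hb, hs⟩ := h
  choose C hC using hb
  refine ⟨List.ofFn L, ∑ i, |C i|, by positivity, ?_, fun y hy => ?_⟩
  · intro l hl j
    obtain ⟨i, rfl⟩ := (List.mem_ofFn' _ _).1 hl
    exact hL i j
  · rw [hs y hy]
    have : DD (List.ofFn L) y = ∑ i, dk (L i) y := by
      simp [DD, List.map_ofFn, List.sum_ofFn]
    rw [this, Finset.mul_sum]
    refine (norm_sum_le _ _).trans (Finset.sum_le_sum fun i _ => ?_)
    have h1 := hC i y hy
    have h2 : ‖G i y‖ ≤ |C i| * dk (L i) y := by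
      unfold dk
      rw [← div_eq_mul_inv, le_div_iff₀ (by positivity)]
      linarith [le_abs_self (C i)]
    refine h2.trans (mul_le_mul_of_nonneg_right ?_ (dk_nonneg _ _))
    exact Finset.single_le_sum (f := fun i => |C i|) (fun i _ => abs_nonneg _) (Finset.mem_univ i)

/-- The operator `F ↦ e^{-y_i} F|_{y_i = 0}`. -/
noncomputable def EE {n : ℕ} (i : Fin n) (F : (Fin n → ℝ) → ℂ) : (Fin n → ℝ) → ℂ :=
  fun y => (Real.exp (-y i) : ℂ) * F (Function.update y i 0)

/-- smooth with all derivatives decaying -/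
def Nice (n : ℕ) (F : (Fin n → ℝ) → ℂ) : Prop :=
  ContDiff ℝ (⊤ : ℕ∞) F ∧ ∀ l, Dec n (pderivList n l F)

lemma Dec.EE {n : ℕ} {F : (Fin n → ℝ) → ℂ} (i : Fin n) (hF : Dec n F) : Dec n (EE i F) := by
  obtain ⟨T, C, hC, hT, hb⟩ := hF
  obtain ⟨K, hK, hu⟩ := DD_update T i
  refine ⟨T, C * K, by positivity, hT, fun y hy => ?_⟩
  have hyi : 0 ≤ y i := hy i
  have h1 : ‖F (Function.update y i 0)‖ ≤ C * DD T (Function.update y i 0) := by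
    apply hb
    intro j
    by_cases hj : j = i
    · subst hj; simp
    · simpa [hj] using hy j
  have h2 := hu y 0
  rw [sub_zero, abs_of_nonneg hyi] at h2
  have h3 : Real.exp (-y i) * (1 + y i) ≤ 1 := by
    rw [Real.exp_neg, inv_mul_le_iff₀ (Real.exp_pos _)]
    linarith [Real.add_one_le_exp (y i)]
  unfold MellinAux.EE
  rw [norm_mul, Complex.norm_real, Real.norm_of_nonneg (Real.exp_pos _).le]
  have h4 := DD_nonneg T y
  calc Real.exp (-y i) * ‖F (Function.update y i 0)‖
      ≤ Real.exp (-y i) * (C * (K * (1 + y i) * DD T y)) := by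
        refine mul_le_mul_of_nonneg_left (h1.trans ?_) (Real.exp_pos _).le
        exact mul_le_mul_of_nonneg_left h2 hC
    _ = (Real.exp (-y i) * (1 + y i)) * (C * K * DD T y) := by ring
    _ ≤ 1 * (C * K * DD T y) := mul_le_mul_of_nonneg_right h3 (by positivity)
    _ = _ := one_mul _

lemma line_hasDerivAt {n : ℕ} {F : (Fin n → ℝ) → ℂ} (hF : ContDiff ℝ (⊤ : ℕ∞) F) (i : Fin n)
    (y : Fin n → ℝ) (t : ℝ) :
    HasDerivAt (fun x : ℝ => F (Function.update y i x))
      (-(pderivNeg n i F (Function.update y i t))) t := by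
  have hd : DifferentiableAt ℝ F (Function.update y i t) :=
    (hF.differentiable (by simp)).differentiableAt
  have := hd.hasFDerivAt.comp_hasDerivAt t (hasDerivAt_update y i t)
  simp only [pderivNeg, neg_neg]
  exact this

lemma contDiff_pderivNeg {n : ℕ} {F : (Fin n → ℝ) → ℂ} (hF : ContDiff ℝ (⊤ : ℕ∞) F) (i : Fin n) :
    ContDiff ℝ (⊤ : ℕ∞) (pderivNeg n i F) := by
  unfold pderivNeg
  exact ((hF.fderiv_right (by simp)).clm_apply contDiff_const).neg

lemma contDiff_pderivList {n : ℕ} {F : (Fin n → ℝ) → ℂ} (hF : ContDiff ℝ (⊤ : ℕ∞) F)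
    (l : List (Fin n)) : ContDiff ℝ (⊤ : ℕ∞) (pderivList n l F) := by
  induction l with
  | nil => exact hF
  | cons i l ih => exact contDiff_pderivNeg ih i

lemma contDiff_EE {n : ℕ} {F : (Fin n → ℝ) → ℂ} (hF : ContDiff ℝ (⊤ : ℕ∞) F) (i : Fin n) :
    ContDiff ℝ (⊤ : ℕ∞) (EE i F) := by
  unfold EE
  have h1 : ContDiff ℝ (⊤ : ℕ∞) (fun y : Fin n → ℝ => Function.update y i (0:ℝ)) := by
    rw [contDiff_pi]
    intro j
    by_cases h : j = i
    · subst h; simpa using contDiff_const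
    · simpa [h] using contDiff_apply ℝ ℝ j
  have h2 : ContDiff ℝ (⊤ : ℕ∞) (fun y : Fin n → ℝ => (Real.exp (-y i) : ℂ)) := by
    apply Complex.ofRealCLM.contDiff.comp
    exact Real.contDiff_exp.comp (contDiff_apply ℝ ℝ i).neg
  exact h2.mul (hF.comp h1)

lemma pderivNeg_eq {n : ℕ} {F : (Fin n → ℝ) → ℂ} (hF : ContDiff ℝ (⊤ : ℕ∞) F) (i : Fin n)
    (y : Fin n → ℝ) {d : ℂ} (h : HasDerivAt (fun x : ℝ => F (Function.update y i x)) (-d) (y i)) :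
    pderivNeg n i F y = d := by
  have := (line_hasDerivAt hF i y (y i)).unique h
  simpa using this

lemma pderivNeg_EE_same {n : ℕ} {F : (Fin n → ℝ) → ℂ} (hF : ContDiff ℝ (⊤ : ℕ∞) F) (i : Fin n) :
    pderivNeg n i (EE i F) = EE i F := by
  ext y
  apply pderivNeg_eq (contDiff_EE hF i)
  simp only [EE, Function.update_self, Function.update_idem]
  have h : HasDerivAt (fun x : ℝ => Real.exp (-x)) (-Real.exp (-y i)) (y i) := by
    simpa using (hasDerivAt_neg (y i)).exp
  simpa using h.ofReal_comp.mul_const (F (Function.update y i 0))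

lemma pderivNeg_EE_ne {n : ℕ} {F : (Fin n → ℝ) → ℂ} (hF : ContDiff ℝ (⊤ : ℕ∞) F) {i j : Fin n}
    (hij : j ≠ i) : pderivNeg n j (EE i F) = EE i (pderivNeg n j F) := by
  ext y
  apply pderivNeg_eq (contDiff_EE hF i)
  simp only [EE, Function.update_of_ne hij.symm]
  have h := line_hasDerivAt hF j (Function.update y i 0) (y j)
  have e : Function.update (Function.update y i 0) j (y j) = Function.update y i 0 := by
    rw [Function.update_eq_self_iff]; simp [hij]
  rw [e] at h
  have := h.const_mul (Real.exp (-y i) : ℂ)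
  simp only [mul_neg] at this
  simp only [Function.update_comm hij] at this ⊢
  exact this

lemma pderivList_EE {n : ℕ} {F : (Fin n → ℝ) → ℂ} (hF : ContDiff ℝ (⊤ : ℕ∞) F) (i : Fin n)
    (l : List (Fin n)) : ∃ l', pderivList n l (EE i F) = EE i (pderivList n l' F) := by
  induction l with
  | nil => exact ⟨[], rfl⟩
  | cons j l ih =>
    obtain ⟨l', h⟩ := ih
    by_cases hj : j = i
    · subst hj
      exact ⟨l', by rw [pderivList, h, pderivNeg_EE_same (contDiff_pderivList hF l')]⟩
    · exact ⟨j :: l', by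
        rw [pderivList, h, pderivNeg_EE_ne (contDiff_pderivList hF l') hj, pderivList]⟩

lemma Nice.EE {n : ℕ} {F : (Fin n → ℝ) → ℂ} (hF : Nice n F) (i : Fin n) : Nice n (EE i F) := by
  refine ⟨contDiff_EE hF.1 i, fun l => ?_⟩
  obtain ⟨l', h⟩ := pderivList_EE hF.1 i l
  rw [h]
  exact (hF.2 l').EE i

lemma pderivList_append {n : ℕ} (F : (Fin n → ℝ) → ℂ) (l l' : List (Fin n)) :
    pderivList n (l ++ l') F = pderivList n l (pderivList n l' F) := by
  induction l with
  | nil => rfl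
  | cons i l ih => simp only [List.cons_append, pderivList, ih]

lemma Nice.pderivList {n : ℕ} {F : (Fin n → ℝ) → ℂ} (hF : Nice n F) (l : List (Fin n)) :
    Nice n (pderivList n l F) :=
  ⟨contDiff_pderivList hF.1 l, fun l' => by rw [← pderivList_append]; exact hF.2 _⟩

lemma Nice.pderivNeg {n : ℕ} {F : (Fin n → ℝ) → ℂ} (hF : Nice n F) (i : Fin n) :
    Nice n (pderivNeg n i F) := hF.pderivList [i]

lemma pderivNeg_sub {n : ℕ} {F G : (Fin n → ℝ) → ℂ} (hF : ContDiff ℝ (⊤ : ℕ∞) F)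
    (hG : ContDiff ℝ (⊤ : ℕ∞) G) (i : Fin n) :
    pderivNeg n i (F - G) = pderivNeg n i F - pderivNeg n i G := by
  ext y
  have h1 : DifferentiableAt ℝ F y := (hF.differentiable (by simp)).differentiableAt
  have h2 : DifferentiableAt ℝ G y := (hG.differentiable (by simp)).differentiableAt
  simp only [_root_.pderivNeg, Pi.sub_apply]
  rw [fderiv_sub h1 h2]
  simp; ring

lemma pderivList_sub {n : ℕ} {F G : (Fin n → ℝ) → ℂ} (hF : ContDiff ℝ (⊤ : ℕ∞) F)
    (hG : ContDiff ℝ (⊤ : ℕ∞) G) (l : List (Fin n)) :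
    pderivList n l (F - G) = pderivList n l F - pderivList n l G := by
  induction l with
  | nil => rfl
  | cons i l ih =>
    simp only [pderivList]
    rw [ih, pderivNeg_sub (contDiff_pderivList hF l) (contDiff_pderivList hG l)]

lemma Nice.sub {n : ℕ} {F G : (Fin n → ℝ) → ℂ} (hF : Nice n F) (hG : Nice n G) :
    Nice n (F - G) := by
  refine ⟨hF.1.sub hG.1, fun l => ?_⟩
  rw [pderivList_sub hF.1 hG.1]
  exact (hF.2 l).add' (hG.2 l) fun y _ => norm_sub_le _ _

/-- vanishing on a coordinate hyperplane -/
def Van {n : ℕ} (i : Fin n) (F : (Fin n → ℝ) → ℂ) : Prop := ∀ y : Fin n → ℝ, y i = 0 → F y = 0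

lemma Van.pderivNeg {n : ℕ} {F : (Fin n → ℝ) → ℂ} (hF : ContDiff ℝ (⊤ : ℕ∞) F) {i j : Fin n}
    (hij : i ≠ j) (h : Van i F) : Van i (pderivNeg n j F) := by
  intro y hy
  apply pderivNeg_eq hF
  have : (fun x : ℝ => F (Function.update y j x)) = fun _ => 0 := by
    ext x
    apply h
    rw [Function.update_of_ne hij, hy]
  rw [this, neg_zero]
  exact hasDerivAt_const _ _

lemma Van.EE {n : ℕ} {F : (Fin n → ℝ) → ℂ} {i : Fin n} (j : Fin n) (h : Van i F) :
    Van i (EE j F) := by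
  intro y hy
  unfold MellinAux.EE
  rw [h, mul_zero]
  by_cases hij : i = j
  · subst hij; simp
  · simp [hij, hy]

lemma van_sub_EE {n : ℕ} (F : (Fin n → ℝ) → ℂ) (i : Fin n) : Van i (F - EE i F) := by
  intro y hy
  have : Function.update y i 0 = y := by rw [← hy, Function.update_eq_self]
  simp [EE, this, hy]

lemma EE_eq_zero {n : ℕ} {F : (Fin n → ℝ) → ℂ} {i : Fin n} (h : Van i F) : EE i F = 0 := by
  ext y
  simp [EE, h (Function.update y i 0) (by simp)]

lemma van_bound {n : ℕ} (I : Finset (Fin n)) : ∀ F : (Fin n → ℝ) → ℂ, Nice n F →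
    (∀ i ∈ I, Van i F) → ∃ (T : List (Fin n → ℝ)) (C : ℝ), 0 ≤ C ∧ (∀ L ∈ T, ∀ j, L j ≠ 0) ∧
    ∀ y ∈ Quadrant n, ‖F y‖ ≤ C * DD T y * ∏ i ∈ I, min 1 (y i) := by
  induction I using Finset.induction_on with
  | empty =>
    intro F hF _
    obtain ⟨T, C, hC, hT, hb⟩ := hF.2 []
    exact ⟨T, C, hC, hT, by simpa [_root_.pderivList] using hb⟩
  | insert i I hi ih =>
    intro F hF hv
    obtain ⟨T, C, hC, hT, hb⟩ := ih F hF fun j hj => hv j (Finset.mem_insert_of_mem hj)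
    obtain ⟨T', C', hC', hT', hb'⟩ := ih (pderivNeg n i F) (hF.pderivNeg i) fun j hj =>
      (hv j (Finset.mem_insert_of_mem hj)).pderivNeg hF.1 (fun h => hi (h ▸ hj))
    obtain ⟨K, hK, hu⟩ := DD_update T' i
    refine ⟨T ++ T', C + C' * (K * 2), by positivity, ?_, fun y hy => ?_⟩
    · intro L hL
      rcases List.mem_append.1 hL with h | h
      · exact hT L h
      · exact hT' L h
    rw [Finset.prod_insert hi, DD_append]
    have h4 := DD_nonneg T y
    have h5 := DD_nonneg T' y
    set M := ∏ i ∈ I, min 1 (y i) with hM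
    have hM0 : 0 ≤ M := Finset.prod_nonneg fun j _ => le_min zero_le_one (hy j)
    have hyi : 0 ≤ y i := hy i
    by_cases h1 : 1 ≤ y i
    · rw [min_eq_left h1, one_mul]
      refine (hb y hy).trans (mul_le_mul_of_nonneg_right ?_ hM0)
      have : 0 ≤ C' * (K * 2) * (DD T y + DD T' y) := by positivity
      nlinarith [mul_nonneg hC h5]
    · push Not at h1
      rw [min_eq_right h1.le]
      have hder : ∀ t ∈ Icc 0 (y i), HasDerivWithinAt (fun x : ℝ => F (Function.update y i x))
          (-(pderivNeg n i F (Function.update y i t))) (Icc 0 (y i)) t := fun t _ =>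
        (line_hasDerivAt hF.1 i y t).hasDerivWithinAt
      have hbd : ∀ t ∈ Icc 0 (y i), ‖-(pderivNeg n i F (Function.update y i t))‖ ≤
          C' * (K * 2 * DD T' y) * M := by
        intro t ht
        rw [norm_neg]
        have hq : Function.update y i t ∈ Quadrant n := by
          intro j
          by_cases hj : j = i
          · subst hj; simpa using ht.1
          · simpa [hj] using hy j
        have e : ∏ j ∈ I, min 1 (Function.update y i t j) = M :=
          Finset.prod_congr rfl fun j hj => by
            have hne : j ≠ i := fun h => hi (h ▸ hj)
            rw [Function.update_of_ne hne]
        have h6 := hb' _ hq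
        rw [e] at h6
        refine h6.trans (mul_le_mul_of_nonneg_right (mul_le_mul_of_nonneg_left ?_ hC') hM0)
        refine (hu y t).trans (mul_le_mul_of_nonneg_right (mul_le_mul_of_nonneg_left ?_ hK) h5)
        rw [abs_of_nonneg (by linarith [ht.2])]
        linarith [ht.1]
      have := (convex_Icc 0 (y i)).norm_image_sub_le_of_norm_hasDerivWithin_le hder hbd
        (left_mem_Icc.2 hyi) (right_mem_Icc.2 hyi)
      rw [Function.update_eq_self, hv i (Finset.mem_insert_self _ _) (Function.update y i 0)
        (by simp), sub_zero, sub_zero, Real.norm_of_nonneg hyi] at this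
      refine this.trans ?_
      have h7 : 0 ≤ C * (DD T y + DD T' y) + C' * (K * 2) * DD T y := by positivity
      have h8 : 0 ≤ M * y i := by positivity
      nlinarith [mul_nonneg h7 h8]

lemma min_mul_om {p q y : ℝ} (hy : 0 < y) : min 1 y * om p q y = om (p + 1) q y := by
  by_cases h : y < 1
  · simp [om, h, min_eq_right h.le, Real.rpow_add hy, mul_comm]
  · simp [om, h, min_eq_left (not_lt.1 h)]

/-- Key integrability lemma. -/
lemma key_integrable {m : ℕ} {F : (Fin (m+1) → ℝ) → ℂ} (hF : Nice (m+1) F)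
    (I : Finset (Fin (m+1))) (hv : ∀ i ∈ I, Van i F) (p q : Fin (m+1) → ℝ)
    (hp : ∀ i, -1 < p i ∨ (i ∈ I ∧ -2 < p i))
    (hq : ∀ i, q i + 1 < 1 / ((m+1 : ℕ) : ℝ)) :
    Integrable (fun y : Fin (m+1) → ℝ => ‖F y‖ * ∏ i, om (p i) (q i) (y i)) (PP (m+1)) := by
  obtain ⟨T, C, hC, hT, hb⟩ := van_bound I F hF hv
  set p' : Fin (m+1) → ℝ := fun i => if i ∈ I then p i + 1 else p i with hp'
  have hp1 : ∀ i, -1 < p' i := by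
    intro i
    simp only [hp']
    split_ifs with h
    · rcases hp i with h | h <;> linarith [h]
    · rcases hp i with h | h
      · exact h
      · tauto
  have hD : Integrable (fun y => DD T y * ∏ i, om (p' i) (q i) (y i)) (PP (m+1)) := by
    clear hb
    induction T with
    | nil => simp [DD_nil]
    | cons L T ih =>
      simp only [DD_cons, add_mul]
      exact (basic_integrable L (hT L (by simp)) p' q hp1 hq).add
        (ih fun L hL => hT L (by simp [hL]))
  have hm : AEStronglyMeasurable (fun y : Fin (m+1) → ℝ => ‖F y‖ *
      ∏ i, om (p i) (q i) (y i)) (PP (m+1)) := by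
    have h2 : Measurable fun y : Fin (m+1) → ℝ => ∏ i, om (p i) (q i) (y i) :=
      Finset.measurable_prod _ fun i _ => (om_measurable _ _).comp (measurable_pi_apply i)
    have h3 : Measurable F := hF.1.continuous.measurable
    apply Measurable.aestronglyMeasurable
    fun_prop
  refine (hD.const_mul C).mono' hm ?_
  filter_upwards [PP_pos (m+1)] with y hy
  have h0 : 0 ≤ ∏ i, om (p i) (q i) (y i) := Finset.prod_nonneg fun i _ => om_nonneg (hy i)
  rw [Real.norm_of_nonneg (mul_nonneg (norm_nonneg _) h0)]
  refine (mul_le_mul_of_nonneg_right (hb y fun i => (hy i).le) h0).trans (le_of_eq ?_)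
  rw [← mul_assoc, mul_assoc (C * DD T y)]
  congr 1
  rw [← Finset.univ_inter I, ← Finset.prod_ite_mem Finset.univ I, ← Finset.prod_mul_distrib]
  refine Finset.prod_congr rfl fun i _ => ?_
  simp only [hp']
  split_ifs
  · exact min_mul_om (hy i)
  · rw [one_mul]

end MellinAux
namespace MellinAux
open MeasureTheory Set Filter Topology

/-- monomial kernel -/
noncomputable def ker {n : ℕ} (s : Fin n → ℂ) (y : Fin n → ℝ) : ℂ := ∏ i, ((y i : ℂ) ^ (s i - 1))

/-- The normalised Mellin transform. -/
noncomputable def Lam (n : ℕ) (F : (Fin n → ℝ) → ℂ) (s : Fin n → ℂ) : ℂ :=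
  (∏ i, (Complex.Gamma (s i))⁻¹) * ∫ y, F y * ker s y ∂(PP n)

/-- the convergence strip -/
def Strip (n : ℕ) : Set (Fin n → ℂ) := {s | ∀ i, 0 < (s i).re ∧ (s i).re < 1 / n}

/-- the continuation domain -/
def UU (n : ℕ) : Set (Fin n → ℂ) := {s | ∀ i, (s i).re < 1 / n}

lemma ker_measurable {n : ℕ} (s : Fin n → ℂ) : Measurable (ker s) := by
  unfold ker
  refine Finset.measurable_prod _ fun i _ => ?_
  exact (Complex.measurable_ofReal.comp (measurable_pi_apply i)).pow_const _

lemma ker_norm {n : ℕ} (s : Fin n → ℂ) {y : Fin n → ℝ} (hy : ∀ i, 0 < y i) :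
    ‖ker s y‖ = ∏ i, om ((s i).re - 1) ((s i).re - 1) (y i) := by
  unfold ker
  rw [norm_prod]
  refine Finset.prod_congr rfl fun i _ => ?_
  rw [Complex.norm_cpow_eq_rpow_re_of_pos (hy i)]
  simp [om]

lemma ker_integrable {m : ℕ} {F : (Fin (m+1) → ℝ) → ℂ} (hF : Nice (m+1) F)
    (I : Finset (Fin (m+1))) (hv : ∀ i ∈ I, Van i F) (s : Fin (m+1) → ℂ)
    (hs : ∀ i, 0 < (s i).re ∨ (i ∈ I ∧ -1 < (s i).re))
    (hs' : ∀ i, (s i).re < 1 / ((m+1 : ℕ) : ℝ)) :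
    Integrable (fun y => F y * ker s y) (PP (m+1)) := by
  have h := key_integrable hF I hv (fun i => (s i).re - 1) (fun i => (s i).re - 1)
    (fun i => by
      rcases hs i with h | h
      · left; linarith
      · right; exact ⟨h.1, by linarith [h.2]⟩) (fun i => by simpa using hs' i)
  refine h.mono' ?_ ?_
  · exact (hF.1.continuous.measurable.mul (ker_measurable s)).aestronglyMeasurable
  · filter_upwards [PP_pos (m+1)] with y hy
    rw [norm_mul, ker_norm s hy]

lemma ker_integrable_strip {m : ℕ} {F : (Fin (m+1) → ℝ) → ℂ} (hF : Nice (m+1) F)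
    {s : Fin (m+1) → ℂ} (hs : s ∈ Strip (m+1)) : Integrable (fun y => F y * ker s y) (PP (m+1)) :=
  ker_integrable hF ∅ (by simp) s (fun i => Or.inl (hs i).1) (fun i => (hs i).2)

lemma Lam_sub {m : ℕ} {F G : (Fin (m+1) → ℝ) → ℂ} (hF : Nice (m+1) F) (hG : Nice (m+1) G)
    {s : Fin (m+1) → ℂ} (hs : s ∈ Strip (m+1)) :
    Lam (m+1) (F - G) s = Lam (m+1) F s - Lam (m+1) G s := by
  unfold Lam
  rw [← mul_sub, ← integral_sub (ker_integrable_strip hF hs) (ker_integrable_strip hG hs)]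
  simp [sub_mul]

lemma ker_insertNth {m : ℕ} (i : Fin (m+1)) (s : Fin (m+1) → ℂ) (x : ℝ) (r : Fin m → ℝ) :
    ker s (i.insertNth x r) = (x : ℂ) ^ (s i - 1) * ker (fun j => s (i.succAbove j)) r := by
  unfold ker
  rw [Fin.prod_univ_succAbove _ i]
  simp

lemma Lam_EE {m : ℕ} (F : (Fin (m+1) → ℝ) → ℂ) (i : Fin (m+1)) (s : Fin (m+1) → ℂ)
    (hs : 0 < (s i).re) : Lam (m+1) (EE i F) s =
      (∏ j, (Complex.Gamma (s (i.succAbove j)))⁻¹) *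
        ∫ r, F (i.insertNth 0 r) * ker (fun j => s (i.succAbove j)) r ∂(PP m) := by
  unfold Lam
  rw [integral_insertNth i, Fin.prod_univ_succAbove _ i]
  have : ∀ z : ℝ × (Fin m → ℝ), EE i F (i.insertNth z.1 z.2) * ker s (i.insertNth z.1 z.2) =
      ((Real.exp (-z.1) : ℂ) * (z.1 : ℂ) ^ (s i - 1)) *
        (F (i.insertNth 0 z.2) * ker (fun j => s (i.succAbove j)) z.2) := by
    intro z
    rw [ker_insertNth]
    simp only [EE, Fin.insertNth_apply_same, Fin.update_insertNth]
    ring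
  simp_rw [this]
  rw [integral_prod_mul (fun x : ℝ => (Real.exp (-x) : ℂ) * (x : ℂ) ^ (s i - 1))
    (fun r => F (i.insertNth 0 r) * ker (fun j => s (i.succAbove j)) r)]
  have hG : ∫ x, (Real.exp (-x) : ℂ) * (x : ℂ) ^ (s i - 1) ∂nu = Complex.Gamma (s i) := by
    rw [Complex.Gamma_eq_integral hs, Complex.GammaIntegral]
  rw [hG]
  have := Complex.Gamma_ne_zero_of_re_pos hs
  field_simp

lemma Lam_EE_update {m : ℕ} (F : (Fin (m+1) → ℝ) → ℂ) (i : Fin (m+1)) (s : Fin (m+1) → ℂ) (z : ℂ)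
    (hs : 0 < (s i).re) (hz : 0 < z.re) :
    Lam (m+1) (EE i F) (Function.update s i z) = Lam (m+1) (EE i F) s := by
  rw [Lam_EE F i s hs, Lam_EE F i _ (by simpa using hz)]
  simp

lemma log_bound {y δ x x₀ : ℝ} (hy : 0 < y) (hδ : 0 < δ) (h1 : x₀ - δ ≤ x) (h2 : x ≤ x₀ + δ) :
    |Real.log y| * y ^ x ≤ δ⁻¹ * om (x₀ - 2 * δ) (x₀ + 2 * δ) y := by
  by_cases h : y < 1
  · have l1 : |Real.log y| ≤ y ^ (-δ) / δ := by
      rw [abs_of_nonpos (Real.log_nonpos hy.le h.le), ← Real.log_inv]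
      refine (Real.log_le_rpow_div (inv_nonneg.2 hy.le) hδ).trans (le_of_eq ?_)
      rw [Real.inv_rpow hy.le, Real.rpow_neg hy.le]
    have l2 : y ^ x ≤ y ^ (x₀ - δ) := Real.rpow_le_rpow_of_exponent_ge hy h.le h1
    have e : om (x₀ - 2 * δ) (x₀ + 2 * δ) y = y ^ (-δ) * y ^ (x₀ - δ) := by
      rw [← Real.rpow_add hy]; simp only [om, h, if_true]; congr 1; ring
    rw [e]
    calc _ ≤ (y ^ (-δ) / δ) * y ^ (x₀ - δ) := by gcongr
      _ = _ := by ring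
  · push Not at h
    have l1 : |Real.log y| ≤ y ^ δ / δ := by
      rw [abs_of_nonneg (Real.log_nonneg h)]
      exact Real.log_le_rpow_div hy.le hδ
    have l2 : y ^ x ≤ y ^ (x₀ + δ) := Real.rpow_le_rpow_of_exponent_le h h2
    have e : om (x₀ - 2 * δ) (x₀ + 2 * δ) y = y ^ δ * y ^ (x₀ + δ) := by
      rw [← Real.rpow_add hy]; simp only [om, not_lt.2 h, if_false]; congr 1; ring
    rw [e]
    calc _ ≤ (y ^ δ / δ) * y ^ (x₀ + δ) := by gcongr
      _ = _ := by ring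

lemma ker_update {n : ℕ} (i : Fin n) (s : Fin n → ℂ) (z : ℂ) (y : Fin n → ℝ) :
    ker (Function.update s i z) y = (y i : ℂ) ^ (z - 1) *
      ∏ j ∈ Finset.univ.erase i, (y j : ℂ) ^ (s j - 1) := by
  unfold ker
  rw [← Finset.mul_prod_erase _ _ (Finset.mem_univ i)]
  congr 1
  · simp
  · exact Finset.prod_congr rfl fun j hj => by
      rw [Function.update_of_ne (Finset.ne_of_mem_erase hj)]

lemma update_cond {m : ℕ} {s : Fin (m+1) → ℂ} (hs : s ∈ Strip (m+1)) (i : Fin (m+1)) {z : ℂ}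
    (h1 : -1 < z.re) : ∀ j, 0 < ((Function.update s i z) j).re ∨
      (j ∈ ({i} : Finset (Fin (m+1))) ∧ -1 < ((Function.update s i z) j).re) := by
  intro j
  by_cases h : j = i
  · subst h; right; simpa using h1
  · left; simpa [h] using (hs j).1

lemma update_cond' {m : ℕ} {s : Fin (m+1) → ℂ} (hs : s ∈ UU (m+1)) (i : Fin (m+1)) {z : ℂ}
    (h1 : z.re < 1 / ((m+1 : ℕ) : ℝ)) :
    ∀ j, ((Function.update s i z) j).re < 1 / ((m+1 : ℕ) : ℝ) := by
  intro j
  by_cases h : j = i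
  · subst h; simpa using h1
  · simpa [h] using (hs j)

lemma Strip_sub {n : ℕ} {s : Fin n → ℂ} (hs : s ∈ Strip n) : s ∈ UU n := fun i => (hs i).2

lemma holo {m : ℕ} {B : (Fin (m+1) → ℝ) → ℂ} (hB : Nice (m+1) B) (i : Fin (m+1))
    (hv : Van i B) {s : Fin (m+1) → ℂ} (hs : s ∈ Strip (m+1)) {z₀ : ℂ}
    (h1 : -1 < z₀.re) (h2 : z₀.re < 1 / ((m+1 : ℕ) : ℝ)) :
    DifferentiableAt ℂ (fun z => ∫ y, B y * ker (Function.update s i z) y ∂(PP (m+1))) z₀ := by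
  obtain ⟨δ, hδ, hδ1, hδ2⟩ : ∃ δ : ℝ, 0 < δ ∧ -1 < z₀.re - 2 * δ ∧
      z₀.re + 2 * δ < 1 / ((m+1 : ℕ) : ℝ) := by
    refine ⟨min (z₀.re + 1) (1 / ((m+1 : ℕ) : ℝ) - z₀.re) / 4, ?_, ?_, ?_⟩
    · have : 0 < min (z₀.re + 1) (1 / ((m+1 : ℕ) : ℝ) - z₀.re) :=
        lt_min (by linarith) (by linarith)
      linarith
    · linarith [min_le_left (z₀.re + 1) (1 / ((m+1 : ℕ) : ℝ) - z₀.re)]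
    · linarith [min_le_right (z₀.re + 1) (1 / ((m+1 : ℕ) : ℝ) - z₀.re)]
  set R : (Fin (m+1) → ℝ) → ℂ := fun y => ∏ j ∈ Finset.univ.erase i, (y j : ℂ) ^ (s j - 1) with hR
  have hRm : Measurable R := Finset.measurable_prod _ fun j _ =>
    (Complex.measurable_ofReal.comp (measurable_pi_apply j)).pow_const _
  have hBm : Measurable B := hB.1.continuous.measurable
  set p : Fin (m+1) → ℝ := Function.update (fun j => (s j).re - 1) i (z₀.re - 1 - 2 * δ) with hp
  set q : Fin (m+1) → ℝ := Function.update (fun j => (s j).re - 1) i (z₀.re - 1 + 2 * δ) with hq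
  have hbd := key_integrable hB {i} (by simpa using hv) p q
    (by
      intro j
      by_cases h : j = i
      · subst h; right; simp [hp]; linarith
      · left; simp [hp, h]; exact (hs j).1)
    (by
      intro j
      by_cases h : j = i
      · subst h; simp only [hq, Function.update_self]; linarith
      · simp only [hq, Function.update_of_ne h]; linarith [(hs j).2])
  refine (hasDerivAt_integral_of_dominated_loc_of_deriv_le (𝕜 := ℂ) (s := Metric.ball z₀ δ)
    (Metric.ball_mem_nhds z₀ hδ)
    (F := fun z y => B y * ker (Function.update s i z) y)
    (F' := fun z y => B y * (((y i : ℂ) ^ (z - 1) * Complex.log (y i)) * R y))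
    (bound := fun y => δ⁻¹ * (‖B y‖ * ∏ j, om (p j) (q j) (y j))) ?_ ?_ ?_ ?_ ?_ ?_).2.differentiableAt
  · exact Eventually.of_forall fun z => (hBm.mul (ker_measurable _)).aestronglyMeasurable
  · exact ker_integrable hB {i} (by simpa using hv) _ (update_cond hs i h1)
      (update_cond' (Strip_sub hs) i h2)
  · have e : Measurable fun y : Fin (m+1) → ℝ => (y i : ℂ) :=
      Complex.measurable_ofReal.comp (measurable_pi_apply i)
    exact (hBm.mul (((e.pow_const _).mul (Complex.measurable_log.comp e)).mul hRm)).aestronglyMeasurable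
  · filter_upwards [PP_pos (m+1)] with y hy z hz
    have hzr : |z.re - z₀.re| ≤ δ := by
      have := Complex.abs_re_le_norm (z - z₀)
      rw [Complex.sub_re] at this
      exact this.trans (by simpa [dist_eq_norm] using (le_of_lt (Metric.mem_ball.1 hz)))
    rw [abs_le] at hzr
    have hl := log_bound (x := z.re - 1) (x₀ := z₀.re - 1) (hy i) hδ (by linarith) (by linarith)
    rw [norm_mul, norm_mul, norm_mul, ← Complex.ofReal_log (hy i).le, Complex.norm_real,
      Real.norm_eq_abs, Complex.norm_cpow_eq_rpow_re_of_pos (hy i), Complex.sub_re, Complex.one_re,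
      ← Finset.mul_prod_erase _ _ (Finset.mem_univ i)]
    have e1 : ‖R y‖ = ∏ j ∈ Finset.univ.erase i, om (p j) (q j) (y j) := by
      rw [hR]
      simp only [norm_prod]
      refine Finset.prod_congr rfl fun j hj => ?_
      have hj := Finset.ne_of_mem_erase hj
      rw [Complex.norm_cpow_eq_rpow_re_of_pos (hy j)]
      simp [hp, hq, hj, om]
    have e2 : om (p i) (q i) (y i) = om (z₀.re - 1 - 2 * δ) (z₀.re - 1 + 2 * δ) (y i) := by
      simp [hp, hq]
    rw [← e1, e2]
    calc _ = ‖B y‖ * ((|Real.log (y i)| * y i ^ (z.re - 1)) * ‖R y‖) := by ring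
      _ ≤ ‖B y‖ * ((δ⁻¹ * om (z₀.re - 1 - 2 * δ) (z₀.re - 1 + 2 * δ) (y i)) * ‖R y‖) := by gcongr
      _ = _ := by ring
  · exact hbd.const_mul _
  · filter_upwards [PP_pos (m+1)] with y hy z hz
    simp only [ker_update]
    have hy' : (y i : ℂ) ≠ 0 := by exact_mod_cast (hy i).ne'
    have h := ((hasDerivAt_id z).sub_const 1).const_cpow (c := (y i : ℂ)) (Or.inl hy')
    simpa using (h.mul_const (R y)).const_mul (B y)

lemma one_div_pos_le (m : ℕ) : 0 < 1 / ((m+1 : ℕ) : ℝ) ∧ 1 / ((m+1 : ℕ) : ℝ) ≤ 1 := by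
  have : (1:ℝ) ≤ ((m+1 : ℕ) : ℝ) := by exact_mod_cast Nat.le_add_left 1 m
  exact ⟨by positivity, by rw [div_le_one (by linarith)]; exact this⟩

/-- One-variable continuation formula. -/
lemma cont {m : ℕ} {F : (Fin (m+1) → ℝ) → ℂ} (hF : Nice (m+1) F) {Ψ : (Fin (m+1) → ℂ) → ℂ}
    (hΨ : AnalyticOnNhd ℂ Ψ (UU (m+1))) (hE : ∀ s ∈ Strip (m+1), Ψ s = Lam (m+1) F s)
    (i : Fin (m+1)) {s : Fin (m+1) → ℂ} (hs : s ∈ Strip (m+1)) {z : ℂ}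
    (h1 : -1 < z.re) (h2 : z.re < 1 / ((m+1 : ℕ) : ℝ)) :
    Ψ (Function.update s i z) = Lam (m+1) (EE i F) s +
      Lam (m+1) (F - EE i F) (Function.update s i z) := by
  set V : Set ℂ := {z | -1 < z.re ∧ z.re < 1 / ((m+1 : ℕ) : ℝ)} with hV
  have hVo : IsOpen V := (isOpen_lt continuous_const Complex.continuous_re).inter
    (isOpen_lt Complex.continuous_re continuous_const)
  have hVc : Convex ℝ V := (convex_halfSpace_re_gt _).inter (convex_halfSpace_re_lt _)
  have hB := hF.sub (hF.EE i)
  have a1 : AnalyticOnNhd ℂ (fun z => Ψ (Function.update s i z)) V := by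
    apply DifferentiableOn.analyticOnNhd _ hVo
    intro z hz
    apply DifferentiableAt.differentiableWithinAt
    exact ((hΨ _ (update_cond' (Strip_sub hs) i hz.2)).differentiableAt).comp z
      (hasDerivAt_update s i z).differentiableAt
  have a2 : AnalyticOnNhd ℂ (fun z => Lam (m+1) (EE i F) s +
      Lam (m+1) (F - EE i F) (Function.update s i z)) V := by
    apply DifferentiableOn.analyticOnNhd _ hVo
    intro z hz
    apply DifferentiableAt.differentiableWithinAt
    apply DifferentiableAt.const_add
    unfold Lam
    refine DifferentiableAt.mul ?_ (holo hB i (van_sub_EE F i) hs hz.1 hz.2)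
    apply DifferentiableAt.fun_finsetProd
    intro j _
    by_cases h : j = i
    · subst h
      simpa using Complex.differentiable_one_div_Gamma.differentiableAt
    · simp [h]
  have hsV : s i ∈ V := ⟨by linarith [(hs i).1], (hs i).2⟩
  refine a1.eqOn_of_preconnected_of_eventuallyEq a2 hVc.isPreconnected hsV ?_ ⟨h1, h2⟩
  have : {z : ℂ | 0 < z.re ∧ z.re < 1 / ((m+1 : ℕ) : ℝ)} ∈ 𝓝 (s i) :=
    ((isOpen_lt continuous_const Complex.continuous_re).inter
      (isOpen_lt Complex.continuous_re continuous_const)).mem_nhds (hs i)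
  filter_upwards [this] with w hw
  have hsw : Function.update s i w ∈ Strip (m+1) := by
    intro j
    by_cases h : j = i
    · subst h; simpa using hw
    · simpa [h] using hs j
  rw [hE _ hsw, Lam_sub hF (hF.EE i) hsw, Lam_EE_update F i s w (hs i).1 hw.1]
  ring

lemma cont_zero {m : ℕ} {F : (Fin (m+1) → ℝ) → ℂ} (hF : Nice (m+1) F) {Ψ : (Fin (m+1) → ℂ) → ℂ}
    (hΨ : AnalyticOnNhd ℂ Ψ (UU (m+1))) (hE : ∀ s ∈ Strip (m+1), Ψ s = Lam (m+1) F s)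
    (i : Fin (m+1)) {s : Fin (m+1) → ℂ} (hs : s ∈ Strip (m+1)) :
    Ψ (Function.update s i 0) = Lam (m+1) (EE i F) s := by
  rw [cont hF hΨ hE i hs (by simp) (by simpa using (one_div_pos_le m).1)]
  have : Lam (m+1) (F - EE i F) (Function.update s i 0) = 0 := by
    unfold Lam
    rw [Finset.prod_eq_zero (Finset.mem_univ i) (by simp [Complex.Gamma_zero]), zero_mul]
  rw [this, add_zero]

lemma insertNth_van_bound {m : ℕ} {B : (Fin (m+1) → ℝ) → ℂ} (hB : Nice (m+1) B) (i : Fin (m+1))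
    (hv : Van i B) : ∃ C : ℝ, 0 ≤ C ∧ ∀ y ∈ Quadrant (m+1), ‖B y‖ ≤ C * min 1 (y i) := by
  obtain ⟨T, C, hC, -, hb⟩ := van_bound {i} B hB (by simpa using hv)
  refine ⟨C * T.length, by positivity, fun y hy => (hb y hy).trans ?_⟩
  rw [Finset.prod_singleton]
  exact mul_le_mul_of_nonneg_right (mul_le_mul_of_nonneg_left (DD_le T y) hC)
    (le_min zero_le_one (hy i))

lemma ibp {m : ℕ} {B : (Fin (m+1) → ℝ) → ℂ} (hB : Nice (m+1) B) (i : Fin (m+1))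
    (hv : Van i B) {s : Fin (m+1) → ℂ} (hs : s ∈ Strip (m+1)) :
    ∫ y, B y * ker (Function.update s i (s i - 1)) y ∂(PP (m+1)) =
      (s i - 1)⁻¹ * ∫ y, pderivNeg (m+1) i B y * ker s y ∂(PP (m+1)) := by
  obtain ⟨C, hC, hb⟩ := insertNth_van_bound hB i hv
  have hm := one_div_pos_le m
  have hsi := hs i
  set z := s i - 1 with hz
  have hz1 : -1 < z.re := by simp [hz]; exact hsi.1
  have hz2 : z.re < 0 := by simp only [hz, Complex.sub_re, Complex.one_re]; linarith [hsi.2, hm.2]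
  have hz0 : z ≠ 0 := by intro h; rw [h] at hz2; simp at hz2
  have i1 := ker_integrable hB {i} (by simpa using hv) _ (update_cond hs i hz1)
    (update_cond' (Strip_sub hs) i (by linarith))
  have i2 := ker_integrable_strip (hB.pderivNeg i) hs
  rw [integral_insertNth i, integral_insertNth i]
  rw [integrable_insertNth_iff i] at i1 i2
  rw [integral_prod_symm _ i1, integral_prod_symm _ i2, ← integral_const_mul]
  apply integral_congr_ae
  filter_upwards [i1.prod_left_ae, i2.prod_left_ae, PP_pos m] with r j1 j2 hr
  set R := ker (fun j => s (i.succAbove j)) r with hR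
  have k1 : ∀ x : ℝ, ker (Function.update s i z) (i.insertNth x r) = (x : ℂ) ^ (z - 1) * R := by
    intro x; rw [ker_insertNth]; simp [hR]
  have k2 : ∀ x : ℝ, ker s (i.insertNth x r) = (x : ℂ) ^ z * R := by
    intro x; rw [ker_insertNth]
  simp only [k1, k2] at j1 j2 ⊢
  have hbx : ∀ x > 0, ‖B (i.insertNth x r)‖ ≤ C * min 1 x := by
    intro x hx
    have := hb (i.insertNth x r) (by
      intro j
      rcases Fin.eq_self_or_eq_succAbove i j with h | ⟨k, h⟩
      · subst h; simpa using hx.le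
      · subst h; simpa using (hr k).le)
    simpa using this
  have huv : ∀ x > 0, ‖B (i.insertNth x r) * ((x : ℂ) ^ z * (R * z⁻¹))‖ ≤
      (C * ‖R * z⁻¹‖) * (min 1 x * x ^ z.re) := by
    intro x hx
    rw [norm_mul, norm_mul, Complex.norm_cpow_eq_rpow_re_of_pos hx]
    calc _ ≤ (C * min 1 x) * (x ^ z.re * ‖R * z⁻¹‖) := by gcongr; exact hbx x hx
      _ = _ := by ring
  have key := integral_Ioi_mul_deriv_eq_deriv_mul (a := 0) (a' := (0:ℂ)) (b' := (0:ℂ))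
    (u := fun x : ℝ => B (i.insertNth x r))
    (u' := fun x : ℝ => -(pderivNeg (m+1) i B (i.insertNth x r)))
    (v := fun x : ℝ => (x : ℂ) ^ z * (R * z⁻¹))
    (v' := fun x : ℝ => (x : ℂ) ^ (z - 1) * R) ?_ ?_ ?_ ?_ ?_ ?_
  · rw [key, sub_zero, zero_sub, ← integral_neg, ← integral_const_mul]
    congr 1
    ext x
    ring
  · intro x _
    have := line_hasDerivAt hB.1 i (i.insertNth 0 r) x
    simpa only [Fin.update_insertNth] using this
  · intro x hx
    have hx : 0 < x := hx
    have := (hasDerivAt_ofReal_cpow_const hx.ne' hz0)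
    have := this.mul_const (R * z⁻¹)
    refine this.congr_deriv ?_
    field_simp
  · exact j1
  · refine (j2.const_mul (-z⁻¹)).congr ?_
    refine Eventually.of_forall fun x => ?_
    simp only [Pi.mul_apply]
    ring
  · have t : Tendsto (fun x : ℝ => (C * ‖R * z⁻¹‖) * x ^ (z.re + 1)) (𝓝[>] 0) (𝓝 0) := by
      have := ((Real.continuous_rpow_const (q := z.re + 1) (by linarith)).tendsto 0).const_mul
        (C * ‖R * z⁻¹‖)
      rw [Real.zero_rpow (by linarith), mul_zero] at this
      exact this.mono_left nhdsWithin_le_nhds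
    refine squeeze_zero_norm' ?_ t
    filter_upwards [self_mem_nhdsWithin] with x hx
    have hx : 0 < x := hx
    refine (huv x hx).trans ?_
    rw [Real.rpow_add hx, Real.rpow_one, mul_comm (x ^ z.re) x]
    gcongr
    exact min_le_right _ _
  · have t : Tendsto (fun x : ℝ => (C * ‖R * z⁻¹‖) * x ^ (z.re)) atTop (𝓝 0) := by
      have := (tendsto_rpow_neg_atTop (y := -z.re) (by linarith)).const_mul (C * ‖R * z⁻¹‖)
      simpa using this
    refine squeeze_zero_norm' ?_ t
    filter_upwards [Ioi_mem_atTop 0] with x hx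
    have hx : 0 < x := hx
    refine (huv x hx).trans ?_
    gcongr
    calc min 1 x * x ^ z.re ≤ 1 * x ^ z.re := by gcongr; exact min_le_left _ _
      _ = _ := one_mul _

/-- Shift step. -/
lemma shift {m : ℕ} {F : (Fin (m+1) → ℝ) → ℂ} (hF : Nice (m+1) F) {Ψ : (Fin (m+1) → ℂ) → ℂ}
    (hΨ : AnalyticOnNhd ℂ Ψ (UU (m+1))) (hE : ∀ s ∈ Strip (m+1), Ψ s = Lam (m+1) F s)
    (i : Fin (m+1)) {s : Fin (m+1) → ℂ} (hs : s ∈ Strip (m+1)) :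
    Ψ (Function.update s i (s i - 1)) = Lam (m+1) (pderivNeg (m+1) i F) s := by
  have hm := one_div_pos_le m
  have hsi := hs i
  have hz1 : -1 < (s i - 1).re := by simp; exact hsi.1
  have hz2 : (s i - 1).re < 0 := by
    simp only [Complex.sub_re, Complex.one_re]; linarith [hsi.2, hm.2]
  have hz0 : s i - 1 ≠ 0 := by intro h; rw [h] at hz2; simp at hz2
  rw [cont hF hΨ hE i hs hz1 (by linarith)]
  have e : Lam (m+1) (F - EE i F) (Function.update s i (s i - 1)) =
      Lam (m+1) (pderivNeg (m+1) i (F - EE i F)) s := by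
    unfold Lam
    rw [ibp (hF.sub (hF.EE i)) i (van_sub_EE F i) hs, ← mul_assoc]
    congr 1
    rw [← Finset.mul_prod_erase _ _ (Finset.mem_univ i),
      ← Finset.mul_prod_erase _ (fun j => (Complex.Gamma (s j))⁻¹) (Finset.mem_univ i)]
    have g : Complex.Gamma (s i) = (s i - 1) * Complex.Gamma (s i - 1) := by
      rw [← Complex.Gamma_add_one _ hz0]; simp
    rw [g, mul_inv, Finset.prod_congr rfl (g := fun j => (Complex.Gamma (s j))⁻¹) (fun j hj => by
      rw [Function.update_of_ne (Finset.ne_of_mem_erase hj)]), Function.update_self]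
    ring
  rw [e, pderivNeg_sub hF.1 (contDiff_EE hF.1 i), pderivNeg_EE_same hF.1,
    Lam_sub (hF.pderivNeg i) (hF.EE i) hs]
  ring

end MellinAux
namespace MellinAux
open MeasureTheory Set Filter Topology

lemma shift_analytic {n : ℕ} {Φ : (Fin n → ℂ) → ℂ} (hΦ : AnalyticOnNhd ℂ Φ (UU n))
    (c : Fin n → ℕ) : AnalyticOnNhd ℂ (fun s => Φ (fun j => s j - c j)) (UU n) := by
  have h : AnalyticOnNhd ℂ (fun s : Fin n → ℂ => s - fun j => (c j : ℂ)) (UU n) :=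
    analyticOnNhd_id.sub analyticOnNhd_const
  refine AnalyticOnNhd.comp hΦ h ?_
  intro s hs j
  have := hs j
  have h2 : (0:ℝ) ≤ c j := Nat.cast_nonneg _
  simp only [Pi.sub_apply, Complex.sub_re, Complex.natCast_re]
  linarith

lemma shiftList {m : ℕ} {F : (Fin (m+1) → ℝ) → ℂ} (hF : Nice (m+1) F) {Φ : (Fin (m+1) → ℂ) → ℂ}
    (hΦ : AnalyticOnNhd ℂ Φ (UU (m+1))) (hE : ∀ s ∈ Strip (m+1), Φ s = Lam (m+1) F s)
    (l : List (Fin (m+1))) : ∀ s ∈ Strip (m+1),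
    Φ (fun j => s j - (l.count j : ℕ)) = Lam (m+1) (pderivList (m+1) l F) s := by
  induction l with
  | nil => intro s hs; simpa [pderivList] using hE s hs
  | cons i l ih =>
    intro s hs
    have := shift (hF.pderivList l) (shift_analytic hΦ fun j => l.count j) ih i hs
    rw [pderivList, ← this]
    congr 1
    ext j
    by_cases h : j = i
    · subst h; simp; ring
    · simp [h, List.count_cons, Ne.symm h]

lemma count_multiIndexList {n : ℕ} (k : Fin n → ℕ) (j : Fin n) :
    (multiIndexList n k).count j = k j := by
  unfold multiIndexList
  rw [List.count_flatMap]
  have : (List.count j ∘ fun i => List.replicate (k i) i) = fun i => if i = j then k i else 0 := by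
    ext i
    simp [List.count_replicate]
  rw [this, ← List.ofFn_eq_map, List.sum_ofFn]
  simp

/-- zero out the coordinates in `J` -/
noncomputable def zz {n : ℕ} (J : Finset (Fin n)) : (Fin n → ℂ) →L[ℂ] (Fin n → ℂ) :=
  ContinuousLinearMap.pi fun j => if j ∈ J then 0 else ContinuousLinearMap.proj j

lemma zz_apply {n : ℕ} (J : Finset (Fin n)) (s : Fin n → ℂ) (j : Fin n) :
    zz J s j = if j ∈ J then 0 else s j := by
  unfold zz
  rw [ContinuousLinearMap.coe_pi']
  by_cases h : j ∈ J <;> simp [h]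

lemma zz_analytic {m : ℕ} {Ψ : (Fin (m+1) → ℂ) → ℂ} (hΨ : AnalyticOnNhd ℂ Ψ (UU (m+1)))
    (J : Finset (Fin (m+1))) : AnalyticOnNhd ℂ (fun s => Ψ (zz J s)) (UU (m+1)) := by
  refine AnalyticOnNhd.comp hΨ ((zz J).analyticOnNhd _) ?_
  intro s hs j
  rw [zz_apply]
  split_ifs
  · simpa using (one_div_pos_le m).1
  · exact hs j

/-- product of the operators `EE` -/
noncomputable def AA {n : ℕ} (J : Finset (Fin n)) (F : (Fin n → ℝ) → ℂ) : (Fin n → ℝ) → ℂ :=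
  fun y => (∏ j ∈ J, (Real.exp (-y j) : ℂ)) * F (fun j => if j ∈ J then 0 else y j)

lemma AA_insert {n : ℕ} {J : Finset (Fin n)} {i : Fin n} (hi : i ∉ J) (F : (Fin n → ℝ) → ℂ) :
    AA (insert i J) F = EE i (AA J F) := by
  ext y
  unfold AA EE
  rw [Finset.prod_insert hi, mul_assoc]
  congr 2
  · refine Finset.prod_congr rfl fun j hj => ?_
    have hne : j ≠ i := fun h => hi (h ▸ hj)
    rw [Function.update_of_ne hne]
  · congr 1
    ext j
    by_cases h : j = i
    · subst h; simp
    · simp [h]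

lemma AA_spec {m : ℕ} {F : (Fin (m+1) → ℝ) → ℂ} (hF : Nice (m+1) F) {Ψ : (Fin (m+1) → ℂ) → ℂ}
    (hΨ : AnalyticOnNhd ℂ Ψ (UU (m+1))) (hE : ∀ s ∈ Strip (m+1), Ψ s = Lam (m+1) F s)
    (J : Finset (Fin (m+1))) : Nice (m+1) (AA J F) ∧ (∀ i, Van i F → Van i (AA J F)) ∧
      ∀ s ∈ Strip (m+1), Ψ (zz J s) = Lam (m+1) (AA J F) s := by
  induction J using Finset.induction_on with
  | empty =>
    have e : AA ∅ F = F := by ext y; simp [AA]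
    have e2 : ∀ s : Fin (m+1) → ℂ, zz ∅ s = s := by intro s; ext j; simp [zz_apply]
    rw [e]
    exact ⟨hF, fun _ h => h, fun s hs => by rw [e2]; exact hE s hs⟩
  | insert i J hi ih =>
    obtain ⟨h1, h2, h3⟩ := ih
    rw [AA_insert hi]
    refine ⟨h1.EE i, fun j hj => (h2 j hj).EE i, fun s hs => ?_⟩
    have := cont_zero h1 (zz_analytic hΨ J) h3 i hs
    rw [← this]
    congr 1
    ext j
    rw [zz_apply, zz_apply]
    by_cases h : j = i
    · subst h; simp
    · simp [h]

lemma UU_convex (n : ℕ) : Convex ℝ (UU n) := by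
  have : UU n = ⋂ i, {s : Fin n → ℂ | (s i).re < 1 / n} := by ext; simp [UU]
  rw [this]
  refine convex_iInter fun i => ?_
  exact convex_halfSpace_lt (f := fun s : Fin n → ℂ => (s i).re)
    ⟨fun _ _ => by simp, fun _ _ => by simp⟩ _

lemma UU_open (n : ℕ) : IsOpen (UU n) := by
  have : UU n = ⋂ i, {s : Fin n → ℂ | (s i).re < 1 / n} := by ext; simp [UU]
  rw [this]
  exact isOpen_iInter_of_finite fun i =>
    isOpen_lt (Complex.continuous_re.comp (continuous_apply i)) continuous_const

lemma Strip_open (n : ℕ) : IsOpen (Strip n) := by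
  have : Strip n = ⋂ i, {s : Fin n → ℂ | 0 < (s i).re ∧ (s i).re < 1 / n} := by ext; simp [Strip]
  rw [this]
  exact isOpen_iInter_of_finite fun i =>
    (isOpen_lt continuous_const (Complex.continuous_re.comp (continuous_apply i))).inter
    (isOpen_lt (Complex.continuous_re.comp (continuous_apply i)) continuous_const)

lemma vanish {m : ℕ} {F : (Fin (m+1) → ℝ) → ℂ} (hF : Nice (m+1) F) {Ψ : (Fin (m+1) → ℂ) → ℂ}
    (hΨ : AnalyticOnNhd ℂ Ψ (UU (m+1))) (hE : ∀ s ∈ Strip (m+1), Ψ s = Lam (m+1) F s)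
    (i : Fin (m+1)) (hv : Van i F) : ∀ s ∈ UU (m+1), s i = 0 → Ψ s = 0 := by
  have hm := one_div_pos_le m
  have hs0 : (fun _ => ((1 / ((m+1 : ℕ) : ℝ) / 2 : ℝ) : ℂ)) ∈ Strip (m+1) := by
    intro j
    rw [Complex.ofReal_re]
    constructor <;> linarith
  have h := (zz_analytic hΨ {i}).eqOn_of_preconnected_of_eventuallyEq
    (g := fun _ => 0) analyticOnNhd_const (UU_convex _).isPreconnected (Strip_sub hs0) (by
      filter_upwards [(Strip_open _).mem_nhds hs0] with s hs
      have := cont_zero hF hΨ hE i hs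
      rw [EE_eq_zero hv] at this
      have e : zz {i} s = Function.update s i 0 := by
        ext j
        rw [zz_apply]
        by_cases h : j = i
        · subst h; simp
        · simp [h]
      rw [e, this]
      simp [Lam])
  intro s hs h0
  have e : zz {i} s = s := by
    ext j
    rw [zz_apply]
    by_cases h : j = i
    · subst h; simp [h0]
    · simp [h]
  have := h hs
  simpa [e] using this

lemma update_mem_ball {n : ℕ} {u : Fin n → ℂ} {δ : ℝ} (hδ : 0 < δ) (hu : u ∈ Metric.ball 0 δ)
    (i : Fin n) {z : ℂ} (hz : z ∈ Metric.ball 0 δ) : Function.update u i z ∈ Metric.ball 0 δ := by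
  rw [mem_ball_zero_iff, pi_norm_lt_iff hδ] at *
  intro j
  by_cases h : j = i
  · subst h; simpa using hz
  · simpa [h] using hu j

lemma lim_exists {n : ℕ} (I : Finset (Fin n)) : ∀ (Ψ : (Fin n → ℂ) → ℂ) (ρ : ℝ), 0 < ρ →
    AnalyticOnNhd ℂ Ψ (Metric.ball 0 ρ) →
    (∀ i ∈ I, ∀ u ∈ Metric.ball 0 ρ, u i = 0 → Ψ u = 0) →
    ∃ c : ℂ, ∀ ε > 0, ∃ δ > 0, δ ≤ ρ ∧ ∀ u ∈ Metric.ball 0 δ,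
      ‖Ψ u - c * ∏ i ∈ I, u i‖ ≤ ε * ∏ i ∈ I, ‖u i‖ := by
  induction I using Finset.induction_on with
  | empty =>
    intro Ψ ρ hρ hΨ _
    refine ⟨Ψ 0, fun ε hε => ?_⟩
    have hc := (hΨ 0 (Metric.mem_ball_self hρ)).continuousAt
    obtain ⟨δ, hδ, h⟩ := Metric.continuousAt_iff.1 hc ε hε
    refine ⟨min δ ρ, lt_min hδ hρ, min_le_right _ _, fun u hu => ?_⟩
    have := h (lt_of_lt_of_le (Metric.mem_ball.1 hu) (min_le_left _ _))
    simpa [dist_eq_norm] using this.le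
  | insert i I hi ih =>
    intro Ψ ρ hρ hΨ hv
    set D : (Fin n → ℂ) → ℂ := fun u => fderiv ℂ Ψ u (Pi.single i 1) with hD
    have hDa : AnalyticOnNhd ℂ D (Metric.ball 0 ρ) := by
      intro u hu
      have h1 := hΨ.fderiv u hu
      exact ((ContinuousLinearMap.apply ℂ ℂ (Pi.single i (1:ℂ))).analyticAt _).comp h1
    have hder : ∀ u ∈ Metric.ball (0 : Fin n → ℂ) ρ, ∀ z ∈ Metric.ball (0:ℂ) ρ,
        HasDerivAt (fun x => Ψ (Function.update u i x)) (D (Function.update u i z)) z := by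
      intro u hu z hz
      have := (hΨ _ (update_mem_ball hρ hu i hz)).differentiableAt.hasFDerivAt.comp_hasDerivAt z
        (hasDerivAt_update u i z)
      exact this
    have hcoord : ∀ {δ : ℝ}, 0 < δ → ∀ u ∈ Metric.ball (0 : Fin n → ℂ) δ, ∀ j,
        u j ∈ Metric.ball (0:ℂ) δ := by
      intro δ hδ u hu j
      rw [mem_ball_zero_iff, pi_norm_lt_iff hδ] at hu
      simpa using hu j
    obtain ⟨c, hc⟩ := ih D ρ hρ hDa (by
      intro j hj u hu h0
      have hne : j ≠ i := fun h => hi (h ▸ hj)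
      have h1 := hder u hu (u i) (hcoord hρ u hu i)
      rw [Function.update_eq_self] at h1
      have h2 : (fun x => Ψ (Function.update u i x)) =ᶠ[𝓝 (u i)] fun _ => 0 := by
        filter_upwards [Metric.isOpen_ball.mem_nhds (hcoord hρ u hu i)] with x hx
        exact hv j (Finset.mem_insert_of_mem hj) _ (update_mem_ball hρ hu i hx)
          (by rw [Function.update_of_ne hne, h0])
      exact h1.unique ((hasDerivAt_const _ _).congr_of_eventuallyEq h2))
    refine ⟨c, fun ε hε => ?_⟩
    obtain ⟨δ, hδ, hδρ, h⟩ := hc ε hε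
    refine ⟨δ, hδ, hδρ, fun u hu => ?_⟩
    have huρ := Metric.ball_subset_ball hδρ hu
    have hpr : ∀ z : ℂ, ∏ j ∈ I, Function.update u i z j = ∏ j ∈ I, u j := fun z =>
      Finset.prod_congr rfl fun j hj => by
        have hne : j ≠ i := fun h => hi (h ▸ hj)
        rw [Function.update_of_ne hne]
    have hpr' : ∀ z : ℂ, ∏ j ∈ I, ‖Function.update u i z j‖ = ∏ j ∈ I, ‖u j‖ := fun z =>
      Finset.prod_congr rfl fun j hj => by
        have hne : j ≠ i := fun h => hi (h ▸ hj)
        rw [Function.update_of_ne hne]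
    have hd : ∀ z ∈ Metric.ball (0:ℂ) δ, HasDerivWithinAt
        (fun x => Ψ (Function.update u i x) - c * (x * ∏ j ∈ I, u j))
        (D (Function.update u i z) - c * (1 * ∏ j ∈ I, u j)) (Metric.ball (0:ℂ) δ) z := by
      intro z hz
      exact ((hder u huρ z (Metric.ball_subset_ball hδρ hz)).sub
        (((hasDerivAt_id z).mul_const _).const_mul c)).hasDerivWithinAt
    have hb : ∀ z ∈ Metric.ball (0:ℂ) δ,
        ‖D (Function.update u i z) - c * (1 * ∏ j ∈ I, u j)‖ ≤ ε * ∏ j ∈ I, ‖u j‖ := by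
      intro z hz
      have := h _ (update_mem_ball hδ hu i hz)
      rwa [hpr, hpr', ← one_mul (∏ j ∈ I, u j)] at this
    have := (convex_ball (0:ℂ) δ).norm_image_sub_le_of_norm_hasDerivWithin_le hd hb
      (Metric.mem_ball_self hδ) (hcoord hδ u hu i)
    rw [Function.update_eq_self, hv i (Finset.mem_insert_self _ _) (Function.update u i 0)
      (update_mem_ball hρ huρ i (Metric.mem_ball_self hρ)) (by simp)] at this
    rw [Finset.prod_insert hi, Finset.prod_insert hi]
    calc _ = _ := by congr 1; ring
      _ ≤ _ := this
      _ = _ := by rw [sub_zero]; ring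

lemma lim_tendsto {n : ℕ} (I : Finset (Fin n)) (Ψ : (Fin n → ℂ) → ℂ) (ρ : ℝ) (hρ : 0 < ρ)
    (hΨ : AnalyticOnNhd ℂ Ψ (Metric.ball 0 ρ))
    (hv : ∀ i ∈ I, ∀ u ∈ Metric.ball 0 ρ, u i = 0 → Ψ u = 0) :
    ∃ c : ℂ, Tendsto (fun u => (∏ i ∈ I, (u i)⁻¹) * Ψ u)
      (𝓝[{u | ∀ i ∈ I, u i ≠ 0}] 0) (𝓝 c) := by
  obtain ⟨c, hc⟩ := lim_exists I Ψ ρ hρ hΨ hv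
  refine ⟨c, Metric.tendsto_nhdsWithin_nhds.2 fun ε hε => ?_⟩
  obtain ⟨δ, hδ, -, h⟩ := hc (ε / 2) (by positivity)
  refine ⟨δ, hδ, fun u hu hd => ?_⟩
  have h1 := h u hd
  have hP : 0 < ∏ i ∈ I, ‖u i‖ := Finset.prod_pos fun i hi => norm_pos_iff.2 (hu i hi)
  have hP0 : ∏ i ∈ I, u i ≠ 0 := Finset.prod_ne_zero_iff.2 hu
  rw [dist_eq_norm, Finset.prod_inv_distrib]
  have e : (∏ i ∈ I, u i)⁻¹ * Ψ u - c = (∏ i ∈ I, u i)⁻¹ * (Ψ u - c * ∏ i ∈ I, u i) := by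
    field_simp
  rw [e, norm_mul, norm_inv, norm_prod, inv_mul_lt_iff₀ hP]
  nlinarith

lemma restrict_quadrant (ι : Type*) [Fintype ι] :
    (volume : Measure (ι → ℝ)).restrict {t | ∀ j, 0 ≤ t j} = Measure.pi fun _ => nu := by
  have : {t : ι → ℝ | ∀ j, 0 ≤ t j} = Set.univ.pi fun _ => Ici 0 := by
    ext t
    simp only [Set.mem_ofPred_eq, Set.mem_pi, Set.mem_univ, true_imp_iff, Set.mem_Ici]
  rw [this, volume_pi, Measure.restrict_pi_pi]
  congr 1
  ext1 j
  exact Measure.restrict_congr_set Ioi_ae_eq_Ici.symm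

lemma final_fubini {n : ℕ} (I : Finset (Fin n)) (F : (Fin n → ℝ) → ℂ) (η : ℝ) (hη : 0 < η) :
    (∏ i ∈ Iᶜ, (Complex.Gamma η)⁻¹) *
      ∫ y, AA Iᶜ F y * ker (fun j => if j ∈ I then 0 else (η : ℂ)) y ∂(PP n) =
    ∫ t : {i // i ∈ I} → ℝ in {t | ∀ j, 0 ≤ t j},
        F (fun i => if h : i ∈ I then t ⟨i, h⟩ else 0) * ∏ j : {i // i ∈ I}, ((t j : ℂ))⁻¹ := by
  rw [restrict_quadrant]
  have h := (measurePreserving_piEquivPiSubtypeProd (fun _ : Fin n => nu) (fun i => i ∈ I)).symm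
  rw [← h.integral_comp (MeasurableEquiv.measurableEmbedding _)]
  have key : ∀ z : ({i // i ∈ I} → ℝ) × ({i // i ∉ I} → ℝ),
      AA Iᶜ F ((MeasurableEquiv.piEquivPiSubtypeProd (fun _ : Fin n => ℝ) (fun i => i ∈ I)).symm z) *
      ker (fun j => if j ∈ I then 0 else (η : ℂ))
        ((MeasurableEquiv.piEquivPiSubtypeProd (fun _ : Fin n => ℝ) (fun i => i ∈ I)).symm z) =
      (F (fun i => if h : i ∈ I then z.1 ⟨i, h⟩ else 0) * ∏ j : {i // i ∈ I}, ((z.1 j : ℂ))⁻¹) *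
      ∏ j : {i // i ∉ I}, ((Real.exp (-z.2 j) : ℂ) * (z.2 j : ℂ) ^ ((η : ℂ) - 1)) := by
    intro z
    have hz : (MeasurableEquiv.piEquivPiSubtypeProd (fun _ : Fin n => ℝ) (fun i => i ∈ I)).symm z =
      fun i => if h : i ∈ I then z.1 ⟨i, h⟩ else z.2 ⟨i, h⟩ := rfl
    rw [hz]
    unfold AA ker
    rw [← Fintype.prod_subtype_mul_prod_subtype (fun i => i ∈ I), Finset.prod_mul_distrib]
    have e0 : (fun j => if j ∈ Iᶜ then (0:ℝ) else if h : j ∈ I then z.1 ⟨j, h⟩ else z.2 ⟨j, h⟩) =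
        fun i => if h : i ∈ I then z.1 ⟨i, h⟩ else 0 := by
      ext j
      by_cases h : j ∈ I <;> simp [h]
    have e1 : ∏ j ∈ Iᶜ, (Real.exp (-(if h : j ∈ I then z.1 ⟨j, h⟩ else z.2 ⟨j, h⟩)) : ℂ) =
        ∏ j : {i // i ∉ I}, (Real.exp (-z.2 j) : ℂ) := by
      rw [Finset.prod_subtype (p := fun i => i ∉ I) Iᶜ (by simp)]
      refine Finset.prod_congr rfl fun j _ => ?_
      simp [j.2]
    rw [e0, e1]
    have e2 : ∀ inst : Fintype {i // i ∈ I}, @Finset.prod _ _ _ (@Finset.univ _ inst)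
        (fun j : {i // i ∈ I} =>
        (((if h : (j : Fin n) ∈ I then z.1 ⟨j, h⟩ else z.2 ⟨j, h⟩ : ℝ)) : ℂ) ^
        ((if (j : Fin n) ∈ I then 0 else (η : ℂ)) - 1)) = ∏ j : {i // i ∈ I}, ((z.1 j : ℂ))⁻¹ := by
      intro inst
      rw [Subsingleton.elim inst (Finset.Subtype.fintype I)]
      refine Finset.prod_congr rfl fun j _ => ?_
      simp [j.2, Complex.cpow_neg_one]
    have e3 : ∏ j : {i // i ∉ I}, (((if h : (j : Fin n) ∈ I then z.1 ⟨j, h⟩ else z.2 ⟨j, h⟩ : ℝ)) : ℂ) ^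
        ((if (j : Fin n) ∈ I then 0 else (η : ℂ)) - 1) =
        ∏ j : {i // i ∉ I}, (z.2 j : ℂ) ^ ((η : ℂ) - 1) := by
      refine Finset.prod_congr rfl fun j _ => ?_
      simp [j.2]
    beta_reduce
    rw [e2, e3]
    refine ((by intros; ring : ∀ a b c d : ℂ, a * b * (c * d) = (b * c) * (a * d)) _ _ _ _).trans ?_
    congr!
  simp_rw [key]
  rw [integral_prod_mul (fun t : {i // i ∈ I} → ℝ =>
    F (fun i => if h : i ∈ I then t ⟨i, h⟩ else 0) * ∏ j : {i // i ∈ I}, ((t j : ℂ))⁻¹)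
    (fun w : {i // i ∉ I} → ℝ => ∏ j, ((Real.exp (-w j) : ℂ) * (w j : ℂ) ^ ((η : ℂ) - 1)))]
  rw [integral_fintype_prod_eq_prod (μ := fun _ : {i // i ∉ I} => nu)
    (fun _ x => ((Real.exp (-x) : ℂ) * (x : ℂ) ^ ((η : ℂ) - 1)))]
  have hG : ∫ x, (Real.exp (-x) : ℂ) * (x : ℂ) ^ ((η : ℂ) - 1) ∂nu = Complex.Gamma η := by
    rw [Complex.Gamma_eq_integral (by simpa using hη), Complex.GammaIntegral]
  have hg0 : Complex.Gamma η ≠ 0 := Complex.Gamma_ne_zero_of_re_pos (by simpa using hη)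
  rw [hG, Finset.prod_subtype (p := fun i => i ∉ I) Iᶜ (by simp), mul_left_comm,
    ← Finset.prod_mul_distrib]
  simp [hg0]
  congr!

lemma om_compare {y ε η : ℝ} (hy : 0 < y) (h0 : 0 < ε) (h1 : ε < η) :
    om (ε - 1) (ε - 1) y ≤ om (-1) (η - 1) y := by
  unfold om
  split_ifs with h
  · exact Real.rpow_le_rpow_of_exponent_ge hy h.le (by linarith)
  · exact Real.rpow_le_rpow_of_exponent_le (not_lt.1 h) (by linarith)

lemma path_limit {m : ℕ} {A : (Fin (m+1) → ℝ) → ℂ} (hA : Nice (m+1) A) (I : Finset (Fin (m+1)))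
    (hv : ∀ i ∈ I, Van i A) {η : ℝ} (hη : 0 < η) (hη' : η < 1 / ((m+1 : ℕ) : ℝ)) :
    Tendsto (fun ε : ℝ => (∏ i ∈ I, (ε : ℂ)⁻¹) *
        Lam (m+1) A (fun j => if j ∈ I then (ε : ℂ) else (η : ℂ))) (𝓝[>] 0)
      (𝓝 ((∏ i ∈ Iᶜ, (Complex.Gamma η)⁻¹) *
      ∫ y, A y * ker (fun j => if j ∈ I then 0 else (η : ℂ)) y ∂(PP (m+1)))) := by
  have hI : Tendsto (fun ε : ℝ => ∫ y, A y * ker (fun j => if j ∈ I then (ε : ℂ) else (η : ℂ)) y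
      ∂(PP (m+1))) (𝓝[>] 0)
      (𝓝 (∫ y, A y * ker (fun j => if j ∈ I then 0 else (η : ℂ)) y ∂(PP (m+1)))) := by
    refine tendsto_integral_filter_of_dominated_convergence
      (fun y => ‖A y‖ * ∏ i, om (if i ∈ I then -1 else η - 1) (η - 1) (y i)) ?_ ?_ ?_ ?_
    · exact Eventually.of_forall fun ε =>
        (hA.1.continuous.measurable.mul (ker_measurable _)).aestronglyMeasurable
    · filter_upwards [Ioo_mem_nhdsGT hη] with ε hε
      filter_upwards [PP_pos (m+1)] with y hy
      rw [norm_mul, ker_norm _ hy]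
      refine mul_le_mul_of_nonneg_left ?_ (norm_nonneg _)
      refine Finset.prod_le_prod (fun i _ => om_nonneg (hy i)) fun i _ => ?_
      split_ifs
      · simpa using om_compare (hy i) hε.1 hε.2
      · simp
    · refine key_integrable hA I hv (fun i => if i ∈ I then -1 else η - 1) (fun _ => η - 1) ?_ ?_
      · intro i
        by_cases h : i ∈ I
        · right; simp [h]
        · left; simp [h, hη]
      · intro i; linarith
    · filter_upwards [PP_pos (m+1)] with y hy
      refine Tendsto.const_mul _ ?_
      unfold ker
      refine tendsto_finsetProd _ fun i _ => ?_
      by_cases h : i ∈ I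
      · simp only [h, if_true]
        have hy' : (y i : ℂ) ≠ 0 := by exact_mod_cast (hy i).ne'
        have hc : Continuous fun ε : ℝ => (y i : ℂ) ^ ((ε : ℂ) - 1) :=
          (Complex.continuous_ofReal.sub continuous_const).const_cpow (Or.inl hy')
        have := hc.tendsto 0
        simp only [Complex.ofReal_zero] at this
        exact this.mono_left nhdsWithin_le_nhds
      · simp only [h, if_false]
        exact tendsto_const_nhds
  have hG : Tendsto (fun ε : ℝ => ∏ i ∈ I, (Complex.Gamma ((ε : ℂ) + 1))⁻¹) (𝓝[>] 0) (𝓝 1) := by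
    have h1 : Continuous fun ε : ℝ => (Complex.Gamma ((ε : ℂ) + 1))⁻¹ :=
      Complex.differentiable_one_div_Gamma.continuous.comp
        (Complex.continuous_ofReal.add continuous_const)
    have h2 := (continuous_finsetProd I fun _ _ => h1).tendsto 0
    simp only [Complex.ofReal_zero, zero_add, Complex.Gamma_one, inv_one, Finset.prod_const_one] at h2
    exact h2.mono_left nhdsWithin_le_nhds
  have := hG.mul (hI.const_mul (∏ i ∈ Iᶜ, (Complex.Gamma η)⁻¹))
  rw [one_mul] at this
  refine this.congr' ?_
  filter_upwards [self_mem_nhdsWithin] with ε hε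
  have hε : (0:ℝ) < ε := hε
  have hε' : (ε : ℂ) ≠ 0 := by exact_mod_cast hε.ne'
  unfold Lam
  rw [← Finset.prod_mul_prod_compl I, Complex.Gamma_add_one _ hε']
  rw [Finset.prod_congr rfl (g := fun _ => (Complex.Gamma ε)⁻¹) (s₁ := I)
      (f := fun i => (Complex.Gamma (if i ∈ I then (ε:ℂ) else η))⁻¹) (fun i hi => by simp [hi]),
    Finset.prod_congr rfl (g := fun _ => (Complex.Gamma η)⁻¹) (s₁ := Iᶜ)
      (f := fun i => (Complex.Gamma (if i ∈ I then (ε:ℂ) else η))⁻¹)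
      (fun i hi => by simp [Finset.mem_compl.1 hi])]
  simp only [mul_inv, Finset.prod_mul_distrib]
  ring

lemma main_aux {m : ℕ} {F : (Fin (m+1) → ℝ) → ℂ} (hF : Nice (m+1) F) {Ψ : (Fin (m+1) → ℂ) → ℂ}
    (hΨ : AnalyticOnNhd ℂ Ψ (UU (m+1))) (hE : ∀ s ∈ Strip (m+1), Ψ s = Lam (m+1) F s)
    (I : Finset (Fin (m+1))) (hv : ∀ i ∈ I, Van i F) :
    Tendsto (fun u => (∏ i ∈ I, (u i)⁻¹) * Ψ u) (𝓝[{u | ∀ i ∈ I, u i ≠ 0}] 0)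
      (𝓝 (∫ t : {i // i ∈ I} → ℝ in {t | ∀ j, 0 ≤ t j},
        F (fun i => if h : i ∈ I then t ⟨i, h⟩ else 0) * ∏ j : {i // i ∈ I}, ((t j : ℂ))⁻¹)) := by
  have hm := one_div_pos_le m
  have h0 : (0 : Fin (m+1) → ℂ) ∈ UU (m+1) := fun i => by simpa using hm.1
  obtain ⟨ρ, hρ, hball⟩ := Metric.isOpen_iff.1 (UU_open (m+1)) 0 h0
  obtain ⟨c, hc⟩ := lim_tendsto I Ψ ρ hρ (hΨ.mono hball)
    (fun i hi u hu h => vanish hF hΨ hE i (hv i hi) u (hball hu) h)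
  obtain ⟨hA, hAv, hAs⟩ := AA_spec hF hΨ hE Iᶜ
  set η : ℝ := 1 / ((m+1 : ℕ) : ℝ) / 2 with hη
  have hη0 : 0 < η := by linarith
  have hη1 : η < 1 / ((m+1 : ℕ) : ℝ) := by linarith
  have hp := path_limit hA I (fun i hi => hAv i (hv i hi)) hη0 hη1
  rw [final_fubini I F η hη0] at hp
  have hpath : Tendsto (fun ε : ℝ => (fun j => if j ∈ I then (ε : ℂ) else 0 : Fin (m+1) → ℂ))
      (𝓝[>] 0) (𝓝[{u | ∀ i ∈ I, u i ≠ 0}] 0) := by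
    refine tendsto_nhdsWithin_iff.2 ⟨?_, ?_⟩
    · have hcont : Continuous fun ε : ℝ => (fun j => if j ∈ I then (ε : ℂ) else 0 : Fin (m+1) → ℂ) := by
        refine continuous_pi fun j => ?_
        split_ifs
        · exact Complex.continuous_ofReal
        · exact continuous_const
      have := hcont.tendsto 0
      have e : (fun j => if j ∈ I then ((0:ℝ) : ℂ) else 0 : Fin (m+1) → ℂ) = 0 := by
        ext j; simp
      rw [e] at this
      exact this.mono_left nhdsWithin_le_nhds
    · filter_upwards [self_mem_nhdsWithin] with ε hε i hi
      have hε : (0:ℝ) < ε := hε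
      simp [hi, hε.ne']
  have h1 := hc.comp hpath
  have h2 := hp.congr' (f₂ := (fun u => (∏ i ∈ I, (u i)⁻¹) * Ψ u) ∘
      (fun ε : ℝ => (fun j => if j ∈ I then (ε : ℂ) else 0 : Fin (m+1) → ℂ))) (by
    filter_upwards [Ioo_mem_nhdsGT hm.1] with ε hε
    simp only [Function.comp]
    have hS : (fun j => if j ∈ I then (ε : ℂ) else (η : ℂ)) ∈ Strip (m+1) := by
      intro j
      dsimp only
      split_ifs
      · simpa using hε
      · rw [Complex.ofReal_re]; exact ⟨hη0, hη1⟩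
    rw [← hAs _ hS]
    congr 1
    · exact Finset.prod_congr rfl fun i hi => by simp [hi]
    · congr 1
      ext j
      rw [zz_apply]
      by_cases h : j ∈ I <;> simp [h])
  rw [tendsto_nhds_unique h2 h1]
  exact hc

end MellinAux

theorem mellin_limit_at_neg_integers
    (n : ℕ) (hn : 0 < n) (H : (Fin n → ℝ) → ℂ)
    (hsmooth : ContDiff ℝ (⊤ : ℕ∞) H)
    (hdecay : ∀ l : List (Fin n), SufficientDecayOn n (Quadrant n) (pderivList n l H))
    (k : Fin n → ℕ) (I : Finset (Fin n))
    (hvan : ∀ i ∈ I, ∀ y : Fin n → ℝ, y i = 0 →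
      pderivList n (multiIndexList n k) H y = 0)
    (Φ : (Fin n → ℂ) → ℂ)
    (hΦan : AnalyticOnNhd ℂ Φ {s : Fin n → ℂ | ∀ i, (s i).re < 1 / n})
    (hΦeq : ∀ s : Fin n → ℂ, (∀ i, 0 < (s i).re ∧ (s i).re < 1 / n) →
      Φ s = (∏ i, (Complex.Gamma (s i))⁻¹) *
          ∫ y in Quadrant n, H y * ∏ i, ((y i : ℂ) ^ (s i - 1))) :
    Filter.Tendsto
      (fun s : Fin n → ℂ => (∏ i ∈ I, (s i + (k i : ℂ))⁻¹) * Φ s)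
      (nhdsWithin (fun i => -(k i : ℂ))
        {s : Fin n → ℂ | ∀ i ∈ I, s i ≠ -(k i : ℂ)})
      (nhds (∫ t : {i // i ∈ I} → ℝ in {t | ∀ j, 0 ≤ t j},
        pderivList n (multiIndexList n k) H
            (fun i => if h : i ∈ I then t ⟨i, h⟩ else 0) *
          ∏ j : {i // i ∈ I}, ((t j : ℂ))⁻¹)) := by
  obtain ⟨m, rfl⟩ : ∃ m, n = m + 1 := ⟨n - 1, by omega⟩
  have hH : MellinAux.Nice (m+1) H := ⟨hsmooth, fun l => MellinAux.Dec.of_suff (hdecay l)⟩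
  have hE : ∀ s ∈ MellinAux.Strip (m+1), Φ s = MellinAux.Lam (m+1) H s := by
    intro s hs
    rw [hΦeq s hs, MellinAux.Lam, Quadrant, MellinAux.restrict_quadrant]
    rfl
  have hlist := MellinAux.shiftList hH hΦan hE (multiIndexList (m+1) k)
  simp only [MellinAux.count_multiIndexList] at hlist
  have main := MellinAux.main_aux (hH.pderivList (multiIndexList (m+1) k))
    (MellinAux.shift_analytic hΦan k) hlist I hvan
  have hmap : Filter.Tendsto (fun s : Fin (m+1) → ℂ => (fun i => s i + (k i : ℂ)))
      (nhdsWithin (fun i => -(k i : ℂ)) {s : Fin (m+1) → ℂ | ∀ i ∈ I, s i ≠ -(k i : ℂ)})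
      (nhdsWithin 0 {u | ∀ i ∈ I, u i ≠ 0}) := by
    refine tendsto_nhdsWithin_iff.2 ⟨?_, ?_⟩
    · have hc : Continuous fun s : Fin (m+1) → ℂ => (fun i => s i + (k i : ℂ)) := by fun_prop
      have := hc.tendsto (fun i => -(k i : ℂ))
      have e : (fun i => -(k i : ℂ) + (k i : ℂ)) = (0 : Fin (m+1) → ℂ) := by ext; simp
      rw [e] at this
      exact this.mono_left nhdsWithin_le_nhds
    · filter_upwards [self_mem_nhdsWithin] with s hs i hi h
      exact hs i hi (eq_neg_of_add_eq_zero_left h)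
  have := main.comp hmap
  refine this.congr fun s => ?_
  simp only [Function.comp, add_sub_cancel_right]
end
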